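/- Let K be an algebraically closed field of characteristic zero and let A = A(α,β,γ) be a down-up algebra with β ≠ 0 and α + β ≠ 1. If t² − αt − β = (t − μ)² for some μ ∈ K that is a primitive n-th root of unity (for some n ≥ 1), then 2 ≤ sr(A) ≤ 3. -/

import Mathlib

noncomputable section

/-- Defining relations of the down-up algebra `A(α,β,γ)`:
`D = ι 0`, `U = ι 1`, relations `DU² = αUDU + βU²D + γU` and `D²U = αDUD + βUD² + γD`. -/
inductive DownUpRel (K : Type) [Field K] (a b g : K) :
    FreeAlgebra K (Fin 2) → FreeAlgebra K (Fin 2) → Prop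
  | rel1 : DownUpRel K a b g
      (FreeAlgebra.ι K (0 : Fin 2) * FreeAlgebra.ι K (1 : Fin 2) * FreeAlgebra.ι K (1 : Fin 2))
      (a • (FreeAlgebra.ι K (1 : Fin 2) * FreeAlgebra.ι K (0 : Fin 2) * FreeAlgebra.ι K (1 : Fin 2)) +
       b • (FreeAlgebra.ι K (1 : Fin 2) * FreeAlgebra.ι K (1 : Fin 2) * FreeAlgebra.ι K (0 : Fin 2)) +
       g • FreeAlgebra.ι K (1 : Fin 2))
  | rel2 : DownUpRel K a b g
      (FreeAlgebra.ι K (0 : Fin 2) * FreeAlgebra.ι K (0 : Fin 2) * FreeAlgebra.ι K (1 : Fin 2))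
      (a • (FreeAlgebra.ι K (0 : Fin 2) * FreeAlgebra.ι K (1 : Fin 2) * FreeAlgebra.ι K (0 : Fin 2)) +
       b • (FreeAlgebra.ι K (1 : Fin 2) * FreeAlgebra.ι K (0 : Fin 2) * FreeAlgebra.ι K (0 : Fin 2)) +
       g • FreeAlgebra.ι K (0 : Fin 2))

/-- The down-up algebra `A(α,β,γ)`. -/
abbrev DownUp (K : Type) [Field K] (a b g : K) := RingQuot (DownUpRel K a b g)

/-- The generator `D` of `A(α,β,γ)`. -/
def DownUp.D (K : Type) [Field K] (a b g : K) : DownUp K a b g :=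
  RingQuot.mkAlgHom K (DownUpRel K a b g) (FreeAlgebra.ι K (0 : Fin 2))

/-- The generator `U` of `A(α,β,γ)`. -/
def DownUp.U (K : Type) [Field K] (a b g : K) : DownUp K a b g :=
  RingQuot.mkAlgHom K (DownUpRel K a b g) (FreeAlgebra.ι K (1 : Fin 2))

/-- A row `(u₁,…,u_s)` over `R` is unimodular if `u₁R + ⋯ + u_sR = R`. -/
def IsUnimodularRow {R : Type} [Ring R] {s : ℕ} (u : Fin s → R) : Prop :=
  Submodule.span Rᵐᵒᵖ (Set.range u) = ⊤

/-- A unimodular row `(u₁,…,u_{s+1})` is stable if there exist `r₁,…,r_s` such that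
`(u₁ + u_{s+1}r₁, …, u_s + u_{s+1}r_s)` is unimodular. -/
def IsStableRow {R : Type} [Ring R] {s : ℕ} (u : Fin (s + 1) → R) : Prop :=
  ∃ r : Fin s → R,
    IsUnimodularRow (fun i : Fin s => u i.castSucc + u (Fin.last s) * r i)

/-- The stable rank of `R`: the least `t` such that every unimodular row of
length `t + 1` over `R` is stable. -/
noncomputable def stableRank (R : Type) [Ring R] : ℕ :=
  sInf {t : ℕ | ∀ u : Fin (t + 1) → R, IsUnimodularRow u → IsStableRow u}

/-!
Let `w = D U - μ U D - γ / (1 - μ)`. The relations say that `w U = μ U w` and `D w = μ w D`, so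
`w ^ n` is central and `A` is studied through its fibres over the values `l` of `w ^ n`.

* For `l = 0` the nilpotent `w` can be killed, and `A ⧸ (w)` is finite over the image of a
  polynomial ring in two variables. Given a unimodular row `(a, b, c, d)`, modifying `a` and then
  `b` lowers that dimension from two to zero, and modifying `c` produces the unit ideal.
* For `l ≠ 0` the fibre has the basis `wᵏ Uⁱ Dʲ`, over the Kummer algebra `K[w]/(wⁿ - l)`. Its
  nonzero two-sided ideals contain powers of `U` and `D`, so their intersection, the heart, has
  finite codimension. A suitable modification of `b` generates a right ideal of the same growth as
  the whole ring. Then `c` can be modified to a unit modulo the heart, and a further change by an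
  element of `d · heart` makes the right ideal generated by `b` and `c` swallow the heart.
* A nonzero `a` generates a large right ideal in all but finitely many fibres, and in the fibre over
  the generic point `a` and a modified `b` generate `d`, so some `d g(w ^ n)` with `g ≠ 0` lies in
  `a A + b A`. Hence `c` only matters over the finitely many roots of `g`.

Modifications over finitely many fibres are combined by interpolation, since adding multiples of
`w ^ n - l` does not change the fibre over `l`. This gives the upper bound.

For the lower bound, `U ↦ T` extends to a homomorphism from `A` to the Laurent polynomials, where
`(2 T - 1, (T - 1)(T - 2))` is not stable, although it is already unimodular over `K[T]`.
-/

/-! ### Ambiskew presentations and normal ordering -/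

section Ambiskew

variable {L E R : Type*} [CommRing L] [CommRing E] [Algebra L E] [Ring R] [Algebra L R]

/-- The coefficients `cᵢ` in `D Uⁱ = μⁱ Uⁱ D + Uⁱ⁻¹ cᵢ`, for `D U = μ U D + w + ε`. -/
def commCoeff (w : E) (μ ε : L) : ℕ → E
  | 0 => 0
  | i + 1 => μ • commCoeff w μ ε i + μ ^ i • w + algebraMap L E ε

@[simp]
theorem commCoeff_zero (w : E) (μ ε : L) : commCoeff w μ ε 0 = 0 := rfl

theorem commCoeff_succ (w : E) (μ ε : L) (i : ℕ) :
    commCoeff w μ ε (i + 1) = μ • commCoeff w μ ε i + μ ^ i • w + algebraMap L E ε := rfl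

theorem commCoeff_succ_eq (w : E) (μ ε : L) (i : ℕ) :
    commCoeff w μ ε (i + 1) = ((i + 1 : ℕ) * μ ^ i : L) • w
      + algebraMap L E (ε * ∑ s ∈ Finset.range (i + 1), μ ^ s) := by
  induction i with
  | zero => simp [commCoeff]
  | succ i ih =>
    rw [commCoeff_succ, ih, Finset.sum_range_succ' _ (i + 1)]
    simp only [pow_succ', ← Finset.mul_sum, Algebra.smul_def, map_mul, map_add, map_pow,
      map_natCast, pow_zero, map_one]
    push_cast
    ring

theorem map_commCoeff (σ : E →ₐ[L] E) (w : E) (μ ε : L) (hσ : σ w = μ • w) (i : ℕ) :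
    σ (commCoeff w μ ε i) + μ ^ i • (w + algebraMap L E ε) = commCoeff w μ ε (i + 1) := by
  induction i with
  | zero => simp [commCoeff]
  | succ i ih =>
    rw [commCoeff_succ _ _ _ (i + 1)]
    conv_rhs => rw [← ih]
    rw [commCoeff_succ]
    simp only [map_add, map_smul, hσ, AlgHom.commutes]
    simp only [Algebra.smul_def, map_pow]
    ring

theorem pow_apply_eq_smul {σ : E →ₐ[L] E} {w : E} {μ : L} (h : σ w = μ • w) (i : ℕ) :
    (σ ^ i) w = μ ^ i • w := by
  induction i with
  | zero => simp
  | succ i ih => rw [pow_succ, AlgHom.mul_apply, h, map_smul, ih, smul_smul, pow_succ']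

/-- `R` is an ambiskew ring over the commutative algebra `E`, embedded through `ι`: the elements
`U`, `D` are skew with respect to `σ` and satisfy `D U = μ U D + w + ε`. -/
structure IsAmbiskew (σ : E →ₐ[L] E) (w : E) (μ ε : L) (ι : E →ₐ[L] R) (U D : R) : Prop where
  map_weight : σ w = μ • w
  base_mul_U : ∀ f, ι f * U = U * ι (σ f)
  D_mul_base : ∀ f, D * ι f = ι (σ f) * D
  D_mul_U : D * U = μ • (U * D) + ι w + algebraMap L R ε

/-- The normal ordering map, sending the coefficient family `F` to `∑ Uⁱ ι(F i j) Dʲ`. -/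
def normalOrder (ι : E →ₐ[L] R) (U D : R) : (ℕ × ℕ →₀ E) →ₗ[L] R :=
  Finsupp.lsum L fun p =>
    LinearMap.mulLeft L (U ^ p.1) ∘ₗ LinearMap.mulRight L (D ^ p.2) ∘ₗ ι.toLinearMap

@[simp]
theorem normalOrder_single (ι : E →ₐ[L] R) (U D : R) (i j : ℕ) (f : E) :
    normalOrder ι U D (Finsupp.single (i, j) f) = U ^ i * (ι f * D ^ j) := by
  simp [normalOrder]

/-- Left multiplication by `U`, written on normally ordered coefficients. -/
def leftMulU (L E : Type*) [CommRing L] [CommRing E] [Algebra L E] :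
    (ℕ × ℕ →₀ E) →ₗ[L] (ℕ × ℕ →₀ E) :=
  Finsupp.lsum L fun p => Finsupp.lsingle (p.1 + 1, p.2)

/-- Left multiplication by `D`, written on normally ordered coefficients. The truncated
subtraction at exponent `0` is harmless because `c₀ = 0`. -/
def leftMulD (σ : E →ₐ[L] E) (w : E) (μ ε : L) : (ℕ × ℕ →₀ E) →ₗ[L] (ℕ × ℕ →₀ E) :=
  Finsupp.lsum L fun p =>
    Finsupp.lsingle (p.1, p.2 + 1) ∘ₗ (μ ^ p.1 • σ.toLinearMap)
      + Finsupp.lsingle (p.1 - 1, p.2) ∘ₗ LinearMap.mulLeft L (commCoeff w μ ε p.1)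

/-- Left multiplication by an element of `E`, written on normally ordered coefficients. -/
def leftMulBase (σ : E →ₐ[L] E) (f : E) : (ℕ × ℕ →₀ E) →ₗ[L] (ℕ × ℕ →₀ E) :=
  Finsupp.lsum L fun p => Finsupp.lsingle p ∘ₗ LinearMap.mulLeft L ((σ ^ p.1) f)

@[simp]
theorem leftMulU_single (i j : ℕ) (g : E) :
    leftMulU L E (Finsupp.single (i, j) g) = Finsupp.single (i + 1, j) g := by
  simp [leftMulU]

@[simp]
theorem leftMulD_single (σ : E →ₐ[L] E) (w : E) (μ ε : L) (i j : ℕ) (g : E) :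
    leftMulD σ w μ ε (Finsupp.single (i, j) g) = Finsupp.single (i, j + 1) (μ ^ i • σ g)
      + Finsupp.single (i - 1, j) (commCoeff w μ ε i * g) := by
  simp [leftMulD]

@[simp]
theorem leftMulBase_single (σ : E →ₐ[L] E) (f : E) (i j : ℕ) (g : E) :
    leftMulBase (L := L) σ f (Finsupp.single (i, j) g)
      = Finsupp.single (i, j) ((σ ^ i) f * g) := by
  simp [leftMulBase]

theorem normalOrder_leftMulU (ι : E →ₐ[L] R) (U D : R) (F : ℕ × ℕ →₀ E) :
    normalOrder ι U D (leftMulU L E F) = U * normalOrder ι U D F := by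
  suffices normalOrder ι U D ∘ₗ leftMulU L E = LinearMap.mulLeft L U ∘ₗ normalOrder ι U D from
    LinearMap.congr_fun this F
  refine Finsupp.lhom_ext fun ⟨i, j⟩ g => ?_
  simp [pow_succ', mul_assoc]

/-- `leftMulBase` as an algebra homomorphism. -/
def leftMulBaseHom (σ : E →ₐ[L] E) : E →ₐ[L] Module.End L (ℕ × ℕ →₀ E) where
  toFun := leftMulBase σ
  map_one' := by
    refine Finsupp.lhom_ext fun ⟨i, j⟩ x => ?_; simp [-Finsupp.single_mul]
  map_mul' f g := by
    refine Finsupp.lhom_ext fun ⟨i, j⟩ x => ?_; simp [mul_assoc, -Finsupp.single_mul]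
  map_zero' := by
    refine Finsupp.lhom_ext fun ⟨i, j⟩ x => ?_; simp [-Finsupp.single_mul]
  map_add' f g := by
    refine Finsupp.lhom_ext fun ⟨i, j⟩ x => ?_; simp [add_mul, -Finsupp.single_mul]
  commutes' l := by
    refine Finsupp.lhom_ext fun ⟨i, j⟩ x => ?_; simp [Algebra.smul_def, -Finsupp.single_mul]

@[simp]
theorem leftMulBaseHom_apply (σ : E →ₐ[L] E) (f : E) :
    leftMulBaseHom σ f = leftMulBase (L := L) σ f := rfl

theorem isAmbiskew_leftMul (σ : E →ₐ[L] E) (w : E) (μ ε : L) (hw : σ w = μ • w) :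
    IsAmbiskew (R := Module.End L (ℕ × ℕ →₀ E)) σ w μ ε (leftMulBaseHom σ) (leftMulU L E)
      (leftMulD σ w μ ε) where
  map_weight := hw
  base_mul_U f := by
    refine Finsupp.lhom_ext fun ⟨i, j⟩ g => ?_
    simp [pow_succ, -Finsupp.single_mul]
  D_mul_base f := by
    refine Finsupp.lhom_ext fun ⟨i, j⟩ g => ?_
    rcases i with _ | i
    · simp [-Finsupp.single_mul]
    · simp only [leftMulBaseHom_apply, Module.End.mul_apply, leftMulBase_single, leftMulD_single,
        map_add, map_mul]
      congr 1
      · rw [← AlgHom.mul_apply, ← pow_succ', ← AlgHom.mul_apply, ← pow_succ, mul_smul_comm]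
      · rw [← AlgHom.mul_apply, Nat.add_sub_cancel, ← pow_succ, mul_left_comm]
  D_mul_U := by
    refine Finsupp.lhom_ext fun ⟨i, j⟩ g => ?_
    have shift : Finsupp.single (i - 1 + 1, j) (μ • (commCoeff w μ ε i * g))
        = Finsupp.single (i, j) (μ • (commCoeff w μ ε i * g)) := by
      rcases i with _ | i <;> simp
    simp only [leftMulBaseHom_apply, Module.End.mul_apply, leftMulBase_single, leftMulD_single,
      map_add, leftMulU_single, LinearMap.add_apply, LinearMap.smul_apply, Nat.add_sub_cancel,
      smul_add, Finsupp.smul_single, smul_smul, ← pow_succ', Module.algebraMap_end_apply,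
      pow_apply_eq_smul hw, shift, commCoeff_succ, add_assoc, ← Finsupp.single_add]
    congr 2
    simp only [Algebra.smul_def]
    ring

namespace IsAmbiskew

variable {σ : E →ₐ[L] E} {w : E} {μ ε : L} {ι : E →ₐ[L] R} {U D : R}
  (h : IsAmbiskew σ w μ ε ι U D)
include h

theorem base_mul_U_pow (f : E) (a : ℕ) : ι f * U ^ a = U ^ a * ι ((σ ^ a) f) := by
  induction a generalizing f with
  | zero => simp
  | succ a ih =>
    rw [pow_succ', ← mul_assoc, h.base_mul_U, mul_assoc, ih, ← mul_assoc, pow_succ σ a,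
      AlgHom.mul_apply]

theorem D_mul_U_pow (a : ℕ) :
    D * U ^ a = μ ^ a • (U ^ a * D) + U ^ (a - 1) * ι (commCoeff w μ ε a) := by
  induction a with
  | zero => simp
  | succ a ih =>
    have move : U ^ (a - 1) * (U * ι (σ (commCoeff w μ ε a)))
        = U ^ a * ι (σ (commCoeff w μ ε a)) := by
      rcases a with _ | a
      · simp
      · rw [Nat.add_sub_cancel, ← mul_assoc, ← pow_succ]
    rw [pow_succ, ← mul_assoc, ih, add_mul, mul_assoc, h.base_mul_U,
      ← map_commCoeff σ w μ ε h.map_weight a, move, Nat.add_sub_cancel, smul_mul_assoc,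
      mul_assoc, h.D_mul_U]
    simp only [mul_add, map_add, map_smul, AlgHom.commutes, mul_smul_comm, smul_add, smul_smul,
      pow_succ, mul_assoc]
    abel

theorem normalOrder_leftMulD (F : ℕ × ℕ →₀ E) :
    normalOrder ι U D (leftMulD σ w μ ε F) = D * normalOrder ι U D F := by
  suffices normalOrder ι U D ∘ₗ leftMulD σ w μ ε
      = LinearMap.mulLeft L D ∘ₗ normalOrder ι U D from LinearMap.congr_fun this F
  refine Finsupp.lhom_ext fun ⟨i, j⟩ g => ?_
  simp only [LinearMap.comp_apply, leftMulD_single, map_add, normalOrder_single,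
    LinearMap.mulLeft_apply]
  rw [← mul_assoc D, h.D_mul_U_pow, add_mul, map_mul, smul_mul_assoc, mul_assoc (U ^ i) D,
    ← mul_assoc D, h.D_mul_base]
  simp only [map_smul, smul_mul_assoc, mul_smul_comm, pow_succ', mul_assoc]

theorem normalOrder_surjective (hgen : Algebra.adjoin L {U, D} = ⊤) :
    Function.Surjective (normalOrder ι U D) := by
  intro r
  have hr : r ∈ Algebra.adjoin L {U, D} := hgen ▸ Algebra.mem_top
  suffices H : ∀ y ∈ LinearMap.range (normalOrder ι U D),
      r * y ∈ LinearMap.range (normalOrder ι U D) by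
    simpa using H 1 ⟨Finsupp.single (0, 0) 1, by simp⟩
  induction hr using Algebra.adjoin_induction with
  | mem x hx =>
    rintro _ ⟨F, rfl⟩
    rcases hx with rfl | rfl
    · exact ⟨_, normalOrder_leftMulU _ _ _ F⟩
    · exact ⟨_, h.normalOrder_leftMulD F⟩
  | algebraMap l =>
    rintro _ ⟨F, rfl⟩
    exact ⟨l • F, by rw [map_smul, Algebra.smul_def]⟩
  | add x y _ _ hx hy =>
    intro z hz; rw [add_mul]; exact add_mem (hx z hz) (hy z hz)
  | mul x y _ _ hx hy =>
    intro z hz; rw [mul_assoc]; exact hx _ (hy z hz)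

theorem base_mem_adjoin (hw : Algebra.adjoin L {w} = ⊤) (f : E) :
    ι f ∈ Algebra.adjoin L {U, D} := by
  have hU : U ∈ Algebra.adjoin L {U, D} := Algebra.subset_adjoin (by simp)
  have hD : D ∈ Algebra.adjoin L {U, D} := Algebra.subset_adjoin (by simp)
  suffices Algebra.adjoin L {w} ≤ (Algebra.adjoin L {U, D}).comap ι from
    this (hw ▸ Algebra.mem_top)
  refine Algebra.adjoin_le (Set.singleton_subset_iff.2 ?_)
  have weight_eq : ι w = D * U - μ • (U * D) - algebraMap L R ε := by rw [h.D_mul_U]; abel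
  simp only [Subalgebra.coe_comap, Set.mem_preimage, SetLike.mem_coe, weight_eq]
  exact sub_mem (sub_mem (mul_mem hD hU) (Subalgebra.smul_mem _ (mul_mem hU hD) _))
    (Subalgebra.algebraMap_mem _ _)

end IsAmbiskew

/-- An ambiskew ring generated by `U` and `D` in which the monomials `Uⁱ Dʲ` are independent over
`E`, so that normal ordering is a bijection. -/
structure IsPBW (σ : E →ₐ[L] E) (w : E) (μ ε : L) (ι : E →ₐ[L] R) (U D : R) : Prop
    extends IsAmbiskew σ w μ ε ι U D where
  injective : Function.Injective (normalOrder ι U D)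
  surjective : Function.Surjective (normalOrder ι U D)
  adjoin_eq_top : Algebra.adjoin L {U, D} = ⊤

theorem normalOrder_leftMul_apply_one (σ : E →ₐ[L] E) (w : E) (μ ε : L) (F : ℕ × ℕ →₀ E) :
    normalOrder (leftMulBaseHom (L := L) σ) (leftMulU L E) (leftMulD σ w μ ε) F
      (Finsupp.single (0, 0) 1) = F := by
  have hD : ∀ j, (leftMulD σ w μ ε ^ j) (Finsupp.single (0, 0) (1 : E))
      = Finsupp.single (0, j) 1 := by
    intro j
    induction j with
    | zero => simp
    | succ j ih => rw [pow_succ', Module.End.mul_apply, ih]; simp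
  have hU : ∀ i j f, (leftMulU L E ^ i) (Finsupp.single (0, j) f) = Finsupp.single (i, j) f := by
    intro i j f
    induction i with
    | zero => simp
    | succ j ih => rw [pow_succ', Module.End.mul_apply, ih]; simp
  suffices LinearMap.applyₗ (Finsupp.single (0, 0) (1 : E)) ∘ₗ
      normalOrder (leftMulBaseHom (L := L) σ) (leftMulU L E) (leftMulD σ w μ ε)
        = LinearMap.id from LinearMap.congr_fun this F
  refine Finsupp.lhom_ext fun ⟨i, j⟩ g => ?_
  simp [hD, hU]

end Ambiskew

section Existence

universe v

theorem IsAmbiskew.exists_isPBW {L E : Type*} {R : Type v} [CommRing L] [CommRing E]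
    [Algebra L E] [Ring R] [Algebra L R] {σ : E →ₐ[L] E} {w : E}
    {μ ε : L} {ι : E →ₐ[L] R} {U D : R} (h : IsAmbiskew σ w μ ε ι U D)
    (hinj : Function.Injective (normalOrder ι U D)) (hw : Algebra.adjoin L {w} = ⊤) :
    ∃ (S : Type v) (_ : Ring S) (_ : Algebra L S) (ι' : E →ₐ[L] S) (U' D' : S),
      IsPBW σ w μ ε ι' U' D' := by
  let S := Algebra.adjoin L {U, D}
  have hU : U ∈ S := Algebra.subset_adjoin (by simp)
  have hD : D ∈ S := Algebra.subset_adjoin (by simp)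
  let ι' : E →ₐ[L] S := ι.codRestrict S (h.base_mem_adjoin hw)
  have hrel : IsAmbiskew σ w μ ε ι' ⟨U, hU⟩ ⟨D, hD⟩ :=
    ⟨h.map_weight, fun f => Subtype.ext (h.base_mul_U f), fun f => Subtype.ext (h.D_mul_base f),
      Subtype.ext h.D_mul_U⟩
  have hgen : Algebra.adjoin L {(⟨U, hU⟩ : S), ⟨D, hD⟩} = ⊤ := by
    convert Algebra.adjoin_adjoin_coe_preimage (R := L) (s := {U, D}) using 2
    ext ⟨x, hx⟩
    simp [Subtype.ext_iff]
  refine ⟨S, inferInstance, inferInstance, ι', ⟨U, hU⟩, ⟨D, hD⟩, hrel, ?_,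
    hrel.normalOrder_surjective hgen, hgen⟩
  have hval : S.val.toLinearMap ∘ₗ normalOrder ι' ⟨U, hU⟩ ⟨D, hD⟩ = normalOrder ι U D := by
    refine Finsupp.lhom_ext fun ⟨i, j⟩ g => ?_
    simp [ι']
  refine Function.Injective.of_comp (f := S.val) ?_
  rwa [← hval] at hinj

theorem exists_isPBW {L : Type*} {E : Type v} [CommRing L] [CommRing E] [Algebra L E]
    (σ : E →ₐ[L] E) (w : E) (μ ε : L) (hσ : σ w = μ • w)
    (hw : Algebra.adjoin L {w} = ⊤) :
    ∃ (R : Type v) (_ : Ring R) (_ : Algebra L R) (ι : E →ₐ[L] R) (U D : R),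
      IsPBW σ w μ ε ι U D := by
  have hinj : Function.Injective
      (normalOrder (leftMulBaseHom (L := L) σ) (leftMulU L E) (leftMulD σ w μ ε)) := by
    intro F G hFG
    rw [← normalOrder_leftMul_apply_one σ w μ ε F, hFG, normalOrder_leftMul_apply_one]
  exact (isAmbiskew_leftMul σ w μ ε hσ).exists_isPBW hinj hw

end Existence

/-! ### The degree filtration and leading terms -/

/-- The pairs of exponents of total degree less than `d`. -/
def triangle (d : ℕ) : Finset (ℕ × ℕ) :=
  (Finset.range d).biUnion Finset.HasAntidiagonal.antidiagonal

theorem mem_triangle {d : ℕ} {p : ℕ × ℕ} : p ∈ triangle d ↔ p.1 + p.2 < d := by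
  simp [triangle]

theorem mem_coe_triangle {d : ℕ} {p : ℕ × ℕ} : p ∈ (triangle d : Set (ℕ × ℕ)) ↔ p.1 + p.2 < d :=
  mem_triangle

theorem choose_two_add_two (m : ℕ) : (m + 2).choose 2 = (m + 1).choose 2 + (m + 1) := by
  rw [Nat.choose_succ_succ' (m + 1) 1, Nat.choose_one_right, add_comm]

theorem card_triangle (d : ℕ) : (triangle d).card = (d + 1).choose 2 := by
  rw [triangle, Finset.card_biUnion]
  · induction d with
    | zero => simp
    | succ d ih =>
      rw [Finset.sum_range_succ, ih, Finset.Nat.card_antidiagonal, choose_two_add_two]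
  · intro a _ b _ hab
    rw [Function.onFun, Finset.disjoint_left]
    intro p hp hq
    rw [Finset.HasAntidiagonal.mem_antidiagonal] at hp hq
    omega

theorem two_mul_choose_two (m : ℕ) : 2 * (m + 2).choose 2 = (m + 1) * (m + 2) := by
  induction m with
  | zero => simp
  | succ m ih => rw [choose_two_add_two (m + 1), mul_add, ih]; ring

theorem choose_two_add_le (m d : ℕ) :
    (m + d + 2).choose 2 ≤ (m + 2).choose 2 + d * (m + d + 1) := by
  induction d with
  | zero => simp
  | succ d ih => rw [← add_assoc, choose_two_add_two (m + d + 1)]; nlinarith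

theorem choose_two_le_of_lt {m e : ℕ} (h : m < e) : (m + 2).choose 2 ≤ e * (m + 1) := by
  have := two_mul_choose_two m
  nlinarith

/-- The exponents below `(i, j)` in the degree-lexicographic order. -/
def degLexLT (i j : ℕ) : Set (ℕ × ℕ) := {p | p.1 + p.2 < i + j ∨ (p.1 + p.2 = i + j ∧ p.1 < i)}

theorem triangle_subset_degLexLT (i j : ℕ) : (triangle (i + j) : Set (ℕ × ℕ)) ⊆ degLexLT i j :=
  fun _ hp => Or.inl (mem_triangle.1 hp)

section Filtration

variable {L E R : Type*} [CommRing L] [CommRing E] [Algebra L E] [Ring R] [Algebra L R]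
variable {s t u : Set (ℕ × ℕ)}

/-- The span of the normally ordered monomials with exponents in `s`. -/
def monomialSpan (ι : E →ₐ[L] R) (U D : R) (s : Set (ℕ × ℕ)) : Submodule L R :=
  (Finsupp.supported E L s).map (normalOrder ι U D)

/-- The elements of degree at most `m`. -/
abbrev degreeLE (ι : E →ₐ[L] R) (U D : R) (m : ℕ) : Submodule L R :=
  monomialSpan ι U D (triangle (m + 1))

theorem monomialSpan_mono (ι : E →ₐ[L] R) (U D : R) (h : s ⊆ t) :
    monomialSpan ι U D s ≤ monomialSpan ι U D t :=
  Submodule.map_mono (Finsupp.supported_mono h)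

theorem triangle_mono {d e : ℕ} (h : d ≤ e) : (triangle d : Set (ℕ × ℕ)) ⊆ triangle e :=
  fun _ hp => mem_triangle.2 ((mem_triangle.1 hp).trans_le h)

theorem degreeLE_mono (ι : E →ₐ[L] R) (U D : R) {m k : ℕ} (h : m ≤ k) :
    degreeLE ι U D m ≤ degreeLE ι U D k :=
  monomialSpan_mono ι U D (triangle_mono (by omega))

theorem monomial_mem_monomialSpan (ι : E →ₐ[L] R) (U D : R) {i j : ℕ} (h : (i, j) ∈ s) (f : E) :
    U ^ i * (ι f * D ^ j) ∈ monomialSpan ι U D s :=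
  ⟨Finsupp.single (i, j) f, Finsupp.single_mem_supported _ _ h, by simp⟩

theorem monomial_mem_triangle (ι : E →ₐ[L] R) (U D : R) {i j d : ℕ} (h : i + j < d) (f : E) :
    U ^ i * (ι f * D ^ j) ∈ monomialSpan ι U D (triangle d) :=
  monomial_mem_monomialSpan ι U D (mem_coe_triangle.2 h) f

theorem monomialSpan_le {ι : E →ₐ[L] R} {U D : R} {N : Submodule L R}
    (h : ∀ i j f, (i, j) ∈ s → U ^ i * (ι f * D ^ j) ∈ N) : monomialSpan ι U D s ≤ N := by
  rintro _ ⟨F, hF, rfl⟩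
  rw [← Finsupp.sum_single F, Finsupp.sum, map_sum]
  refine sum_mem fun ⟨i, j⟩ hp => ?_
  rw [normalOrder_single]
  exact h _ _ _ (hF hp)

theorem exists_mem_degreeLE {ι : E →ₐ[L] R} {U D : R}
    (hs : Function.Surjective (normalOrder ι U D)) (r : R) : ∃ m, r ∈ degreeLE ι U D m := by
  obtain ⟨F, rfl⟩ := hs r
  refine ⟨F.support.sup fun p => p.1 + p.2, F, ?_, rfl⟩
  rw [SetLike.mem_coe, Finsupp.mem_supported]
  intro p hp
  exact mem_coe_triangle.2 (Nat.lt_succ_of_le (Finset.le_sup (f := fun p : ℕ × ℕ => p.1 + p.2) hp))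

theorem U_mul_mem_triangle {ι : E →ₐ[L] R} {U D : R} {d : ℕ} {x : R}
    (hx : x ∈ monomialSpan ι U D (triangle d)) :
    U * x ∈ monomialSpan ι U D (triangle (d + 1)) := by
  suffices monomialSpan ι U D (triangle d)
      ≤ (monomialSpan ι U D (triangle (d + 1))).comap (LinearMap.mulLeft L U) from this hx
  refine monomialSpan_le fun i j f hij => ?_
  simp only [mem_coe_triangle, Submodule.mem_comap, LinearMap.mulLeft_apply] at hij ⊢
  rw [← mul_assoc, ← pow_succ']
  exact monomial_mem_triangle _ _ _ (by omega) _

theorem U_pow_mul_mem_triangle {ι : E →ₐ[L] R} {U D : R} {d : ℕ} {x : R} (k : ℕ)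
    (hx : x ∈ monomialSpan ι U D (triangle d)) :
    U ^ k * x ∈ monomialSpan ι U D (triangle (d + k)) := by
  induction k with
  | zero => simpa using hx
  | succ k ih =>
    rw [pow_succ', mul_assoc]
    exact U_mul_mem_triangle ih

variable {σ : E →ₐ[L] E} {w : E} {μ ε : L} {ι : E →ₐ[L] R} {U D : R}

namespace IsAmbiskew

variable (h : IsAmbiskew σ w μ ε ι U D)
include h

theorem base_mul_mem_monomialSpan (f : E) {x : R} (hx : x ∈ monomialSpan ι U D s) :
    ι f * x ∈ monomialSpan ι U D s := by
  suffices monomialSpan ι U D s ≤ (monomialSpan ι U D s).comap (LinearMap.mulLeft L (ι f)) from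
    this hx
  refine monomialSpan_le fun i j g hij => ?_
  simp only [Submodule.mem_comap, LinearMap.mulLeft_apply]
  rw [← mul_assoc, h.base_mul_U_pow, mul_assoc, ← mul_assoc (ι _), ← map_mul]
  exact monomial_mem_monomialSpan _ _ _ hij _

theorem D_mul_monomial (a b : ℕ) (g : E) : D * (U ^ a * (ι g * D ^ b)) =
    U ^ a * (ι (μ ^ a • σ g) * D ^ (b + 1))
      + U ^ (a - 1) * (ι (commCoeff w μ ε a * g) * D ^ b) := by
  simpa only [leftMulD_single, map_add, normalOrder_single] using
    (h.normalOrder_leftMulD (Finsupp.single (a, b) g)).symm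

theorem D_mul_monomial_sub_mem (a b : ℕ) (g : E) :
    D * (U ^ a * (ι g * D ^ b)) - U ^ a * (ι (μ ^ a • σ g) * D ^ (b + 1))
      ∈ monomialSpan ι U D (triangle (a + b + 1)) := by
  rw [h.D_mul_monomial, add_sub_cancel_left]
  exact monomial_mem_triangle _ _ _ (by omega) _

theorem D_mul_mem_triangle {d : ℕ} {x : R} (hx : x ∈ monomialSpan ι U D (triangle d)) :
    D * x ∈ monomialSpan ι U D (triangle (d + 1)) := by
  suffices monomialSpan ι U D (triangle d)
      ≤ (monomialSpan ι U D (triangle (d + 1))).comap (LinearMap.mulLeft L D) from this hx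
  refine monomialSpan_le fun i j f hij => ?_
  simp only [mem_coe_triangle, Submodule.mem_comap, LinearMap.mulLeft_apply] at hij ⊢
  rw [h.D_mul_monomial]
  exact add_mem (monomial_mem_triangle _ _ _ (by omega) _)
    (monomial_mem_triangle _ _ _ (by omega) _)

theorem D_pow_mul_monomial_sub_mem (k a b : ℕ) (g : E) :
    D ^ k * (U ^ a * (ι g * D ^ b)) - U ^ a * (ι (μ ^ (k * a) • (σ ^ k) g) * D ^ (k + b))
      ∈ monomialSpan ι U D (triangle (k + a + b)) := by
  induction k with
  | zero => simp
  | succ k ih =>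
    have step := monomialSpan_mono ι U D (triangle_mono (show _ ≤ k + a + b + 1 by omega))
      (h.D_mul_monomial_sub_mem a (k + b) (μ ^ (k * a) • (σ ^ k) g))
    convert add_mem (h.D_mul_mem_triangle ih) step using 1
    · congr 3; ring
    · rw [mul_sub, sub_add_sub_cancel, pow_succ', mul_assoc]
      congr 4
      · rw [map_smul, smul_smul, pow_succ' σ, AlgHom.mul_apply, ← pow_add]; congr 3; ring
      · ring

theorem monomial_mul_monomial_sub_mem (i j a b : ℕ) (f g : E) :
    U ^ i * (ι f * D ^ j) * (U ^ a * (ι g * D ^ b)) -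
      U ^ (i + a) * (ι (μ ^ (j * a) • ((σ ^ a) f * (σ ^ j) g)) * D ^ (j + b))
      ∈ monomialSpan ι U D (triangle ((i + a) + (j + b))) := by
  convert U_pow_mul_mem_triangle i
    (h.base_mul_mem_monomialSpan f (h.D_pow_mul_monomial_sub_mem j a b g)) using 1
  · congr 3; ring
  · rw [mul_sub, mul_sub]
    congr 1
    · simp only [mul_assoc]
    · rw [← mul_assoc (ι f), h.base_mul_U_pow, pow_add, mul_assoc, mul_assoc,
        ← mul_assoc (ι _) (ι _), ← map_mul, mul_smul_comm]

theorem mul_mem_monomialSpan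
    (hadd : ∀ p ∈ s, ∀ q ∈ t, (p.1 + q.1, p.2 + q.2) ∈ u)
    (hlower : ∀ p ∈ s, ∀ q ∈ t, (triangle ((p.1 + q.1) + (p.2 + q.2)) : Set (ℕ × ℕ)) ⊆ u)
    {x y : R} (hx : x ∈ monomialSpan ι U D s) (hy : y ∈ monomialSpan ι U D t) :
    x * y ∈ monomialSpan ι U D u := by
  suffices monomialSpan ι U D s ≤ (monomialSpan ι U D u).comap (LinearMap.mulRight L y) from
    this hx
  refine monomialSpan_le fun i j f hij => ?_
  suffices monomialSpan ι U D t
      ≤ (monomialSpan ι U D u).comap (LinearMap.mulLeft L (U ^ i * (ι f * D ^ j))) from this hy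
  refine monomialSpan_le fun a b g hab => ?_
  have := add_mem (monomialSpan_mono ι U D (hlower _ hij _ hab)
    (h.monomial_mul_monomial_sub_mem i j a b f g)) (monomial_mem_monomialSpan ι U D
      (hadd _ hij _ hab) (μ ^ (j * a) • ((σ ^ a) f * (σ ^ j) g)))
  rwa [sub_add_cancel] at this

theorem mul_mem_degreeLE {m k : ℕ} {x y : R} (hx : x ∈ degreeLE ι U D m)
    (hy : y ∈ degreeLE ι U D k) : x * y ∈ degreeLE ι U D (m + k) := by
  refine h.mul_mem_monomialSpan ?_ ?_ hx hy
  · intro p hp q hq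
    simp only [mem_coe_triangle] at *; omega
  · intro p hp q hq
    simp only [mem_coe_triangle] at hp hq
    exact triangle_mono (by omega)

theorem mul_mem_degLexLT {i j a b : ℕ} (hadd : ∀ p ∈ s, ∀ q ∈ t,
      (p.1 + q.1, p.2 + q.2) ∈ degLexLT (i + a) (j + b)) {x y : R}
    (hx : x ∈ monomialSpan ι U D s) (hy : y ∈ monomialSpan ι U D t) :
    x * y ∈ monomialSpan ι U D (degLexLT (i + a) (j + b)) := by
  refine h.mul_mem_monomialSpan hadd (fun p hp q hq r hr => ?_) hx hy
  have := hadd p hp q hq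
  simp only [degLexLT, mem_coe_triangle, Set.mem_ofPred_eq] at *
  omega

end IsAmbiskew

/-- The leading term of `q` in the degree-lexicographic order is `Uⁱ f Dʲ`; the coefficient `f` is
allowed to vanish. -/
def HasLeadingTerm (ι : E →ₐ[L] R) (U D : R) (q : R) (i j : ℕ) (f : E) : Prop :=
  q - U ^ i * (ι f * D ^ j) ∈ monomialSpan ι U D (degLexLT i j)

theorem HasLeadingTerm.mul (h : IsAmbiskew σ w μ ε ι U D) {q r : R} {i j a b : ℕ} {f g : E}
    (hq : HasLeadingTerm ι U D q i j f) (hr : HasLeadingTerm ι U D r a b g) :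
    HasLeadingTerm ι U D (q * r) (i + a) (j + b) (μ ^ (j * a) • ((σ ^ a) f * (σ ^ j) g)) := by
  set A := U ^ i * (ι f * D ^ j)
  set B := U ^ a * (ι g * D ^ b)
  have hA : A ∈ monomialSpan ι U D {(i, j)} :=
    monomial_mem_monomialSpan _ _ _ (Set.mem_singleton _) _
  have hB : B ∈ monomialSpan ι U D {(a, b)} :=
    monomial_mem_monomialSpan _ _ _ (Set.mem_singleton _) _
  have expand : q * r - U ^ (i + a) * (ι (μ ^ (j * a) • ((σ ^ a) f * (σ ^ j) g)) * D ^ (j + b))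
      = (A * B - U ^ (i + a) * (ι (μ ^ (j * a) • ((σ ^ a) f * (σ ^ j) g)) * D ^ (j + b)))
        + A * (r - B) + (q - A) * B + (q - A) * (r - B) := by noncomm_ring
  rw [HasLeadingTerm, expand]
  refine add_mem (add_mem (add_mem ?_ ?_) ?_) ?_
  · exact monomialSpan_mono _ _ _ (triangle_subset_degLexLT _ _)
      (h.monomial_mul_monomial_sub_mem i j a b f g)
  · refine h.mul_mem_degLexLT ?_ hA hr
    rintro p rfl q hq
    simp only [degLexLT, Set.mem_ofPred_eq] at *; omega
  · refine h.mul_mem_degLexLT ?_ hq hB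
    rintro p hp q rfl
    simp only [degLexLT, Set.mem_ofPred_eq] at *; omega
  · refine h.mul_mem_degLexLT ?_ hq hr
    rintro p hp q hq
    simp only [degLexLT, Set.mem_ofPred_eq] at *; omega

theorem HasLeadingTerm.ne_zero (hi : Function.Injective (normalOrder ι U D)) {q : R} {i j : ℕ}
    {f : E} (hq : HasLeadingTerm ι U D q i j f) (hf : f ≠ 0) : q ≠ 0 := by
  rintro rfl
  rw [HasLeadingTerm, zero_sub, Submodule.neg_mem_iff, ← normalOrder_single] at hq
  obtain ⟨F, hF, heq⟩ := hq
  obtain rfl := hi heq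
  have : (i, j) ∈ degLexLT i j := hF (by simp [hf])
  simp [degLexLT] at this

theorem exists_hasLeadingTerm (ι : E →ₐ[L] R) (U D : R) {F : ℕ × ℕ →₀ E} (hF : F ≠ 0) :
    ∃ i j, F (i, j) ≠ 0 ∧ HasLeadingTerm ι U D (normalOrder ι U D F) i j (F (i, j)) := by
  obtain ⟨⟨i, j⟩, hij, hmax⟩ := Finset.exists_max_image F.support
    (fun p => toLex (p.1 + p.2, p.1)) (Finsupp.support_nonempty_iff.2 hF)
  refine ⟨i, j, Finsupp.mem_support_iff.1 hij, ?_⟩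
  rw [HasLeadingTerm, ← normalOrder_single, ← map_sub]
  refine ⟨_, (Finsupp.mem_supported _ _).2 fun p hp => ?_, rfl⟩
  have hne : p ≠ (i, j) := by
    rintro rfl
    simp at hp
  have hpF : p ∈ F.support := by
    rw [Finsupp.mem_support_iff]
    intro h0
    simp [Finsupp.single_eq_of_ne hne, h0] at hp
  have hle := hmax p hpF
  rw [Prod.Lex.toLex_le_toLex] at hle
  rw [Ne, Prod.ext_iff] at hne
  simp only [degLexLT, Set.mem_ofPred_eq] at hne hle ⊢
  omega

end Filtration

/-! ### Growth of subspaces -/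

/-- `E = L[w]/(wⁿ - ζ)` with `ζ ≠ 0`, and `σ` is its automorphism `w ↦ μ w` for a primitive `n`-th
root of unity `μ`. -/
structure IsKummer {L E : Type*} [Field L] [CommRing E] [Algebra L E] (σ : E →ₐ[L] E) (w : E)
    (μ : L) (n : ℕ) (ζ : L) : Prop where
  pos : 0 < n
  isPrimitiveRoot : IsPrimitiveRoot μ n
  map_weight : σ w = μ • w
  weight_pow : w ^ n = algebraMap L E ζ
  ne_zero : ζ ≠ 0
  adjoin_eq_top : Algebra.adjoin L {w} = ⊤
  finrank_eq : Module.finrank L E = n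

section Growth

variable {L E R : Type*} [Field L] [CommRing E] [Algebra L E] [Ring R] [Algebra L R]
variable {σ : E →ₐ[L] E} {w : E} {μ ε : L} {ι : E →ₐ[L] R} {U D : R} {n : ℕ} {ζ : L}

namespace IsKummer

variable (he : IsKummer σ w μ n ζ)
include he

theorem finiteDimensional : FiniteDimensional L E :=
  Module.finite_of_finrank_pos (he.finrank_eq.symm ▸ he.pos)

theorem nontrivial : Nontrivial E :=
  Module.nontrivial_of_finrank_pos (he.finrank_eq.symm ▸ he.pos)

theorem hom_ext {A : Type*} [Semiring A] [Algebra L A] {f g : E →ₐ[L] A} (h : f w = g w) :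
    f = g :=
  AlgHom.ext_of_adjoin_eq_top he.adjoin_eq_top (by simpa using h)

theorem aut_pow_eq_one : σ ^ n = 1 := by
  apply he.hom_ext
  rw [pow_apply_eq_smul he.map_weight, he.isPrimitiveRoot.pow_eq_one, one_smul, AlgHom.one_apply]

theorem isUnit_aut : IsUnit σ :=
  IsUnit.of_pow_eq_one he.aut_pow_eq_one he.pos.ne'

theorem aut_pow_injective (k : ℕ) : Function.Injective (σ ^ k) := by
  obtain ⟨τ, hτ⟩ := (he.isUnit_aut.pow k).exists_left_inv
  exact Function.LeftInverse.injective (g := τ) fun x => DFunLike.congr_fun hτ x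

theorem aut_pow_ne_zero (k : ℕ) {f : E} (hf : f ≠ 0) : (σ ^ k) f ≠ 0 :=
  (map_ne_zero_iff _ (he.aut_pow_injective k)).2 hf

theorem isUnit_weight : IsUnit w :=
  (isUnit_pow_iff he.pos.ne').1 (he.weight_pow ▸ (IsUnit.mk0 _ he.ne_zero).map _)

theorem root_ne_zero : μ ≠ 0 := he.isPrimitiveRoot.ne_zero he.pos.ne'

end IsKummer

/-- The elements of degree at most `m` whose normally ordered coefficients are scalars. -/
abbrev scalarDegreeLE (L : Type*) [Field L] {R : Type*} [Ring R] [Algebra L R] (U D : R) (m : ℕ) :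
    Submodule L R :=
  degreeLE (Algebra.ofId L R) U D m

theorem normalOrder_ofId (ι : E →ₐ[L] R) (U D : R) (F : ℕ × ℕ →₀ L) :
    normalOrder (Algebra.ofId L R) U D F
      = normalOrder ι U D (F.mapRange (algebraMap L E) (map_zero _)) := by
  suffices normalOrder (Algebra.ofId L R) U D
      = normalOrder ι U D ∘ₗ Finsupp.mapRange.linearMap (Algebra.linearMap L E) from
    LinearMap.congr_fun this F
  refine Finsupp.lhom_ext fun ⟨i, j⟩ g => ?_
  simp [Algebra.ofId_apply]

theorem scalarDegreeLE_le (m : ℕ) : scalarDegreeLE L U D m ≤ degreeLE ι U D m := by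
  rintro _ ⟨F, hF, rfl⟩
  rw [normalOrder_ofId ι]
  refine ⟨_, ?_, rfl⟩
  rw [SetLike.mem_coe, Finsupp.mem_supported] at *
  exact fun p hp => hF (Finsupp.support_mapRange hp)

theorem U_pow_mem_scalarDegreeLE (N : ℕ) : U ^ N ∈ scalarDegreeLE L U D N := by
  simpa using monomial_mem_triangle (Algebra.ofId L R) U D (show N + 0 < N + 1 by omega) 1

theorem D_pow_mem_scalarDegreeLE (N : ℕ) : D ^ N ∈ scalarDegreeLE L U D N := by
  simpa using monomial_mem_triangle (Algebra.ofId L R) U D (show 0 + N < N + 1 by omega) 1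

theorem finite_supported {α : Type*} (M : Type*) [AddCommGroup M] [Module L M]
    [FiniteDimensional L M] (s : Finset α) :
    FiniteDimensional L (Finsupp.supported M L (s : Set α)) :=
  Module.Finite.equiv (Finsupp.supportedEquivFinsupp (M := M) (R := L) (s : Set α)).symm

theorem finrank_supported {α : Type*} (M : Type*) [AddCommGroup M] [Module L M]
    [FiniteDimensional L M] (s : Finset α) :
    Module.finrank L (Finsupp.supported M L (s : Set α)) = s.card * Module.finrank L M := by
  rw [(Finsupp.supportedEquivFinsupp (M := M) (R := L) (s : Set α)).finrank_eq,
    (Finsupp.linearEquivFunOnFinite L M _).finrank_eq, Module.finrank_pi_fintype]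
  simp

theorem finrank_monomialSpan [FiniteDimensional L E]
    (hinj : Function.Injective (normalOrder ι U D)) (s : Finset (ℕ × ℕ)) :
    Module.finrank L (monomialSpan ι U D s) = s.card * Module.finrank L E := by
  rw [monomialSpan, ← (Submodule.equivMapOfInjective _ hinj _).finrank_eq, finrank_supported E]

theorem IsKummer.finite_degreeLE (he : IsKummer σ w μ n ζ) (ι : E →ₐ[L] R) (U D : R) (m : ℕ) :
    FiniteDimensional L (degreeLE ι U D m) := by
  have := he.finiteDimensional
  have := finite_supported (L := L) E (triangle (m + 1))
  unfold degreeLE monomialSpan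
  infer_instance

theorem IsKummer.finrank_inf_degreeLE_mono (he : IsKummer σ w μ n ζ) (ι : E →ₐ[L] R) (U D : R)
    {P Q : Submodule L R} (h : P ≤ Q) (m : ℕ) :
    Module.finrank L ↥(P ⊓ degreeLE ι U D m) ≤ Module.finrank L ↥(Q ⊓ degreeLE ι U D m) := by
  have := he.finite_degreeLE ι U D m
  have : FiniteDimensional L ↥(Q ⊓ degreeLE ι U D m) := Submodule.finiteDimensional_inf_right _ _
  exact Submodule.finrank_mono (inf_le_inf_right _ h)

/-- In degrees at most `m`, the subspace `Q` exceeds `P` by at least `k` copies of the scalar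
monomials, up to an error linear in `m`. -/
def GrowsBy (ι : E →ₐ[L] R) (U D : R) (P Q : Submodule L R) (k : ℕ) : Prop :=
  ∃ c : ℕ, ∀ m, Module.finrank L ↥(P ⊓ degreeLE ι U D m) + k * (m + 2).choose 2
    ≤ Module.finrank L ↥(Q ⊓ degreeLE ι U D m) + c * (m + 1)

namespace GrowsBy

theorem trans {P Q S : Submodule L R} {k l : ℕ} (h₁ : GrowsBy ι U D P Q k)
    (h₂ : GrowsBy ι U D Q S l) : GrowsBy ι U D P S (k + l) := by
  obtain ⟨c, hc⟩ := h₁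
  obtain ⟨d, hd⟩ := h₂
  refine ⟨c + d, fun m => ?_⟩
  have := hc m
  have := hd m
  nlinarith

theorem mono (he : IsKummer σ w μ n ζ) {P P' Q Q' : Submodule L R} {k : ℕ}
    (h : GrowsBy ι U D P' Q k) (hP : P ≤ P') (hQ : Q ≤ Q') : GrowsBy ι U D P Q' k := by
  obtain ⟨c, hc⟩ := h
  refine ⟨c, fun m => ?_⟩
  have := hc m
  have := he.finrank_inf_degreeLE_mono ι U D hP m
  have := he.finrank_inf_degreeLE_mono ι U D hQ m
  omega

theorem zero (he : IsKummer σ w μ n ζ) {P Q : Submodule L R} (h : P ≤ Q) :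
    GrowsBy ι U D P Q 0 :=
  ⟨0, fun m => by simpa using he.finrank_inf_degreeLE_mono ι U D h m⟩

end GrowsBy

namespace IsPBW

variable (hp : IsPBW σ w μ ε ι U D)
include hp

theorem exists_hasLeadingTerm {q : R} (hq : q ≠ 0) :
    ∃ i j f, f ≠ 0 ∧ HasLeadingTerm ι U D q i j f := by
  obtain ⟨F, rfl⟩ := hp.surjective q
  obtain ⟨i, j, hne, hlead⟩ := _root_.exists_hasLeadingTerm ι U D (F := F)
    (by rintro rfl; simp at hq)
  exact ⟨i, j, _, hne, hlead⟩

variable (he : IsKummer σ w μ n ζ)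
include he

theorem mul_scalar_ne_zero {q x : R} {m : ℕ} (hq : q ≠ 0) (hx : x ∈ scalarDegreeLE L U D m)
    (hx0 : x ≠ 0) : q * x ≠ 0 := by
  have := he.nontrivial
  obtain ⟨i, j, f, hf, hqf⟩ := hp.exists_hasLeadingTerm hq
  obtain ⟨G, -, rfl⟩ := hx
  rw [normalOrder_ofId ι] at hx0 ⊢
  obtain ⟨a, b, hne, hlead⟩ := _root_.exists_hasLeadingTerm ι U D
    (F := G.mapRange (algebraMap L E) (map_zero _)) fun h0 => by simp [h0] at hx0
  refine (hqf.mul hp.toIsAmbiskew hlead).ne_zero hp.injective ?_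
  rw [Finsupp.mapRange_apply] at hne ⊢
  rw [AlgHom.commutes, mul_comm ((σ ^ a) _), ← Algebra.smul_def, smul_smul]
  exact smul_ne_zero (mul_ne_zero (pow_ne_zero _ he.root_ne_zero) (by rintro h0; simp [h0] at hne))
    (he.aut_pow_ne_zero _ hf)

theorem eq_zero_of_mul_eq_zero {q : R} {i j : ℕ} {f : E} (hq : HasLeadingTerm ι U D q i j f)
    (hf : IsUnit f) {x : R} (hx : q * x = 0) : x = 0 := by
  by_contra hx0
  obtain ⟨a, b, g, hg, hlead⟩ := hp.exists_hasLeadingTerm hx0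
  refine (hq.mul hp.toIsAmbiskew hlead).ne_zero hp.injective ?_ hx
  refine smul_ne_zero (pow_ne_zero _ he.root_ne_zero) ?_
  rw [Ne, (hf.map (σ ^ a)).mul_right_eq_zero]
  exact he.aut_pow_ne_zero _ hg

theorem finrank_degreeLE (m : ℕ) :
    Module.finrank L (degreeLE ι U D m) = n * (m + 2).choose 2 := by
  have := he.finiteDimensional
  rw [finrank_monomialSpan hp.injective, he.finrank_eq, card_triangle, mul_comm]

theorem finrank_scalarDegreeLE (m : ℕ) :
    Module.finrank L (scalarDegreeLE L U D m) = (m + 2).choose 2 := by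
  have := he.nontrivial
  have hinj : Function.Injective (normalOrder (Algebra.ofId L R) U D) := by
    intro F G h
    rw [normalOrder_ofId ι, normalOrder_ofId ι] at h
    exact Finsupp.mapRange_injective _ _ (algebraMap L E).injective (hp.injective h)
  rw [finrank_monomialSpan hinj, Module.finrank_self, card_triangle, mul_one]

theorem finrank_add_finrank_le {P Q X : Submodule L R} {v : R} {m e : ℕ} (hPQ : P ≤ Q)
    (hX : X ≤ degreeLE ι U D m) (hv : v ∈ degreeLE ι U D e)
    (hXP : ∀ x ∈ X, v * x ∈ P → x = 0) (hXQ : ∀ x ∈ X, v * x ∈ Q) :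
    Module.finrank L X + Module.finrank L ↥(P ⊓ degreeLE ι U D (e + m))
      ≤ Module.finrank L ↥(Q ⊓ degreeLE ι U D (e + m)) := by
  have := he.finite_degreeLE ι U D
  have hfin (Q : Submodule L R) : FiniteDimensional L ↥(Q ⊓ degreeLE ι U D (e + m)) :=
    Submodule.finiteDimensional_inf_right _ _
  have : FiniteDimensional L X := Submodule.finiteDimensional_of_le hX
  set Y := X.map (LinearMap.mulLeft L v) with hY
  have finrank_Y : Module.finrank L Y = Module.finrank L X := by
    rw [hY, ← LinearMap.range_domRestrict]
    refine LinearMap.finrank_range_of_inj ((injective_iff_map_eq_zero _).2 fun x hx => ?_)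
    have hvx : v * (x : R) = 0 := hx
    exact Subtype.ext (hXP x x.2 (hvx ▸ zero_mem P))
  have disjoint : Y ⊓ (P ⊓ degreeLE ι U D (e + m)) = ⊥ := by
    rw [eq_bot_iff]
    rintro _ ⟨⟨x, hx, rfl⟩, h2, _⟩
    rw [hXP x hx h2]; simp
  have le : Y ⊔ (P ⊓ degreeLE ι U D (e + m)) ≤ Q ⊓ degreeLE ι U D (e + m) := by
    refine sup_le ?_ (inf_le_inf_right _ hPQ)
    rintro _ ⟨x, hx, rfl⟩
    exact ⟨hXQ x hx, hp.mul_mem_degreeLE hv (hX hx)⟩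
  have dims := Submodule.finrank_sup_add_finrank_inf_eq Y (P ⊓ degreeLE ι U D (e + m))
  rw [disjoint, finrank_bot, add_zero, finrank_Y] at dims
  exact dims ▸ Submodule.finrank_mono le

theorem growsBy_of_mul {P Q : Submodule L R} {v : R} {k : ℕ} (X : ℕ → Submodule L R)
    (hX : ∀ m, X m ≤ degreeLE ι U D m) (hXk : ∀ m, Module.finrank L (X m) = k * (m + 2).choose 2)
    (hPQ : P ≤ Q) (hXP : ∀ m, ∀ x ∈ X m, v * x ∈ P → x = 0)
    (hXQ : ∀ m, ∀ x ∈ X m, v * x ∈ Q) : GrowsBy ι U D P Q k := by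
  obtain ⟨e, hv⟩ := exists_mem_degreeLE hp.surjective v
  refine ⟨k * e, fun m => ?_⟩
  rcases lt_or_ge m e with h | h
  · have := choose_two_le_of_lt h
    have := he.finrank_inf_degreeLE_mono ι U D hPQ m
    nlinarith
  · obtain ⟨m', rfl⟩ := Nat.exists_eq_add_of_le h
    have gain := hp.finrank_add_finrank_le he hPQ (hX m') hv (hXP m') (hXQ m')
    have shift := Nat.mul_le_mul_left k (choose_two_add_le m' e)
    rw [hXk] at gain
    rw [add_comm e m'] at *
    linarith [mul_add k ((m' + 2).choose 2) (e * (m' + e + 1)), mul_assoc k e (m' + e + 1)]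

theorem growsBy_one {P Q : Submodule L R} {v : R} (hPQ : P ≤ Q)
    (hXP : ∀ m, ∀ x ∈ scalarDegreeLE L U D m, v * x ∈ P → x = 0) (hXQ : ∀ x, v * x ∈ Q) :
    GrowsBy ι U D P Q 1 :=
  hp.growsBy_of_mul he (scalarDegreeLE L U D) scalarDegreeLE_le
    (fun m => by rw [hp.finrank_scalarDegreeLE he, one_mul]) hPQ hXP fun _ x _ => hXQ x

theorem growsBy_of_regular {Q : Submodule L R} {v : R} (hv : ∀ x, v * x = 0 → x = 0)
    (hXQ : ∀ x, v * x ∈ Q) : GrowsBy ι U D ⊥ Q n :=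
  hp.growsBy_of_mul he (degreeLE ι U D) (fun _ => le_rfl) (hp.finrank_degreeLE he) bot_le
    (fun _ x _ h => hv x (by simpa using h)) fun _ x _ => hXQ x

theorem le_of_growsBy {P Q : Submodule L R} {k : ℕ} (h : GrowsBy ι U D P Q k) : k ≤ n := by
  by_contra! hk
  obtain ⟨c, hc⟩ := h
  have lower := hc (2 * c)
  have upper : Module.finrank L ↥(Q ⊓ degreeLE ι U D (2 * c)) ≤ n * (2 * c + 2).choose 2 := by
    rw [← hp.finrank_degreeLE he]
    have := he.finite_degreeLE ι U D (2 * c)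
    exact Submodule.finrank_mono inf_le_right
  have := two_mul_choose_two (2 * c)
  have : (n + 1) * (2 * c + 2).choose 2 ≤ k * (2 * c + 2).choose 2 := Nat.mul_le_mul_right _ hk
  nlinarith

end IsPBW

end Growth

/-! ### Right ideals and the heart -/

open MulOpposite

/-- Right ideals, as submodules of `R` over the opposite ring. -/
abbrev RightIdeal (R : Type*) [Ring R] := Submodule Rᵐᵒᵖ R

namespace RightIdeal

variable {R : Type*} [Ring R] {I J : RightIdeal R} {x : R}

theorem mul_mem_right (hx : x ∈ I) (r : R) : x * r ∈ I :=
  I.smul_mem (op r) hx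

theorem mem_span_singleton {v : R} : x ∈ Rᵐᵒᵖ ∙ v ↔ ∃ r, v * r = x := by
  rw [Submodule.mem_span_singleton, op_surjective.exists]
  rfl

theorem mul_mem_span_singleton (v r : R) : v * r ∈ Rᵐᵒᵖ ∙ v :=
  mul_mem_right (Submodule.mem_span_singleton_self v) r

/-- A right ideal that is also a left ideal. -/
def IsTwoSided (I : RightIdeal R) : Prop := ∀ r x : R, x ∈ I → r * x ∈ I

/-- A two-sided right ideal as a term of Mathlib's type of two-sided ideals. -/
def IsTwoSided.toTwoSidedIdeal (hI : IsTwoSided I) : TwoSidedIdeal R :=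
  .mk' I I.zero_mem I.add_mem I.neg_mem (fun {x y} hy => hI x y hy)
    fun {_ y} hx => mul_mem_right hx y

@[simp]
theorem IsTwoSided.mem_toTwoSidedIdeal (hI : IsTwoSided I) : x ∈ hI.toTwoSidedIdeal ↔ x ∈ I := by
  simp [toTwoSidedIdeal]

/-- The two-sided ideal generated by a right ideal. -/
def twoSidedHull (I : RightIdeal R) : RightIdeal R := ⨆ s : R, I.map (LinearMap.mulLeft Rᵐᵒᵖ s)

theorem mul_mem_twoSidedHull (s : R) (hx : x ∈ I) : s * x ∈ twoSidedHull I :=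
  Submodule.mem_iSup_of_mem s ⟨x, hx, rfl⟩

theorem le_twoSidedHull (I : RightIdeal R) : I ≤ twoSidedHull I := fun x hx => by
  simpa using mul_mem_twoSidedHull 1 hx

theorem twoSidedHull_le (h : ∀ s, ∀ x ∈ I, s * x ∈ J) : twoSidedHull I ≤ J := by
  refine iSup_le fun s => ?_
  rintro _ ⟨y, hy, rfl⟩
  exact h s y hy

theorem twoSidedHull_isTwoSided (I : RightIdeal R) : IsTwoSided (twoSidedHull I) := by
  intro r x hx
  suffices twoSidedHull I ≤ (twoSidedHull I).comap (LinearMap.mulLeft Rᵐᵒᵖ r) from this hx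
  refine twoSidedHull_le fun s y hy => ?_
  simpa [mul_assoc] using mul_mem_twoSidedHull (r * s) hy

theorem twoSidedHull_ne_bot (hI : I ≠ ⊥) : twoSidedHull I ≠ ⊥ :=
  ne_bot_of_le_ne_bot hI (le_twoSidedHull I)

end RightIdeal

open RightIdeal

/-- The heart of a ring: the intersection of all its nonzero two-sided ideals. -/
def heart (R : Type*) [Ring R] : RightIdeal R := sInf {I | IsTwoSided I ∧ I ≠ ⊥}

/-- The product of the right ideal `N` with the heart is contained in `X`. -/
def RightIdeal.MulHeartLE {R : Type*} [Ring R] (N X : RightIdeal R) : Prop :=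
  ∀ v ∈ N, ∀ y ∈ heart R, v * y ∈ X

section Heart

variable {L R : Type*} [Field L] [Ring R] [Algebra L R] {I : RightIdeal R}

theorem mem_heart {x : R} : x ∈ heart R ↔ ∀ I : RightIdeal R, IsTwoSided I → I ≠ ⊥ → x ∈ I := by
  simp only [heart, Submodule.mem_sInf, Set.mem_ofPred_eq, and_imp]

theorem heart_le (h : IsTwoSided I) (h0 : I ≠ ⊥) : heart R ≤ I := sInf_le ⟨h, h0⟩

theorem heart_isTwoSided : IsTwoSided (heart R) := by
  intro r x hx
  rw [mem_heart] at *
  exact fun I hI hI0 => hI r x (hx I hI hI0)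

theorem heart_le_of_mul_mem {x : R} (hx : x ∈ heart R) (hxx : x * x ≠ 0)
    (h : ∀ x ∈ heart R, ∀ y ∈ heart R, x * y ∈ I) : heart R ≤ I := by
  let P : RightIdeal R := ⨆ x : heart R, (heart R).map (LinearMap.mulLeft Rᵐᵒᵖ (x : R))
  have mul_mem_P {x y : R} (hx : x ∈ heart R) (hy : y ∈ heart R) : x * y ∈ P :=
    Submodule.mem_iSup_of_mem ⟨x, hx⟩ ⟨y, hy, rfl⟩
  have P_le {J : RightIdeal R} (hJ : ∀ x ∈ heart R, ∀ y ∈ heart R, x * y ∈ J) : P ≤ J := by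
    refine iSup_le fun x => ?_
    rintro _ ⟨y, hy, rfl⟩
    exact hJ x x.2 y hy
  refine (heart_le (I := P) (fun r z hz => ?_) fun h0 => hxx ?_).trans (P_le h)
  · suffices P ≤ P.comap (LinearMap.mulLeft Rᵐᵒᵖ r) from this hz
    refine P_le fun x hx y hy => ?_
    simpa [mul_assoc] using mul_mem_P (heart_isTwoSided r x hx) hy
  · simpa [h0] using mul_mem_P hx hx

/-- The annihilator of the right module `R ⧸ I` is two-sided, and it is nonzero because `R` is too
big to embed into the endomorphisms of `R ⧸ I`. -/
theorem heart_le_of_finiteDimensional_quotient (hR : ¬ FiniteDimensional L R)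
    [FiniteDimensional L (R ⧸ I.restrictScalars L)] : heart R ≤ I := by
  let J : RightIdeal R := ⨅ x : R, I.comap (LinearMap.mulLeft Rᵐᵒᵖ x)
  have mem_J {r : R} : r ∈ J ↔ ∀ x, x * r ∈ I := by simp [J, Submodule.mem_iInf]
  have J_le : J ≤ I := fun x hx => by simpa using mem_J.1 hx 1
  refine (heart_le (I := J) (fun r x hx => ?_) fun hJ => hR ?_).trans J_le
  · exact mem_J.2 fun y => by rw [← mul_assoc]; exact mem_J.1 hx _
  let q := (I.restrictScalars L).mkQ
  let act : R →ₗ[L] (R ⧸ I.restrictScalars L) →ₗ[L] R ⧸ I.restrictScalars L :=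
    ((I.restrictScalars L).liftQ ((LinearMap.mul L R).compr₂ q) fun x hx =>
      LinearMap.ext fun r => (Submodule.Quotient.mk_eq_zero _).2 (mul_mem_right hx r)).flip
  refine Module.Finite.of_injective act ((injective_iff_map_eq_zero act).2 fun r hr => ?_)
  suffices r ∈ J by simpa [hJ] using this
  exact mem_J.2 fun x => (Submodule.Quotient.mk_eq_zero (I.restrictScalars L)).1
    (LinearMap.congr_fun hr (q x))

namespace RightIdeal.MulHeartLE

variable {N N' X : RightIdeal R}

theorem of_le (h : N ≤ X) : MulHeartLE N X := fun _ hv y _ => mul_mem_right (h hv) y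

theorem mono_left (h : MulHeartLE N X) (hN : N' ≤ N) : MulHeartLE N' X := fun v hv => h v (hN hv)

theorem mono_right (h : MulHeartLE N I) (hX : I ≤ X) : MulHeartLE N X :=
  fun v hv y hy => hX (h v hv y hy)

theorem sup (h : MulHeartLE N X) (h' : MulHeartLE N' X) : MulHeartLE (N ⊔ N') X := by
  intro v hv y hy
  obtain ⟨a, ha, b, hb, rfl⟩ := Submodule.mem_sup.1 hv
  rw [add_mul]
  exact add_mem (h a ha y hy) (h' b hb y hy)

theorem span_singleton {b : R} (h : ∀ y ∈ heart R, b * y ∈ X) : MulHeartLE (Rᵐᵒᵖ ∙ b) X := by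
  intro v hv y hy
  obtain ⟨r, rfl⟩ := mem_span_singleton.1 hv
  rw [mul_assoc]
  exact h _ (heart_isTwoSided r y hy)

end RightIdeal.MulHeartLE

theorem eq_top_of_mul_mem {s : Set R} (hs : Algebra.adjoin L s = ⊤) {W : Submodule L R}
    (h1 : 1 ∈ W) (h : ∀ x ∈ W, ∀ t ∈ s, x * t ∈ W) : W = ⊤ := by
  refine Submodule.eq_top_iff'.2 fun r => ?_
  suffices ∀ x ∈ W, x * r ∈ W by simpa using this 1 h1
  have hr : r ∈ Algebra.adjoin L s := hs ▸ Algebra.mem_top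
  induction hr using Algebra.adjoin_induction with
  | mem t ht => exact fun x hx => h x hx t ht
  | algebraMap c =>
    exact fun x hx => by rw [← Algebra.commutes, ← Algebra.smul_def]; exact W.smul_mem c hx
  | add a b _ _ ha hb => exact fun x hx => by rw [mul_add]; exact W.add_mem (ha x hx) (hb x hx)
  | mul a b _ _ ha hb => exact fun x hx => by rw [← mul_assoc]; exact hb _ (ha x hx)

theorem exists_disjoint_sup_eq {V : Type*} [AddCommGroup V] [Module L V] {K T : Submodule L V}
    (h : K ≤ T) : ∃ X ≤ T, Disjoint K X ∧ K ⊔ X = T := by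
  obtain ⟨X, hX⟩ := exists_isCompl K
  refine ⟨X ⊓ T, inf_le_right, hX.disjoint.mono_right inf_le_left, ?_⟩
  rw [← sup_inf_assoc_of_le X h, hX.sup_eq_top, top_inf_eq]

end Heart

section Deficit

variable {L E R : Type*} [Field L] [CommRing E] [Algebra L E] [Ring R] [Algebra L R]
variable {σ : E →ₐ[L] E} {w : E} {μ ε : L} {ι : E →ₐ[L] R} {U D : R} {n : ℕ} {ζ : L}

theorem degreeLE_le_succ (ι : E →ₐ[L] R) (U D : R) (m : ℕ) :
    degreeLE ι U D m ≤ degreeLE ι U D (m + 1) :=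
  degreeLE_mono ι U D m.le_succ

theorem one_mem_degreeLE (ι : E →ₐ[L] R) (U D : R) (m : ℕ) : 1 ∈ degreeLE ι U D m := by
  simpa using monomial_mem_triangle ι U D (show 0 + 0 < m + 1 by omega) 1

namespace IsPBW

variable (hp : IsPBW σ w μ ε ι U D)
include hp

theorem degreeLE_sup_eq_top {I : RightIdeal R} {m : ℕ}
    (h : degreeLE ι U D (m + 1) ≤ degreeLE ι U D m ⊔ I.restrictScalars L) :
    degreeLE ι U D m ⊔ I.restrictScalars L = ⊤ := by
  refine eq_top_of_mul_mem hp.adjoin_eq_top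
    (Submodule.mem_sup_left (one_mem_degreeLE ι U D m)) fun x hx t ht => ?_
  have t_mem : t ∈ degreeLE ι U D 1 := by
    refine scalarDegreeLE_le _ ?_
    obtain rfl | rfl := ht
    · simpa using U_pow_mem_scalarDegreeLE (L := L) (U := t) (D := D) 1
    · simpa using D_pow_mem_scalarDegreeLE (L := L) (U := U) (D := t) 1
  obtain ⟨y, hy, z, hz, rfl⟩ := Submodule.mem_sup.1 hx
  rw [add_mul]
  exact add_mem (h (hp.mul_mem_degreeLE hy t_mem))
    (Submodule.mem_sup_right (mul_mem_right (I := I) hz t))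

variable (he : IsKummer σ w μ n ζ)
include he

theorem U_pow_ne_zero (N : ℕ) : U ^ N ≠ 0 := by
  have := he.nontrivial
  have : U ^ N = normalOrder ι U D (Finsupp.single (N, 0) 1) := by simp
  rw [this, Ne, map_eq_zero_iff _ hp.injective]
  simp

theorem not_finiteDimensional : ¬ FiniteDimensional L R := by
  intro hfin
  have dim := hp.finrank_degreeLE he (2 * Module.finrank L R)
  have dim_le := Submodule.finrank_le (degreeLE ι U D (2 * Module.finrank L R))
  have := two_mul_choose_two (2 * Module.finrank L R)
  have := he.pos
  nlinarith

variable {N : ℕ} (hU : U ^ N ∈ heart R)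
include hU

theorem heart_le_of_heart_mul_heart {I : RightIdeal R}
    (h : ∀ x ∈ heart R, ∀ y ∈ heart R, x * y ∈ I) : heart R ≤ I :=
  heart_le_of_mul_mem hU (pow_add U N N ▸ hp.U_pow_ne_zero he (N + N)) h

theorem exists_mul_mul_ne_zero {ν : R} (hν : ν ≠ 0) {I : RightIdeal R} (hI : I ≠ ⊥) :
    ∃ s, ∃ x ∈ I, ν * s * x ≠ 0 := by
  by_contra! h
  have hull_le : twoSidedHull I ≤ (⊥ : RightIdeal R).comap (LinearMap.mulLeft Rᵐᵒᵖ ν) :=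
    twoSidedHull_le fun s x hx => by simpa [mul_assoc] using h s x hx
  have mul_eq_zero : ν * U ^ N = 0 := by
    simpa using hull_le (heart_le (twoSidedHull_isTwoSided I) (twoSidedHull_ne_bot hI) hU)
  exact hp.mul_scalar_ne_zero he hν (U_pow_mem_scalarDegreeLE N) (hp.U_pow_ne_zero he N) mul_eq_zero

omit hU in
theorem heart_le_of_degreeLE_sup_eq_top {I : RightIdeal R} {m : ℕ}
    (h : degreeLE ι U D m ⊔ I.restrictScalars L = ⊤) : heart R ≤ I := by
  have := he.finite_degreeLE ι U D m
  have : FiniteDimensional L (R ⧸ I.restrictScalars L) := by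
    refine Module.Finite.of_surjective
      ((I.restrictScalars L).mkQ.domRestrict (degreeLE ι U D m)) ?_
    rwa [← LinearMap.range_eq_top, LinearMap.range_domRestrict, Submodule.map_mkQ_eq_top, sup_comm]
  exact heart_le_of_finiteDimensional_quotient (hp.not_finiteDimensional he)

omit hU in
theorem finrank_inf_degreeLE_add_le {I : RightIdeal R} (h : ¬ heart R ≤ I) (m : ℕ) :
    Module.finrank L ↥(I.restrictScalars L ⊓ degreeLE ι U D m) + (m + 1)
      ≤ Module.finrank L (degreeLE ι U D m) := by
  have finite := he.finite_degreeLE ι U D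
  set P := I.restrictScalars L
  have (m : ℕ) : FiniteDimensional L ↥(P ⊓ degreeLE ι U D m) :=
    Submodule.finiteDimensional_inf_right _ _
  induction m with
  | zero =>
    refine Submodule.finrank_lt_finrank_of_lt (inf_le_right.lt_of_ne fun heq => h fun x _ => ?_)
    have one_mem : (1 : R) ∈ P := inf_eq_right.1 heq (one_mem_degreeLE ι U D 0)
    simpa using mul_mem_right (I := I) one_mem x
  | succ m ih =>
    have lt : degreeLE ι U D m ⊔ P ⊓ degreeLE ι U D (m + 1) < degreeLE ι U D (m + 1) := by
      refine (sup_le (degreeLE_le_succ ι U D m) inf_le_right).lt_of_ne fun heq => h ?_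
      refine hp.heart_le_of_degreeLE_sup_eq_top he (hp.degreeLE_sup_eq_top (m := m) ?_)
      exact heq.symm.le.trans (sup_le_sup_left inf_le_left _)
    have dims := Submodule.finrank_sup_add_finrank_inf_eq (degreeLE ι U D m)
      (P ⊓ degreeLE ι U D (m + 1))
    have inf_eq : degreeLE ι U D m ⊓ (P ⊓ degreeLE ι U D (m + 1)) = P ⊓ degreeLE ι U D m := by
      rw [inf_left_comm, inf_eq_left.2 (degreeLE_le_succ ι U D m)]
    rw [inf_eq] at dims
    have := Submodule.finrank_lt_finrank_of_lt lt
    omega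

end IsPBW

/-- In degrees at most `m`, the right ideal `P` has codimension at least `k (m + 1)`, up to a
bounded error. -/
def HasDeficit (ι : E →ₐ[L] R) (U D : R) (P : RightIdeal R) (k : ℕ) : Prop :=
  ∃ e : ℕ, ∀ m, Module.finrank L ↥(P.restrictScalars L ⊓ degreeLE ι U D m) + k * (m + 1)
    ≤ Module.finrank L (degreeLE ι U D m) + e

theorem IsKummer.hasDeficit_zero (he : IsKummer σ w μ n ζ) (P : RightIdeal R) :
    HasDeficit ι U D P 0 :=
  ⟨0, fun m => by
    have := he.finite_degreeLE ι U D m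
    simpa using Submodule.finrank_mono inf_le_right⟩

theorem IsPBW.hasDeficit_succ (hp : IsPBW σ w μ ε ι U D) (he : IsKummer σ w μ n ζ)
    {P Q : RightIdeal R} (hPQ : P ≤ Q) (hQP : ¬ MulHeartLE Q P) {k : ℕ}
    (h : HasDeficit ι U D Q k) : HasDeficit ι U D P (k + 1) := by
  obtain ⟨v, hv, hvP⟩ : ∃ v ∈ Q, ¬ heart R ≤ P.comap (LinearMap.mulLeft Rᵐᵒᵖ v) := by
    by_contra! h
    exact hQP fun v hv y hy => h v hv hy
  obtain ⟨e, hve⟩ := exists_mem_degreeLE hp.surjective v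
  obtain ⟨c, hc⟩ := h
  have hPQ' : P.restrictScalars L ≤ Q.restrictScalars L := hPQ
  refine ⟨c + e, fun m => ?_⟩
  rcases lt_or_ge m e with hm | hm
  · have := he.finrank_inf_degreeLE_mono ι U D hPQ' m
    have := hc m
    nlinarith
  · obtain ⟨m, rfl⟩ := Nat.exists_eq_add_of_le hm
    have := he.finite_degreeLE ι U D m
    have codim := hp.finrank_inf_degreeLE_add_le he hvP m
    set K := (P.comap (LinearMap.mulLeft Rᵐᵒᵖ v)).restrictScalars L ⊓ degreeLE ι U D m
    obtain ⟨X, hX, disj, sup⟩ := exists_disjoint_sup_eq (inf_le_right : K ≤ degreeLE ι U D m)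
    have : FiniteDimensional L K := Submodule.finiteDimensional_inf_right _ _
    have : FiniteDimensional L X := Submodule.finiteDimensional_of_le hX
    have dims := Submodule.finrank_sup_add_finrank_inf_eq K X
    rw [disj.eq_bot, sup, finrank_bot, add_zero] at dims
    have gain := hp.finrank_add_finrank_le he hPQ' hX hve
      (fun x hx hvx => Submodule.disjoint_def.1 disj x ⟨hvx, hX hx⟩ hx)
      fun x _ => mul_mem_right hv x
    have := hc (e + m)
    nlinarith

end Deficit

/-! ### Large right ideals -/

section Large

variable {L E R : Type*} [Field L] [CommRing E] [Algebra L E] [Ring R] [Algebra L R]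
variable {σ : E →ₐ[L] E} {w : E} {μ ε : L} {ι : E →ₐ[L] R} {U D : R} {n : ℕ} {ζ : L}
variable {P Q N S : RightIdeal R}

/-- A right ideal which in each degree has the same dimension as the whole ring, up to an error
linear in the degree. -/
def IsLarge (ι : E →ₐ[L] R) (U D : R) (n : ℕ) (P : RightIdeal R) : Prop :=
  GrowsBy ι U D ⊥ (P.restrictScalars L) n

theorem IsLarge.mono (he : IsKummer σ w μ n ζ) (h : IsLarge ι U D n P) (hPQ : P ≤ Q) :
    IsLarge ι U D n Q :=
  GrowsBy.mono he h le_rfl hPQ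

/-- `N` is minimal, up to right ideals `X` with `N · heart ⊆ X`, among the right ideals containing
`P` whose product with the heart is not contained in `P`. -/
structure IsCritical (P N : RightIdeal R) : Prop where
  le : P ≤ N
  not_mulHeartLE : ¬ MulHeartLE N P
  mulHeartLE : ∀ X, P ≤ X → X ≤ N → ¬ MulHeartLE X P → MulHeartLE N X

namespace IsPBW

variable (hp : IsPBW σ w μ ε ι U D) (he : IsKummer σ w μ n ζ)
include hp he

theorem exists_deficit_le (h : IsLarge ι U D n P) : ∃ c, ∀ k, HasDeficit ι U D P k → k ≤ c := by
  obtain ⟨c, hc⟩ := h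
  refine ⟨c, fun k ⟨e, hk⟩ => ?_⟩
  by_contra! hlt
  have lower := hc e
  have upper := hk e
  rw [hp.finrank_degreeLE he] at upper
  nlinarith

theorem comap_mulLeft_ne_bot (h : IsLarge ι U D n P) (b : R) :
    P.comap (LinearMap.mulLeft Rᵐᵒᵖ b) ≠ ⊥ := by
  intro h0
  have grows : GrowsBy ι U D (P.restrictScalars L) ⊤ n := by
    refine hp.growsBy_of_mul he (v := b) (degreeLE ι U D) (fun _ => le_rfl)
      (hp.finrank_degreeLE he) le_top (fun m x _ hx => ?_) fun _ _ _ => trivial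
    have : x ∈ P.comap (LinearMap.mulLeft Rᵐᵒᵖ b) := hx
    simpa [h0] using this
  have := hp.le_of_growsBy he (GrowsBy.trans h grows)
  have := he.pos
  omega

theorem exists_isCritical {c : ℕ} (hc : ∀ k, HasDeficit ι U D P k → k ≤ c) (hPS : P ≤ S)
    (hS : ¬ MulHeartLE S P) : ∃ N ≤ S, IsCritical P N := by
  let deficits : Set ℕ :=
    {k | ∃ N, P ≤ N ∧ N ≤ S ∧ ¬ MulHeartLE N P ∧ HasDeficit ι U D N k}
  have nonempty : deficits.Nonempty := ⟨0, S, hPS, le_rfl, hS, he.hasDeficit_zero S⟩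
  have bddAbove : BddAbove deficits := by
    refine ⟨c, ?_⟩
    rintro k ⟨N, hPN, -, hN, hk⟩
    exact (Nat.le_succ k).trans (hc _ (hp.hasDeficit_succ he hPN hN hk))
  obtain ⟨N, hPN, hNS, hN, hk⟩ := Nat.sSup_mem nonempty bddAbove
  refine ⟨N, hNS, hPN, hN, fun X hPX hXN hX => ?_⟩
  by_contra hNX
  have : sSup deficits + 1 ∈ deficits :=
    ⟨X, hPX, hXN.trans hNS, hX, hp.hasDeficit_succ he hXN hNX hk⟩
  have := le_csSup bddAbove this
  omega

section HeartElement

variable {M : ℕ} (hU : U ^ M ∈ heart R)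
include hU

theorem mulHeartLE_trans (h₁ : MulHeartLE S N) (h₂ : MulHeartLE N P) : MulHeartLE S P := by
  intro x hx
  suffices heart R ≤ P.comap (LinearMap.mulLeft Rᵐᵒᵖ x) from this
  refine hp.heart_le_of_heart_mul_heart he hU fun y hy z hz => ?_
  simpa [mul_assoc] using h₂ _ (h₁ x hx y hy) z hz

theorem exists_mul_mul_mul_notMem {ν b y : R} (hy : y ∈ heart R) (hν : ν * y ∉ P)
    (hb : P.comap (LinearMap.mulLeft Rᵐᵒᵖ b) ≠ ⊥) :
    ∃ s r, b * r ∈ P ∧ ∃ z ∈ heart R, ν * s * r * z ∉ P := by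
  by_contra! h
  let Z : RightIdeal R :=
    { carrier := {x | ∀ y ∈ heart R, ν * x * y ∈ P}
      add_mem' := fun {a b} ha hb y hy => by
        rw [mul_add, add_mul]
        exact P.add_mem (ha y hy) (hb y hy)
      zero_mem' := fun y _ => by simp
      smul_mem' := fun r x hx y hy => by
        simpa [mul_assoc] using hx (r.unop * y) (heart_isTwoSided _ _ hy) }
  have hull_le : twoSidedHull (P.comap (LinearMap.mulLeft Rᵐᵒᵖ b)) ≤ Z :=
    twoSidedHull_le fun s x hx y hy => by simpa [mul_assoc] using h s x hx y hy
  have heart_le_Z : heart R ≤ Z :=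
    (heart_le (twoSidedHull_isTwoSided _) (twoSidedHull_ne_bot hb)).trans hull_le
  have : heart R ≤ P.comap (LinearMap.mulLeft Rᵐᵒᵖ ν) :=
    hp.heart_le_of_heart_mul_heart he hU fun x hx z hz => by
      simpa [mul_assoc] using heart_le_Z hx z hz
  exact hν (this hy)

variable {𝒥 : AddSubgroup R} (h𝒥 : ∀ j ∈ heart R, ∃ l : L, l ≠ 0 ∧ l • j ∈ 𝒥)
include h𝒥

/-- With `ν = d j` and `r` such that `b r ∈ P` but `ν r · heart ⊄ P`, the ideal
`P + (b + ν) R` contains `ν r`, hence `N · heart` by criticality. -/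
theorem exists_mulHeartLE_of_isCritical (hN : IsCritical P N) {b d : R}
    (hNd : N ≤ P ⊔ (heart R).map (LinearMap.mulLeft Rᵐᵒᵖ d))
    (hb : P.comap (LinearMap.mulLeft Rᵐᵒᵖ b) ≠ ⊥) :
    ∃ j ∈ 𝒥, MulHeartLE (N ⊔ Rᵐᵒᵖ ∙ b) (P ⊔ Rᵐᵒᵖ ∙ (b + d * j)) := by
  obtain ⟨j, hj, hjN, y, hy, hjy⟩ : ∃ j ∈ heart R, d * j ∈ N ∧ ∃ y ∈ heart R, d * j * y ∉ P := by
    obtain ⟨v, hv, y, hy, hvy⟩ : ∃ v ∈ N, ∃ y ∈ heart R, v * y ∉ P := by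
      simpa [MulHeartLE] using hN.not_mulHeartLE
    obtain ⟨i, hi, _, ⟨j, hj, rfl⟩, rfl⟩ := Submodule.mem_sup.1 (hNd hv)
    refine ⟨j, hj, (add_mem_cancel_left (hN.le hi)).1 hv, y, hy, fun h => hvy ?_⟩
    rw [add_mul]
    exact P.add_mem (mul_mem_right hi y) h
  obtain ⟨s, r, hr, z, hz, hsr⟩ := hp.exists_mul_mul_mul_notMem he hU hy hjy hb
  obtain ⟨l, hl, hlj⟩ := h𝒥 _ (mul_mem_right hj s)
  set ν := d * l • (j * s) with hν
  have ν_eq : ν = l • (d * j * s) := by rw [hν, mul_smul_comm, mul_assoc]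
  have ν_mem : ν ∈ N := ν_eq ▸ (N.restrictScalars L).smul_mem l (mul_mem_right hjN s)
  have ν_mul_notMem : ν * r * z ∉ P := by
    intro h
    have := (P.restrictScalars L).smul_mem l⁻¹ h
    rw [ν_eq, smul_mul_assoc, smul_mul_assoc, inv_smul_smul₀ hl] at this
    exact hsr this
  set Z := P ⊔ Rᵐᵒᵖ ∙ (b + ν)
  have add_mul_mem (x : R) : (b + ν) * x ∈ Z :=
    Submodule.mem_sup_right (mul_mem_span_singleton _ x)
  have ν_mul_mem : ν * r ∈ Z := by
    simpa [add_mul] using sub_mem (add_mul_mem r) (Submodule.mem_sup_left hr)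
  have N_le : MulHeartLE N Z := by
    refine (hN.mulHeartLE (P ⊔ Rᵐᵒᵖ ∙ (ν * r)) le_sup_left (sup_le hN.le ?_)
      fun h => ν_mul_notMem ?_).mono_right ?_
    · exact (Submodule.span_singleton_le_iff_mem _ _).2 (mul_mem_right ν_mem r)
    · exact h _ (Submodule.mem_sup_right (Submodule.mem_span_singleton_self _)) z hz
    · exact sup_le le_sup_left ((Submodule.span_singleton_le_iff_mem _ _).2 ν_mul_mem)
  refine ⟨_, hlj, N_le.sup (MulHeartLE.span_singleton fun y hy => ?_)⟩
  simpa [add_mul] using sub_mem (add_mul_mem y) (N_le ν ν_mem y hy)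

theorem exists_mulHeartLE_of_deficit_le (d : R) (c : ℕ) (b : R) (hP : IsLarge ι U D n P)
    (hc : ∀ k, HasDeficit ι U D P k → k ≤ c) :
    ∃ j ∈ 𝒥, MulHeartLE (P ⊔ Rᵐᵒᵖ ∙ b ⊔ (heart R).map (LinearMap.mulLeft Rᵐᵒᵖ d))
      (P ⊔ Rᵐᵒᵖ ∙ (b + d * j)) := by
  induction c using Nat.strong_induction_on generalizing P b with
  | h c ih =>
  set dJ := (heart R).map (LinearMap.mulLeft Rᵐᵒᵖ d)
  by_cases hd : MulHeartLE (P ⊔ dJ) P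
  · refine ⟨0, 𝒥.zero_mem, ?_⟩
    rw [mul_zero, add_zero]
    exact (MulHeartLE.of_le le_rfl).sup ((hd.mono_left le_sup_right).mono_right le_sup_left)
  obtain ⟨N, hNd, hN⟩ := hp.exists_isCritical he hc le_sup_left hd
  have deficit_lt (k : ℕ) (hk : HasDeficit ι U D N k) : k + 1 ≤ c :=
    hc _ (hp.hasDeficit_succ he hN.le hN.not_mulHeartLE hk)
  have c_pos := deficit_lt 0 (he.hasDeficit_zero N)
  obtain ⟨j₁, hj₁, h₁⟩ := ih (c - 1) (by omega) b (hP.mono he hN.le)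
    fun k hk => Nat.le_sub_one_of_lt (deficit_lt k hk)
  obtain ⟨j₂, hj₂, h₂⟩ := hp.exists_mulHeartLE_of_isCritical he hU h𝒥 hN hNd
    (hp.comap_mulLeft_ne_bot he hP (b + d * j₁))
  refine ⟨j₁ + j₂, 𝒥.add_mem hj₁ hj₂, ?_⟩
  rw [mul_add, ← add_assoc]
  exact hp.mulHeartLE_trans he hU
    (h₁.mono_left (sup_le_sup_right (sup_le_sup_right hN.le _) _)) h₂

theorem exists_mulHeartLE (b d : R) (hP : IsLarge ι U D n P) :
    ∃ j ∈ 𝒥, MulHeartLE (P ⊔ Rᵐᵒᵖ ∙ b ⊔ (heart R).map (LinearMap.mulLeft Rᵐᵒᵖ d))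
      (P ⊔ Rᵐᵒᵖ ∙ (b + d * j)) :=
  (hp.exists_deficit_le he hP).elim fun c hc =>
    hp.exists_mulHeartLE_of_deficit_le he hU h𝒥 d c b hP hc

omit h𝒥

/-- Right multiplication by `ν c` on the annihilator of `b` is nonzero for suitable `c`, while
`νR ∩ bR = 0` forces `ann (b + ν c) ≤ ann b`. -/
theorem exists_growsBy_ker {b ν : R} (hb : LinearMap.ker (LinearMap.mulLeft Rᵐᵒᵖ b) ≠ ⊥)
    (hν : ν ≠ 0) (disj : Disjoint (Rᵐᵒᵖ ∙ ν) (Rᵐᵒᵖ ∙ b)) :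
    ∃ c, GrowsBy ι U D
      ((LinearMap.ker (LinearMap.mulLeft Rᵐᵒᵖ (b + ν * c))).restrictScalars L)
      ((LinearMap.ker (LinearMap.mulLeft Rᵐᵒᵖ b)).restrictScalars L) 1 := by
  obtain ⟨c, i, hi, hci⟩ := hp.exists_mul_mul_ne_zero he hU hν hb
  have hbi : b * i = 0 := hi
  refine ⟨c, hp.growsBy_one he (v := i) (fun r hr => ?_) (fun m x hx hix => ?_)
    fun x => mul_mem_right hi x⟩
  · have eq_zero : (b + ν * c) * r = 0 := hr
    have mem : b * r ∈ Rᵐᵒᵖ ∙ ν := by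
      rw [mem_span_singleton]
      refine ⟨-(c * r), ?_⟩
      rw [mul_neg, ← mul_assoc, neg_eq_iff_add_eq_zero, add_comm, ← add_mul, eq_zero]
    exact Submodule.disjoint_def.1 disj _ mem (mul_mem_span_singleton b r)
  · by_contra hx0
    have : (b + ν * c) * (i * x) = 0 := hix
    rw [← mul_assoc, add_mul, hbi, zero_add] at this
    exact hp.mul_scalar_ne_zero he hci hx hx0 this

end HeartElement

omit he in
theorem growsBy_iSup_span (he : IsKummer σ w μ n ζ) {κ : Type*} {e t : κ → R}
    (horth : OrthogonalIdempotents e) (ht0 : ∀ p, t p ≠ 0) (ht : ∀ p, e p * t p = t p)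
    (s : Finset κ) :
    GrowsBy ι U D ⊥ ((⨆ p ∈ s, Rᵐᵒᵖ ∙ t p : RightIdeal R).restrictScalars L) s.card := by
  classical
  induction s using Finset.induction_on with
  | empty => simpa using GrowsBy.zero he bot_le
  | insert k s hk ih =>
    rw [Finset.card_insert_of_notMem hk, Finset.iSup_insert]
    refine ih.trans (hp.growsBy_one he (v := t k) (fun x hx => Submodule.mem_sup_right hx)
      (fun m x hx hxs => ?_) fun x => ?_)
    · by_contra hx0
      refine hp.mul_scalar_ne_zero he (ht0 k) hx hx0 ?_
      have le_ker : (⨆ p ∈ s, Rᵐᵒᵖ ∙ t p) ≤ LinearMap.ker (LinearMap.mulLeft Rᵐᵒᵖ (e k)) := by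
        refine iSup₂_le fun p hp => (Submodule.span_singleton_le_iff_mem _ _).2 ?_
        have hkp : k ≠ p := fun h => hk (h ▸ hp)
        change e k * t p = 0
        rw [← ht p, ← mul_assoc, horth.ortho hkp, zero_mul]
      have : e k * (t k * x) = 0 := le_ker hxs
      rwa [← mul_assoc, ht] at this
    · exact Submodule.mem_sup_left (mul_mem_span_singleton _ x)

omit hp he in
theorem _root_.exists_mem_span_singleton_mul_eq {e b s y₀ : R} {Y : RightIdeal R}
    (he : IsIdempotentElem e) (he0 : e ≠ 0) (hy₀ : y₀ ∈ Y) (hb : b * s + y₀ = 1)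
    (hY : ∀ ν ∈ Y, ν ≠ 0 → ¬ Disjoint (Rᵐᵒᵖ ∙ ν) (Rᵐᵒᵖ ∙ b)) :
    ∃ t ∈ Rᵐᵒᵖ ∙ b, t ≠ 0 ∧ e * t = t := by
  by_cases h0 : y₀ * e = 0
  · refine ⟨e, mem_span_singleton.2 ⟨s * e, ?_⟩, he0, he⟩
    rw [← mul_assoc, eq_sub_of_add_eq hb, sub_mul, h0, one_mul, sub_zero]
  · have := hY _ (mul_mem_right hy₀ e) h0
    rw [Submodule.disjoint_def] at this
    push Not at this
    obtain ⟨x, hxy, hxb, hx0⟩ := this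
    obtain ⟨r, rfl⟩ := mem_span_singleton.1 hxy
    refine ⟨e * r, ?_, fun h => hx0 (by rw [mul_assoc, h, mul_zero]), by rw [← mul_assoc, he]⟩
    have : e * r = b * (s * (e * r)) + y₀ * e * r := by
      rw [← mul_assoc b, mul_assoc y₀, ← add_mul, hb, one_mul]
    rw [this]
    exact add_mem (mul_mem_span_singleton b _) hxb

theorem isLarge_span_singleton {e : Fin n → R} (horth : OrthogonalIdempotents e)
    (he0 : ∀ p, e p ≠ 0) {b s y₀ : R} {Y : RightIdeal R} (hy₀ : y₀ ∈ Y) (hb : b * s + y₀ = 1)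
    (hY : ∀ ν ∈ Y, ν ≠ 0 → ¬ Disjoint (Rᵐᵒᵖ ∙ ν) (Rᵐᵒᵖ ∙ b)) : IsLarge ι U D n (Rᵐᵒᵖ ∙ b) := by
  choose t htb ht0 ht using fun p =>
    exists_mem_span_singleton_mul_eq (horth.idem p) (he0 p) hy₀ hb hY
  have grows := hp.growsBy_iSup_span he horth ht0 ht Finset.univ
  rw [Finset.card_univ, Fintype.card_fin] at grows
  exact IsLarge.mono he grows
    (iSup₂_le fun p _ => (Submodule.span_singleton_le_iff_mem _ _).2 (htb p))

/-- As long as no `(b + y) R` is large, the annihilator of `b + y` can be made smaller and smaller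
by changing `y`, which the growth of `R` bounds. -/
theorem exists_isLarge_span_singleton {N : ℕ} (hU : U ^ N ∈ heart R) {e : Fin n → R}
    (horth : OrthogonalIdempotents e) (he0 : ∀ p, e p ≠ 0) {b s y₀ : R} {Y : RightIdeal R}
    (hy₀ : y₀ ∈ Y) (hb : b * s + y₀ = 1) : ∃ y ∈ Y, IsLarge ι U D n (Rᵐᵒᵖ ∙ (b + y)) := by
  by_contra! hno
  suffices ∀ k, ∃ y ∈ Y, GrowsBy ι U D
      ((LinearMap.ker (LinearMap.mulLeft Rᵐᵒᵖ (b + y))).restrictScalars L) ⊤ k by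
    obtain ⟨y, -, hk⟩ := this (n + 1)
    have := hp.le_of_growsBy he hk
    omega
  intro k
  induction k with
  | zero => exact ⟨0, Y.zero_mem, GrowsBy.zero he le_top⟩
  | succ k ih =>
    obtain ⟨y, hy, hk⟩ := ih
    have hby : (b + y) * s + (y₀ - y * s) = 1 := by rw [add_mul, ← hb]; abel
    have ker_ne : LinearMap.ker (LinearMap.mulLeft Rᵐᵒᵖ (b + y)) ≠ ⊥ := fun h0 =>
      hno y hy (hp.growsBy_of_regular he (v := b + y)
        (fun x hx => (LinearMap.ker_eq_bot'.1 h0) x hx) fun x => mul_mem_span_singleton _ x)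
    obtain ⟨ν, hν, hν0, disj⟩ : ∃ ν ∈ Y, ν ≠ 0 ∧ Disjoint (Rᵐᵒᵖ ∙ ν) (Rᵐᵒᵖ ∙ (b + y)) := by
      by_contra! hY
      exact hno y hy (hp.isLarge_span_singleton he horth he0
        (Y.sub_mem hy₀ (mul_mem_right hy s)) hby hY)
    obtain ⟨c, grows⟩ := hp.exists_growsBy_ker he hU ker_ne hν0 disj
    refine ⟨y + ν * c, Y.add_mem hy (mul_mem_right hν c), ?_⟩
    rw [← add_assoc, add_comm k 1]
    exact grows.trans hk

end IsPBW

end Large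

/-! ### Nonzero two-sided ideals contain powers of the generators -/

section NonzeroIdeals

open Polynomial

variable {L E R : Type*} [Field L] [CommRing E] [Algebra L E] [Ring R] [Algebra L R]
variable {σ : E →ₐ[L] E} {w : E} {μ ε : L} {ι : E →ₐ[L] R} {U D : R} {n : ℕ} {ζ : L}

theorem smul_mem_twoSidedIdeal {P : TwoSidedIdeal R} {x : R} (l : L) (hx : x ∈ P) : l • x ∈ P := by
  rw [Algebra.smul_def]
  exact P.mul_mem_left _ _ hx

theorem mem_twoSidedIdeal_of_smul_mem {P : TwoSidedIdeal R} {x : R} {l : L} (hl : l ≠ 0)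
    (hx : l • x ∈ P) : x ∈ P := by
  simpa [smul_smul, inv_mul_cancel₀ hl] using smul_mem_twoSidedIdeal l⁻¹ hx

theorem mem_twoSidedIdeal_of_mul_mem {P : TwoSidedIdeal R} {x : R} {u : E} (hu : IsUnit u)
    (hx : x * ι u ∈ P) : x ∈ P := by
  obtain ⟨v, hv⟩ := hu.exists_right_inv
  simpa [mul_assoc, ← map_mul, hv] using P.mul_mem_right _ (ι v) hx

namespace IsKummer

theorem root_ne_one (he : IsKummer σ w μ n ζ) (hn : 2 ≤ n) : μ ≠ 1 := by
  rintro rfl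
  have := he.isPrimitiveRoot.eq_orderOf
  rw [orderOf_one] at this
  omega

theorem commCoeff_eq (he : IsKummer σ w μ n ζ) (hn : 2 ≤ n) (m : ℕ) :
    commCoeff w μ ε m
      = (m * μ⁻¹ * μ ^ m : L) • w + algebraMap L E (ε * ((μ ^ m - 1) / (μ - 1))) := by
  have hμ := he.root_ne_zero
  cases m with
  | zero => simp
  | succ m =>
    rw [commCoeff_succ_eq, geom_sum_eq (he.root_ne_one hn)]
    congr 2
    rw [pow_succ']
    field_simp

theorem commCoeff_self (he : IsKummer σ w μ n ζ) (hn : 2 ≤ n) :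
    commCoeff w μ ε n = (n * μ⁻¹ : L) • w := by
  rw [he.commCoeff_eq hn, he.isPrimitiveRoot.pow_eq_one]
  simp

end IsKummer

/-- The exponents of the monomials of `D`-degree less than `k`. -/
def degDLT (k : ℕ) : Set (ℕ × ℕ) := {p | p.2 < k}

theorem mem_degDLT {k : ℕ} {p : ℕ × ℕ} : p ∈ degDLT k ↔ p.2 < k := Iff.rfl

theorem degDLT_mono {k l : ℕ} (h : k ≤ l) : degDLT k ⊆ degDLT l := fun _ hp => lt_of_lt_of_le hp h

theorem U_mul_mem_degDLT {k : ℕ} {x : R} (hx : x ∈ monomialSpan ι U D (degDLT k)) :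
    U * x ∈ monomialSpan ι U D (degDLT k) := by
  suffices monomialSpan ι U D (degDLT k)
      ≤ (monomialSpan ι U D (degDLT k)).comap (LinearMap.mulLeft L U) from this hx
  refine monomialSpan_le fun i j f hij => ?_
  rw [Submodule.mem_comap, LinearMap.mulLeft_apply, ← mul_assoc, ← pow_succ']
  exact monomial_mem_monomialSpan ι U D (i := i + 1) (mem_degDLT.2 hij) f

theorem U_pow_mul_mem_degDLT {k : ℕ} {x : R} (a : ℕ) (hx : x ∈ monomialSpan ι U D (degDLT k)) :
    U ^ a * x ∈ monomialSpan ι U D (degDLT k) := by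
  induction a with
  | zero => simpa using hx
  | succ a ih =>
    rw [pow_succ', mul_assoc]
    exact U_mul_mem_degDLT ih

/-- The coefficients of the commutator with `Uⁿ`, up to lower `D`-degree. -/
def commutatorSymbol (σ : E →ₐ[L] E) (w : E) (κ : L) (a : ℕ) :
    (ℕ × ℕ →₀ E) →ₗ[L] (ℕ × ℕ →₀ E) :=
  Finsupp.lsum L fun p =>
    Finsupp.lsingle (p.1 + a, p.2 - 1) ∘ₗ
      ((p.2 * κ : L) • (LinearMap.mulRight L w ∘ₗ (σ ^ a).toLinearMap))

theorem commutatorSymbol_single (σ : E →ₐ[L] E) (w : E) (κ : L) (a i j : ℕ) (f : E) :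
    commutatorSymbol σ w κ a (Finsupp.single (i, j) f)
      = Finsupp.single (i + a, j - 1) ((j * κ : L) • ((σ ^ a) f * w)) := by
  rw [commutatorSymbol, Finsupp.lsum_single]
  rfl

theorem commutatorSymbol_apply (σ : E →ₐ[L] E) (w : E) (κ : L) (a i j : ℕ) (F : ℕ × ℕ →₀ E) :
    commutatorSymbol σ w κ a F (i + a, j)
      = ((j + 1 : ℕ) * κ : L) • ((σ ^ a) (F (i, j + 1)) * w) := by
  induction F using Finsupp.induction_linear with
  | zero => simp
  | add F G hF hG =>
    rw [map_add, Finsupp.add_apply, hF, hG, Finsupp.add_apply, map_add, add_mul, smul_add]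
  | single p f =>
    obtain ⟨i', j'⟩ := p
    rw [commutatorSymbol_single, Finsupp.single_apply, Finsupp.single_apply]
    by_cases h : (i', j') = (i, j + 1)
    · obtain ⟨rfl, rfl⟩ := Prod.mk.inj h
      simp
    · rw [if_neg h, map_zero, zero_mul, smul_zero]
      refine ite_eq_right_iff.2 fun hij => ?_
      obtain rfl : j' = 0 := by simp only [Prod.mk.injEq] at h hij; omega
      simp

theorem commutatorSymbol_mem_supported (σ : E →ₐ[L] E) (w : E) (κ : L) (a : ℕ) {J : ℕ}
    {F : ℕ × ℕ →₀ E} (hF : F ∈ Finsupp.supported E L (degDLT (J + 2))) :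
    commutatorSymbol σ w κ a F ∈ Finsupp.supported E L (degDLT (J + 1)) := by
  rw [← Finsupp.sum_single F, Finsupp.sum, map_sum]
  refine sum_mem fun ⟨i, j⟩ hp => ?_
  have hj : j < J + 2 := hF hp
  rw [commutatorSymbol_single]
  exact Finsupp.single_mem_supported _ _ (mem_degDLT.2 (by omega))

namespace IsAmbiskew

variable (h : IsAmbiskew σ w μ ε ι U D) (he : IsKummer σ w μ n ζ) (hn : 2 ≤ n)
include h

theorem D_mul_mem_degDLT {k : ℕ} {x : R} (hx : x ∈ monomialSpan ι U D (degDLT k)) :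
    D * x ∈ monomialSpan ι U D (degDLT (k + 1)) := by
  suffices monomialSpan ι U D (degDLT k)
      ≤ (monomialSpan ι U D (degDLT (k + 1))).comap (LinearMap.mulLeft L D) from this hx
  refine monomialSpan_le fun i j f hij => ?_
  rw [mem_degDLT] at hij
  rw [Submodule.mem_comap, LinearMap.mulLeft_apply, h.D_mul_monomial]
  exact add_mem (monomial_mem_monomialSpan _ _ _ (mem_degDLT.2 (by omega)) _)
    (monomial_mem_monomialSpan _ _ _ (mem_degDLT.2 (by omega)) _)

include he

theorem base_mul_U_pow_self (f : E) : ι f * U ^ n = U ^ n * ι f := by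
  rw [h.base_mul_U_pow, he.aut_pow_eq_one, AlgHom.one_apply]

include hn

theorem D_mul_U_pow_self : D * U ^ n = U ^ n * D + U ^ (n - 1) * ι ((n * μ⁻¹ : L) • w) := by
  rw [h.D_mul_U_pow, he.commCoeff_self hn, he.isPrimitiveRoot.pow_eq_one, one_smul]

theorem D_mul_U_pow_pred_mul_weight_sub_mem (l : L) (j : ℕ) :
    D * (U ^ (n - 1) * (ι (l • w) * D ^ j)) - U ^ (n - 1) * (ι (l • w) * D ^ (j + 1))
      ∈ monomialSpan ι U D (degDLT (j + 1)) := by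
  have hμ : μ ^ (n - 1) * μ = 1 := by
    rw [← pow_succ, Nat.sub_add_cancel (by omega), he.isPrimitiveRoot.pow_eq_one]
  have weight_eq : μ ^ (n - 1) • σ (l • w) = l • w := by
    rw [map_smul, h.map_weight, smul_comm, smul_smul _ μ, hμ, one_smul]
  rw [h.D_mul_monomial, weight_eq, add_sub_cancel_left]
  exact monomial_mem_monomialSpan _ _ _ (mem_degDLT.2 (by omega)) _

theorem D_pow_commutator_sub_mem (j : ℕ) :
    D ^ (j + 1) * U ^ n - U ^ n * D ^ (j + 1)
      - U ^ (n - 1) * (ι (((j + 1 : ℕ) * (n * μ⁻¹) : L) • w) * D ^ j)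
      ∈ monomialSpan ι U D (degDLT j) := by
  induction j with
  | zero =>
    rw [zero_add, pow_one, h.D_mul_U_pow_self he hn]
    simp
  | succ j ih =>
    convert add_mem (h.D_mul_mem_degDLT ih) (h.D_mul_U_pow_pred_mul_weight_sub_mem he hn
      ((j + 1 : ℕ) * (n * μ⁻¹) : L) j) using 1
    have scalar : ((j + 1 + 1 : ℕ) * (n * μ⁻¹) : L) = (j + 1 : ℕ) * (n * μ⁻¹) + n * μ⁻¹ := by
      push_cast
      ring
    rw [scalar, mul_sub, mul_sub, ← mul_assoc D (U ^ n), h.D_mul_U_pow_self he hn, add_smul,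
      map_add, add_mul, mul_add, add_mul, pow_succ' D (j + 1)]
    simp only [mul_assoc]
    abel

theorem monomial_commutator_sub_mem (i j : ℕ) (f : E) :
    U ^ i * (ι f * D ^ j) * U ^ n - U ^ n * (U ^ i * (ι f * D ^ j))
      - U ^ (i + (n - 1)) * (ι ((j * (n * μ⁻¹) : L) • ((σ ^ (n - 1)) f * w)) * D ^ (j - 1))
      ∈ monomialSpan ι U D (degDLT (j - 1)) := by
  have hfU := h.base_mul_U_pow_self he f
  have hUU : U ^ n * U ^ i = U ^ i * U ^ n := by rw [← pow_add, ← pow_add, add_comm]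
  cases j with
  | zero =>
    convert zero_mem (monomialSpan ι U D (degDLT 0))
    simp [mul_assoc, hfU, ← mul_assoc _ (U ^ i), hUU]
  | succ j =>
    rw [Nat.add_sub_cancel]
    convert U_pow_mul_mem_degDLT i
      (h.base_mul_mem_monomialSpan f (h.D_pow_commutator_sub_mem he hn j)) using 1
    rw [mul_sub, mul_sub, mul_sub, mul_sub]
    congr 1
    · congr 1
      · simp only [mul_assoc]
      · rw [← mul_assoc, hUU, mul_assoc, ← mul_assoc (U ^ n), ← hfU, mul_assoc]
    · rw [pow_add, mul_assoc, ← mul_assoc (ι f), h.base_mul_U_pow, mul_assoc,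
        ← mul_assoc (ι _), ← map_mul, mul_smul_comm]

theorem commutator_sub_mem {J : ℕ} {F : ℕ × ℕ →₀ E}
    (hF : F ∈ Finsupp.supported E L (degDLT (J + 2))) :
    normalOrder ι U D F * U ^ n - U ^ n * normalOrder ι U D F
        - normalOrder ι U D (commutatorSymbol σ w (n * μ⁻¹) (n - 1) F)
      ∈ monomialSpan ι U D (degDLT J) := by
  let T : (ℕ × ℕ →₀ E) →ₗ[L] R := LinearMap.mulRight L (U ^ n) ∘ₗ normalOrder ι U D
    - LinearMap.mulLeft L (U ^ n) ∘ₗ normalOrder ι U D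
    - normalOrder ι U D ∘ₗ commutatorSymbol σ w (n * μ⁻¹) (n - 1)
  suffices T F ∈ monomialSpan ι U D (degDLT J) from this
  rw [← Finsupp.sum_single F, Finsupp.sum, map_sum]
  refine sum_mem fun ⟨i, j⟩ hp => ?_
  have hj : j < J + 2 := hF hp
  refine monomialSpan_mono _ _ _ (degDLT_mono (show j - 1 ≤ J by omega)) ?_
  simpa [T, commutatorSymbol_single, -Finsupp.single_mul] using
    h.monomial_commutator_sub_mem he hn i j (F (i, j))

theorem exists_normalOrder_mem_of_apply_ne_zero [CharZero L] {P : TwoSidedIdeal R} {i J : ℕ}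
    {F : ℕ × ℕ →₀ E} (hF : F ∈ Finsupp.supported E L (degDLT (J + 2))) (hi : F (i, J + 1) ≠ 0)
    (hFP : normalOrder ι U D F ∈ P) :
    ∃ G ≠ 0, G ∈ Finsupp.supported E L (degDLT (J + 1)) ∧ normalOrder ι U D G ∈ P := by
  obtain ⟨G, hG, hGe⟩ := h.commutator_sub_mem he hn hF
  refine ⟨commutatorSymbol σ w (n * μ⁻¹) (n - 1) F + G, fun h0 => ?_, ?_, ?_⟩
  · have top_eq := DFunLike.congr_fun h0 (i + (n - 1), J)
    have top_G : G (i + (n - 1), J) = 0 :=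
      Finsupp.notMem_support_iff.1 fun hm => lt_irrefl J (mem_degDLT.1 (hG hm))
    rw [Finsupp.add_apply, commutatorSymbol_apply, top_G, add_zero] at top_eq
    refine smul_ne_zero (mul_ne_zero (Nat.cast_ne_zero.2 J.succ_ne_zero)
      (mul_ne_zero (Nat.cast_ne_zero.2 he.pos.ne') (inv_ne_zero he.root_ne_zero))) ?_ top_eq
    rw [Ne, he.isUnit_weight.mul_left_eq_zero]
    exact he.aut_pow_ne_zero _ hi
  · exact add_mem (commutatorSymbol_mem_supported _ _ _ _ hF)
      (Finsupp.supported_mono (degDLT_mono J.le_succ) hG)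
  · rw [map_add, hGe, add_sub_cancel]
    exact P.sub_mem (P.mul_mem_right _ _ hFP) (P.mul_mem_left _ _ hFP)

theorem exists_normalOrder_mem_degDLT_one [CharZero L] {P : TwoSidedIdeal R} {J : ℕ} :
    ∀ F ≠ 0, F ∈ Finsupp.supported E L (degDLT (J + 1)) → normalOrder ι U D F ∈ P →
      ∃ G ≠ 0, G ∈ Finsupp.supported E L (degDLT 1) ∧ normalOrder ι U D G ∈ P := by
  induction J with
  | zero => exact fun F hF0 hF hFP => ⟨F, hF0, hF, hFP⟩
  | succ J ih =>
    intro F hF0 hF hFP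
    by_cases top : ∃ i, F (i, J + 1) ≠ 0
    · obtain ⟨i, hi⟩ := top
      obtain ⟨G, hG0, hG, hGP⟩ := h.exists_normalOrder_mem_of_apply_ne_zero he hn hF hi hFP
      exact ih G hG0 hG hGP
    · push Not at top
      refine ih F hF0 (fun ⟨i, j⟩ hp => ?_) hFP
      have hj : j < J + 2 := hF hp
      have : j ≠ J + 1 := fun hjJ => Finsupp.mem_support_iff.1 hp (hjJ ▸ top i)
      exact mem_degDLT.2 (by omega)

end IsAmbiskew

/-- The trace `∑ σˢ`, over `s < n`, of an endomorphism `σ` of order dividing `n`. -/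
def cyclicTrace (σ : E →ₐ[L] E) (n : ℕ) : E →ₗ[L] E := ∑ s ∈ Finset.range n, (σ ^ s).toLinearMap

theorem cyclicTrace_apply (σ : E →ₐ[L] E) (n : ℕ) (f : E) :
    cyclicTrace σ n f = ∑ s ∈ Finset.range n, (σ ^ s) f := by
  simp [cyclicTrace]

namespace IsKummer

variable (he : IsKummer σ w μ n ζ)
include he

theorem sum_pow_pow_eq_zero {k : ℕ} (hk : μ ^ k ≠ 1) :
    ∑ s ∈ Finset.range n, (μ ^ k) ^ s = 0 := by
  rw [geom_sum_eq hk, ← pow_mul, mul_comm, pow_mul, he.isPrimitiveRoot.pow_eq_one]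
  simp

theorem cyclicTrace_weight_pow (k : ℕ) :
    cyclicTrace σ n (w ^ k) = (∑ s ∈ Finset.range n, (μ ^ k) ^ s) • w ^ k := by
  rw [cyclicTrace_apply, Finset.sum_smul]
  refine Finset.sum_congr rfl fun s _ => ?_
  rw [map_pow, pow_apply_eq_smul he.map_weight, _root_.smul_pow, ← pow_mul, ← pow_mul, mul_comm]

theorem cyclicTrace_weight_pow_eq_zero {k : ℕ} (hk : μ ^ k ≠ 1) : cyclicTrace σ n (w ^ k) = 0 := by
  rw [he.cyclicTrace_weight_pow, he.sum_pow_pow_eq_zero hk, zero_smul]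

theorem cyclicTrace_weight_pow_mem_bot (k : ℕ) :
    cyclicTrace σ n (w ^ k) ∈ (⊥ : Subalgebra L E) := by
  by_cases hk : μ ^ k = 1
  · obtain ⟨m, rfl⟩ := (he.isPrimitiveRoot.pow_eq_one_iff_dvd k).1 hk
    rw [he.cyclicTrace_weight_pow, pow_mul w, he.weight_pow]
    exact Subalgebra.smul_mem _ (pow_mem (Subalgebra.algebraMap_mem _ _) _) _
  · rw [he.cyclicTrace_weight_pow_eq_zero hk]
    exact zero_mem _

theorem exists_cyclicTrace_eq (f : E) : ∃ t : L, cyclicTrace σ n f = algebraMap L E t := by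
  have hf : f ∈ Algebra.adjoin L {w} := he.adjoin_eq_top ▸ Algebra.mem_top
  rw [Algebra.adjoin_singleton_eq_range_aeval] at hf
  obtain ⟨p, rfl⟩ := hf
  suffices cyclicTrace σ n (aeval w p) ∈ (⊥ : Subalgebra L E) by
    obtain ⟨t, ht⟩ := Algebra.mem_bot.1 this
    exact ⟨t, ht.symm⟩
  rw [aeval_eq_sum_range, map_sum]
  refine sum_mem fun k _ => ?_
  rw [map_smul]
  exact Subalgebra.smul_mem _ (he.cyclicTrace_weight_pow_mem_bot k) _

theorem exists_cyclicTrace_mul_weight_pow_ne_zero [CharZero L] {g : E} (hg : g ≠ 0) :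
    ∃ k : ℕ, cyclicTrace σ n (g * w ^ k) ≠ 0 := by
  by_contra! h
  have twisted_sum (k : ℕ) : ∑ s ∈ Finset.range n, (μ ^ s) ^ k • (σ ^ s) g = 0 := by
    have apply_eq (s : ℕ) : (σ ^ s) (g * w ^ k) = ((μ ^ s) ^ k • (σ ^ s) g) * w ^ k := by
      rw [map_mul, map_pow, pow_apply_eq_smul he.map_weight, _root_.smul_pow, mul_smul_comm,
        smul_mul_assoc]
    have hk := h k
    simp only [cyclicTrace_apply, apply_eq, ← Finset.sum_mul] at hk
    exact (he.isUnit_weight.pow k).mul_left_eq_zero.1 hk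
  have double_sum := Finset.sum_eq_zero (s := Finset.range n) fun k _ => twisted_sum k
  rw [Finset.sum_comm, Finset.sum_eq_single_of_mem 0 (Finset.mem_range.2 he.pos)] at double_sum
  · simp only [pow_zero, one_pow, one_smul, AlgHom.one_apply, Finset.sum_const,
      Finset.card_range, ← Nat.cast_smul_eq_nsmul L] at double_sum
    exact smul_ne_zero (Nat.cast_ne_zero.2 he.pos.ne') hg double_sum
  · intro s hs hs0
    rw [← Finset.sum_smul, he.sum_pow_pow_eq_zero, zero_smul]
    exact he.isPrimitiveRoot.pow_ne_one_of_pos_of_lt hs0 (Finset.mem_range.1 hs)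

end IsKummer

theorem normalOrder_eq_sum_of_mem_degDLT_one {F : ℕ × ℕ →₀ E}
    (hF : F ∈ Finsupp.supported E L (degDLT 1)) :
    normalOrder ι U D F = ∑ p ∈ F.support, U ^ p.1 * ι (F p) := by
  conv_lhs => rw [← Finsupp.sum_single F, Finsupp.sum, map_sum]
  refine Finset.sum_congr rfl fun ⟨i, j⟩ hp => ?_
  obtain rfl : j = 0 := Nat.lt_one_iff.1 (mem_degDLT.1 (hF hp))
  simp

/-- Passing to a minimal support: Euler's operator `X f'` has the monomials as eigenvectors, with
distinct eigenvalues. -/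
theorem exists_X_pow_mem [CharZero L] {V : Submodule L L[X]}
    (hV : ∀ f ∈ V, X * derivative f ∈ V) (h0 : V ≠ ⊥) : ∃ t, X ^ t ∈ V := by
  obtain ⟨f₀, hf₀, hne₀⟩ := Submodule.exists_mem_ne_zero_of_ne_bot h0
  obtain ⟨f, ⟨hf, hne⟩, hmin⟩ := exists_minimalFor_of_wellFoundedLT
    (fun f : L[X] => f ∈ V ∧ f ≠ 0) (fun f => f.support.card) ⟨f₀, hf₀, hne₀⟩
  obtain ⟨i, hi⟩ := nonempty_support_iff.2 hne
  let g := X * derivative f - (i : L) • f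
  have coeff_g (k : ℕ) : g.coeff k = ((k : L) - i) * f.coeff k := by
    rcases k with _ | k
    · simp [g]
    · simp only [g, coeff_sub, coeff_X_mul, coeff_derivative, coeff_smul, smul_eq_mul]
      push_cast
      ring
  have support_lt : g.support.card < f.support.card := by
    refine Finset.card_lt_card (Finset.ssubset_iff_of_subset (fun k hk => ?_) |>.2 ⟨i, hi, ?_⟩)
    · rw [mem_support_iff, coeff_g] at hk
      exact mem_support_iff.2 (right_ne_zero_of_mul hk)
    · simp [coeff_g]
  have g_eq_zero : g = 0 := by
    by_contra hg
    exact support_lt.not_ge (hmin ⟨V.sub_mem (hV f hf) (V.smul_mem _ hf), hg⟩ support_lt.le)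
  have coeff_f {k : ℕ} (hk : k ≠ i) : f.coeff k = 0 := by
    have := coeff_g k
    rw [g_eq_zero, coeff_zero, eq_comm, mul_eq_zero, sub_eq_zero, Nat.cast_inj] at this
    exact this.resolve_left hk
  refine ⟨i, ?_⟩
  have X_pow_eq : X ^ i = (f.coeff i)⁻¹ • f := by
    ext k
    rcases eq_or_ne k i with rfl | hk
    · simp [inv_mul_cancel₀ (mem_support_iff.1 hi)]
    · simp [coeff_X_pow, hk, coeff_f hk]
  rw [X_pow_eq]
  exact V.smul_mem _ hf

namespace IsAmbiskew

variable (h : IsAmbiskew σ w μ ε ι U D)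
include h

theorem sum_U_pow_conj {i : ℕ} (g : E) :
    ∑ s ∈ Finset.range n, U ^ (n - s) * (U ^ i * ι g) * U ^ s
      = U ^ (i + n) * ι (cyclicTrace σ n g) := by
  rw [cyclicTrace_apply, map_sum, Finset.mul_sum]
  refine Finset.sum_congr rfl fun s hs => ?_
  have := Finset.mem_range.1 hs
  rw [mul_assoc, mul_assoc, h.base_mul_U_pow, ← mul_assoc, ← mul_assoc, ← pow_add, ← pow_add]
  congr 2
  omega

/-- Averaging over conjugation by powers of `U` makes the coefficients scalar. -/
theorem exists_aeval_U_mem [CharZero L] (he : IsKummer σ w μ n ζ) {P : TwoSidedIdeal R}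
    {F : ℕ × ℕ →₀ E} (hF0 : F ≠ 0) (hF : F ∈ Finsupp.supported E L (degDLT 1))
    (hFP : normalOrder ι U D F ∈ P) : ∃ f : L[X], f ≠ 0 ∧ aeval U f ∈ P := by
  have degD_eq_zero {i j : ℕ} (hp : (i, j) ∈ F.support) : j = 0 :=
    Nat.lt_one_iff.1 (mem_degDLT.1 (hF hp))
  obtain ⟨⟨i₀, j₀⟩, hp₀⟩ := Finsupp.support_nonempty_iff.2 hF0
  obtain rfl := degD_eq_zero hp₀
  obtain ⟨k, hk⟩ := he.exists_cyclicTrace_mul_weight_pow_ne_zero (Finsupp.mem_support_iff.1 hp₀)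
  choose t ht using fun g => he.exists_cyclicTrace_eq (g * w ^ k)
  let f : L[X] := ∑ p ∈ F.support, monomial (p.1 + n) (t (F p))
  have coeff_f : f.coeff (i₀ + n) = t (F (i₀, 0)) := by
    rw [finsetSum_coeff, Finset.sum_eq_single_of_mem _ hp₀, coeff_monomial_same]
    rintro ⟨i, j⟩ hp hne
    obtain rfl := degD_eq_zero hp
    exact coeff_monomial_of_ne _ fun hi => hne (by rw [Nat.add_right_cancel hi])
  have aeval_f : ∑ s ∈ Finset.range n, U ^ (n - s) * (normalOrder ι U D F * ι (w ^ k)) * U ^ s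
      = aeval U f := by
    simp only [normalOrder_eq_sum_of_mem_degDLT_one hF, f, map_sum, Finset.sum_mul,
      Finset.mul_sum]
    rw [Finset.sum_comm]
    refine Finset.sum_congr rfl fun p _ => ?_
    simp only [mul_assoc (U ^ p.1), ← map_mul ι]
    rw [h.sum_U_pow_conj, ht, AlgHom.commutes, aeval_monomial, Algebra.commutes]
  refine ⟨f, fun hf0 => hk ?_, ?_⟩
  · rw [ht, ← coeff_f, hf0, coeff_zero, map_zero]
  · rw [← aeval_f]
    exact sum_mem fun s _ => P.mul_mem_right _ _ (P.mul_mem_left _ _ (P.mul_mem_right _ _ hFP))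

theorem weight_mul_aeval_U (f : L[X]) :
    ι w * aeval U f = aeval U (f.comp (C μ * X)) * ι w := by
  induction f using Polynomial.induction_on' with
  | add p q hp hq => simp only [add_comp, map_add, mul_add, add_mul, hp, hq]
  | monomial m a =>
    simp only [monomial_comp, aeval_monomial, map_mul, map_pow, aeval_C, aeval_X,
      ← Algebra.smul_def, mul_smul_comm, smul_mul_assoc, _root_.smul_pow, h.base_mul_U_pow,
      pow_apply_eq_smul h.map_weight, map_smul, smul_comm a]

theorem U_mul_D_mul_aeval_U (he : IsKummer σ w μ n ζ) (hn : 2 ≤ n) (f : L[X]) :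
    U * (D * aeval U f) = U * (aeval U (f.comp (C μ * X)) * D)
      + μ⁻¹ • (aeval U ((X * derivative f).comp (C μ * X)) * ι w)
      + (ε / (μ - 1)) • (aeval U (f.comp (C μ * X)) - aeval U f) := by
  induction f using Polynomial.induction_on' with
  | add p q hp hq =>
    simp only [add_comp, map_add, mul_add, add_mul, hp, hq, smul_add, smul_sub]
    abel
  | monomial m a =>
    have U_mul : U * (U ^ (m - 1) * ι (commCoeff w μ ε m)) = U ^ m * ι (commCoeff w μ ε m) := by
      rcases m with _ | m
      · simp
      · rw [← mul_assoc, Nat.add_sub_cancel, ← pow_succ']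
    have euler : X * derivative (monomial m a) = monomial m (m * a) := by
      rcases m with _ | m
      · simp
      · rw [derivative_monomial_succ, X_mul_monomial, mul_comm a]
        push_cast
        rfl
    simp only [euler, monomial_comp, aeval_monomial, map_mul, map_pow, aeval_C, aeval_X,
      ← Algebra.smul_def, mul_smul_comm, smul_mul_assoc, _root_.smul_pow, h.D_mul_U_pow, mul_add,
      U_mul]
    rw [he.commCoeff_eq hn, map_add, map_smul, AlgHom.commutes, mul_add, mul_smul_comm,
      ← Algebra.commutes, ← Algebra.smul_def]
    module

theorem aeval_U_X_mul_derivative_mem (he : IsKummer σ w μ n ζ) (hn : 2 ≤ n) {P : TwoSidedIdeal R}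
    {f : L[X]} (hf : aeval U f ∈ P) : aeval U (X * derivative f) ∈ P := by
  have scaled : aeval U (f.comp (C μ * X)) ∈ P := by
    refine mem_twoSidedIdeal_of_mul_mem he.isUnit_weight (ι := ι) ?_
    rw [← h.weight_mul_aeval_U]
    exact P.mul_mem_left _ _ hf
  have identity := h.U_mul_D_mul_aeval_U he hn f
  rw [← h.weight_mul_aeval_U, ← sub_eq_iff_eq_add, ← sub_eq_iff_eq_add'] at identity
  have weight_mul : ι w * aeval U (X * derivative f) ∈ P := by
    refine mem_twoSidedIdeal_of_smul_mem (inv_ne_zero he.root_ne_zero) ?_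
    rw [← identity]
    exact P.sub_mem (P.sub_mem (P.mul_mem_left _ _ (P.mul_mem_left _ _ hf))
      (smul_mem_twoSidedIdeal _ (P.sub_mem scaled hf)))
      (P.mul_mem_left _ _ (P.mul_mem_right _ _ scaled))
  obtain ⟨v, hv⟩ := he.isUnit_weight.exists_left_inv
  simpa [← mul_assoc, ← map_mul, hv] using P.mul_mem_left (ι v) _ weight_mul

theorem exists_U_pow_mem [CharZero L] (he : IsKummer σ w μ n ζ) (hn : 2 ≤ n)
    {P : TwoSidedIdeal R} {f : L[X]} (hf0 : f ≠ 0) (hf : aeval U f ∈ P) : ∃ t, U ^ t ∈ P := by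
  let V : Submodule L L[X] :=
    { carrier := {f | aeval U f ∈ P}
      add_mem' := fun hp hq => by
        rw [Set.mem_ofPred_eq, map_add]
        exact P.add_mem hp hq
      zero_mem' := by
        rw [Set.mem_ofPred_eq, map_zero]
        exact P.zero_mem
      smul_mem' := fun l p hp => by
        rw [Set.mem_ofPred_eq, map_smul]
        exact smul_mem_twoSidedIdeal l hp }
  obtain ⟨t, ht⟩ := exists_X_pow_mem (V := V)
    (fun f hf => h.aeval_U_X_mul_derivative_mem he hn hf) ((Submodule.ne_bot_iff _).2 ⟨f, hf, hf0⟩)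
  exact ⟨t, by simpa [V] using ht⟩

theorem U_pow_mem_of_U_pow_add_mem {P : TwoSidedIdeal R} {N : ℕ}
    (hN : ∀ m, N < m → IsUnit (commCoeff w μ ε m)) (s : ℕ) (hs : U ^ (N + s) ∈ P) :
    U ^ N ∈ P := by
  induction s with
  | zero => exact hs
  | succ s ih =>
    refine ih (mem_twoSidedIdeal_of_mul_mem (hN (N + (s + 1)) (by omega)) (ι := ι) ?_)
    have identity := h.D_mul_U_pow (N + (s + 1))
    rw [← sub_eq_iff_eq_add'] at identity
    rw [show N + s = N + (s + 1) - 1 by omega, ← identity]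
    exact P.sub_mem (P.mul_mem_left _ _ hs) (smul_mem_twoSidedIdeal _ (P.mul_mem_right _ _ hs))

end IsAmbiskew

/-- An algebra homomorphism from a commutative algebra, viewed as taking values in the opposite
ring. -/
def algHomOp (ι : E →ₐ[L] R) : E →ₐ[L] Rᵐᵒᵖ := ι.toOpposite fun x y => by
  rw [Commute, SemiconjBy, ← map_mul, ← map_mul, mul_comm]

@[simp]
theorem algHomOp_apply (ι : E →ₐ[L] R) (f : E) : algHomOp ι f = op (ι f) := rfl

theorem IsAmbiskew.op (h : IsAmbiskew σ w μ ε ι U D) :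
    IsAmbiskew σ w μ ε (algHomOp ι) (op D) (op U) where
  map_weight := h.map_weight
  base_mul_U f := by simp only [algHomOp_apply, ← op_mul, h.D_mul_base]
  D_mul_base f := by simp only [algHomOp_apply, ← op_mul, h.base_mul_U]
  D_mul_U := by simp [← op_mul, h.D_mul_U]

theorem normalOrder_algHomOp (ι : E →ₐ[L] R) (U D : R) (F : ℕ × ℕ →₀ E) :
    normalOrder (algHomOp ι) (op D) (op U) F
      = op (normalOrder ι U D (Finsupp.domLCongr (R := L) (Equiv.prodComm ℕ ℕ) F)) := by
  suffices normalOrder (algHomOp ι) (op D) (op U)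
      = (opLinearEquiv L).toLinearMap ∘ₗ normalOrder ι U D ∘ₗ
        (Finsupp.domLCongr (R := L) (Equiv.prodComm ℕ ℕ)).toLinearMap from
    LinearMap.congr_fun this F
  refine Finsupp.lhom_ext fun ⟨i, j⟩ f => ?_
  simp [mul_assoc]

theorem coe_normalOrder_algHomOp (ι : E →ₐ[L] R) (U D : R) :
    ⇑(normalOrder (algHomOp ι) (op D) (op U))
      = op ∘ normalOrder ι U D ∘ Finsupp.domLCongr (R := L) (Equiv.prodComm ℕ ℕ) :=
  funext (normalOrder_algHomOp ι U D)

namespace IsPBW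

variable (hp : IsPBW σ w μ ε ι U D)
include hp

theorem op : IsPBW σ w μ ε (algHomOp ι) (op D) (op U) where
  toIsAmbiskew := hp.toIsAmbiskew.op
  injective := by
    rw [coe_normalOrder_algHomOp]
    exact op_injective.comp (hp.injective.comp (LinearEquiv.injective _))
  surjective := by
    rw [coe_normalOrder_algHomOp]
    exact op_surjective.comp (hp.surjective.comp (LinearEquiv.surjective _))
  adjoin_eq_top := by
    have preimage_eq : {.op D, .op U} = unop ⁻¹' {U, D} := by
      ext x
      simp [← unop_inj, or_comm]
    rw [preimage_eq, ← Subalgebra.op_adjoin, hp.adjoin_eq_top, Subalgebra.op_top]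

variable [CharZero L] (he : IsKummer σ w μ n ζ) (hn : 2 ≤ n) {N : ℕ}
  (hN : ∀ m, N < m → IsUnit (commCoeff w μ ε m))
include he hn hN

theorem U_pow_mem_of_ne_zero {P : TwoSidedIdeal R} {x : R} (hx : x ∈ P) (hx0 : x ≠ 0) :
    U ^ N ∈ P := by
  obtain ⟨F, rfl⟩ := hp.surjective x
  have hF : F ∈ Finsupp.supported E L (degDLT (F.support.sup Prod.snd + 1)) := fun p hp =>
    mem_degDLT.2 (Nat.lt_succ_of_le (Finset.le_sup (f := Prod.snd) hp))
  obtain ⟨G, hG0, hG, hGP⟩ := hp.exists_normalOrder_mem_degDLT_one he hn F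
    (by rintro rfl; exact hx0 (map_zero _)) hF hx
  obtain ⟨f, hf0, hf⟩ := hp.exists_aeval_U_mem he hG0 hG hGP
  obtain ⟨t, ht⟩ := hp.exists_U_pow_mem he hn hf0 hf
  exact hp.U_pow_mem_of_U_pow_add_mem hN t (pow_add U N t ▸ P.mul_mem_left _ _ ht)

theorem U_pow_mem_heart : U ^ N ∈ heart R := by
  refine mem_heart.2 fun I hI hI0 => ?_
  obtain ⟨x, hx, hx0⟩ := Submodule.exists_mem_ne_zero_of_ne_bot hI0
  exact hI.mem_toTwoSidedIdeal.1 (hp.U_pow_mem_of_ne_zero he hn hN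
    (hI.mem_toTwoSidedIdeal.2 hx) hx0)

theorem D_pow_mem_heart : D ^ N ∈ heart R := by
  refine mem_heart.2 fun I hI hI0 => ?_
  obtain ⟨x, hx, hx0⟩ := Submodule.exists_mem_ne_zero_of_ne_bot hI0
  have := hp.op.U_pow_mem_of_ne_zero he hn hN (P := hI.toTwoSidedIdeal.op) (x := .op x)
    (TwoSidedIdeal.mem_op_iff.2 (hI.mem_toTwoSidedIdeal.2 hx)) ((op_ne_zero_iff _).2 hx0)
  exact hI.mem_toTwoSidedIdeal.1 (TwoSidedIdeal.mem_op_iff.1 this)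

end IsPBW

end NonzeroIdeals

/-! ### Units and idempotents of Kummer type -/

section KummerUnits

variable {L E R : Type*} [Field L] [CommRing E] [Algebra L E] [Ring R] [Algebra L R]
variable {σ : E →ₐ[L] E} {w : E} {μ ε : L} {ι : E →ₐ[L] R} {U D : R} {n : ℕ} {ζ : L}

theorem isUnit_smul_add_algebraMap {w : E} {n : ℕ} {ζ : L} (hw : w ^ n = algebraMap L E ζ)
    {a b : L} (h : (-b) ^ n ≠ a ^ n * ζ) : IsUnit (a • w + algebraMap L E b) := by
  have dvd := sub_dvd_pow_sub_pow (a • w) (algebraMap L E (-b)) n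
  have pow_sub_pow :
      (a • w) ^ n - (algebraMap L E (-b)) ^ n = algebraMap L E (a ^ n * ζ - (-b) ^ n) := by
    rw [_root_.smul_pow, hw, map_sub, map_mul, ← map_pow, Algebra.smul_def]
  rw [pow_sub_pow] at dvd
  simpa using isUnit_of_dvd_unit dvd ((IsUnit.mk0 _ (sub_ne_zero.2 h.symm)).map (algebraMap L E))

/-- The idempotent of `E = L[w]/(wⁿ - ωⁿ)` on which `w` acts as the scalar `ω`. -/
def eigenIdempotent (w : E) (n : ℕ) (ω : L) : E :=
  (n : L)⁻¹ • ∑ s ∈ Finset.range n, (ω⁻¹ • w) ^ s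

section EigenIdempotent

variable {ω ω' : L} (hω : ω ≠ 0) (hw : w ^ n = algebraMap L E (ω ^ n))
include hω hw

theorem weight_mul_eigenIdempotent : w * eigenIdempotent w n ω = ω • eigenIdempotent w n ω := by
  have pow_eq_one : (ω⁻¹ • w) ^ n = 1 := by
    rw [_root_.smul_pow, hw, Algebra.smul_def, ← map_mul, ← mul_pow, inv_mul_cancel₀ hω, one_pow,
      map_one]
  have fixed : ω⁻¹ • w * ∑ s ∈ Finset.range n, (ω⁻¹ • w) ^ s
      = ∑ s ∈ Finset.range n, (ω⁻¹ • w) ^ s := by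
    rw [← sub_eq_zero, ← sub_one_mul, mul_geom_sum, pow_eq_one, sub_self]
  rw [eigenIdempotent, mul_smul_comm, smul_comm]
  conv_rhs => rw [← fixed, smul_mul_assoc, smul_inv_smul₀ hω]

theorem isIdempotentElem_eigenIdempotent (hn : (n : L) ≠ 0) :
    IsIdempotentElem (eigenIdempotent w n ω) := by
  have pow_mul (s : ℕ) :
      (ω⁻¹ • w) ^ s * eigenIdempotent w n ω = eigenIdempotent w n ω := by
    induction s with
    | zero => simp
    | succ s ih =>
      rw [pow_succ, mul_assoc, smul_mul_assoc, weight_mul_eigenIdempotent hω hw,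
        inv_smul_smul₀ hω, ih]
  rw [IsIdempotentElem]
  conv_lhs => rw [eigenIdempotent.eq_1 w n ω, smul_mul_assoc, ← eigenIdempotent.eq_1 w n ω,
    Finset.sum_mul, Finset.sum_congr rfl fun s _ => pow_mul s]
  rw [Finset.sum_const, Finset.card_range, ← Nat.cast_smul_eq_nsmul L, inv_smul_smul₀ hn]

theorem eigenIdempotent_mul_of_ne (hω' : ω' ≠ 0) (hw' : w ^ n = algebraMap L E (ω' ^ n))
    (hne : ω ≠ ω') : eigenIdempotent w n ω * eigenIdempotent w n ω' = 0 := by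
  have eigenvalues_eq : ω • (eigenIdempotent w n ω * eigenIdempotent w n ω')
      = ω' • (eigenIdempotent w n ω * eigenIdempotent w n ω') := by
    rw [← smul_mul_assoc, ← weight_mul_eigenIdempotent hω hw, mul_comm w, mul_assoc,
      weight_mul_eigenIdempotent hω' hw', mul_smul_comm]
  rw [← sub_eq_zero, ← sub_smul] at eigenvalues_eq
  exact (smul_eq_zero.1 eigenvalues_eq).resolve_left (sub_ne_zero.2 hne)

end EigenIdempotent

namespace IsKummer

variable (he : IsKummer σ w μ n ζ)
include he

theorem isUnit_commCoeff (hn : 2 ≤ n) {m : ℕ}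
    (h : (-(ε * ((μ ^ m - 1) / (μ - 1)))) ^ n ≠ (m : L) ^ n * ζ) :
    IsUnit (commCoeff w μ ε m) := by
  rw [he.commCoeff_eq hn]
  refine isUnit_smul_add_algebraMap he.weight_pow ?_
  rw [mul_pow, mul_pow, inv_pow, ← pow_mul, mul_comm m n, pow_mul, he.isPrimitiveRoot.pow_eq_one]
  simpa using h

variable [CharZero L]

theorem exists_forall_lt_isUnit_commCoeff (hn : 2 ≤ n) (ε : L) :
    ∃ N, ∀ m, N < m → IsUnit (commCoeff w μ ε m) := by
  classical
  let values : Finset L :=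
    (Finset.range n).image fun r => (-(ε * ((μ ^ r - 1) / (μ - 1)))) ^ n
  have injective : Function.Injective fun m : ℕ => (m : L) ^ n * ζ := fun a b hab => by
    have : a ^ n = b ^ n := by exact_mod_cast mul_right_cancel₀ he.ne_zero hab
    exact Nat.pow_left_injective he.pos.ne' this
  obtain ⟨N, hN⟩ := (values.finite_toSet.preimage injective.injOn).bddAbove
  refine ⟨N, fun m hm => he.isUnit_commCoeff hn fun h => hm.not_ge (hN ?_)⟩
  -- The left-hand side of `h` depends only on the class of `m` modulo `n`.
  refine Finset.mem_image.2 ⟨m % n, Finset.mem_range.2 (Nat.mod_lt _ he.pos), ?_⟩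
  change _ = (m : L) ^ n * ζ
  rw [← h, ← pow_eq_pow_mod m he.isPrimitiveRoot.pow_eq_one]

theorem cyclicTrace_eigenIdempotent (ω : L) :
    cyclicTrace σ n (eigenIdempotent w n ω) = 1 := by
  have hn : (n : L) ≠ 0 := Nat.cast_ne_zero.2 he.pos.ne'
  have trace_pow (s : ℕ) (hs : s ∈ Finset.range n) (hs0 : s ≠ 0) :
      cyclicTrace σ n ((ω⁻¹ • w) ^ s) = 0 := by
    rw [_root_.smul_pow, map_smul, he.cyclicTrace_weight_pow_eq_zero, smul_zero]
    exact he.isPrimitiveRoot.pow_ne_one_of_pos_of_lt hs0 (Finset.mem_range.1 hs)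
  rw [eigenIdempotent, map_smul, map_sum,
    Finset.sum_eq_single_of_mem 0 (Finset.mem_range.2 he.pos) trace_pow, pow_zero,
    cyclicTrace_apply]
  simp only [map_one, Finset.sum_const, Finset.card_range]
  rw [← Nat.cast_smul_eq_nsmul L, inv_smul_smul₀ hn]

theorem eigenIdempotent_ne_zero (ω : L) : eigenIdempotent w n ω ≠ 0 := fun h => by
  have := he.nontrivial
  simpa [h] using he.cyclicTrace_eigenIdempotent ω

theorem orthogonalIdempotents_eigenIdempotent {ω : L} (hω : ω ^ n = ζ) :
    OrthogonalIdempotents fun p : Fin n => eigenIdempotent w n (ω * μ ^ (p : ℕ)) := by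
  have hω0 : ω ≠ 0 := fun h => he.ne_zero (by rw [← hω, h, zero_pow he.pos.ne'])
  have ne_zero (p : Fin n) : ω * μ ^ (p : ℕ) ≠ 0 := mul_ne_zero hω0 (pow_ne_zero _ he.root_ne_zero)
  have weight_pow (p : Fin n) : w ^ n = algebraMap L E ((ω * μ ^ (p : ℕ)) ^ n) := by
    rw [mul_pow, hω, ← pow_mul, mul_comm (p : ℕ), pow_mul, he.isPrimitiveRoot.pow_eq_one, one_pow,
      mul_one, he.weight_pow]
  refine ⟨fun p => isIdempotentElem_eigenIdempotent (ne_zero p) (weight_pow p)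
    (Nat.cast_ne_zero.2 he.pos.ne'), fun p q hpq => ?_⟩
  refine eigenIdempotent_mul_of_ne (ne_zero p) (weight_pow p) (ne_zero q) (weight_pow q) fun h => ?_
  exact hpq (Fin.ext (he.isPrimitiveRoot.pow_inj p.2 q.2 (mul_left_cancel₀ hω0 h)))

end IsKummer

namespace IsPBW

variable (hp : IsPBW σ w μ ε ι U D) (he : IsKummer σ w μ n ζ)
include hp

theorem base_injective : Function.Injective ι := fun x y hxy =>
  Finsupp.single_injective ((0, 0) : ℕ × ℕ) (hp.injective (by simp [hxy]))

include he

theorem exists_orthogonalIdempotents [CharZero L] {ω : L} (hω : ω ^ n = ζ) :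
    ∃ e : Fin n → R, OrthogonalIdempotents e ∧ ∀ p, e p ≠ 0 := by
  refine ⟨_, (he.orthogonalIdempotents_eigenIdempotent hω).map ι.toRingHom, fun p => ?_⟩
  exact (map_ne_zero_iff ι hp.base_injective).2 (he.eigenIdempotent_ne_zero _)

theorem exists_pow_mem_heart [CharZero L] (hn : 2 ≤ n) :
    ∃ N, U ^ N ∈ heart R ∧ D ^ N ∈ heart R := by
  obtain ⟨N, hN⟩ := he.exists_forall_lt_isUnit_commCoeff hn ε
  exact ⟨N, hp.U_pow_mem_heart he hn hN, hp.D_pow_mem_heart he hn hN⟩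

theorem heart_eq_top [CharZero L] (hn : 2 ≤ n)
    (h : ∀ m : ℕ, 0 < m → IsUnit (commCoeff w μ ε m)) : heart R = ⊤ := by
  have one_mem := hp.U_pow_mem_heart he hn h
  rw [pow_zero] at one_mem
  exact eq_top_iff.2 fun x _ => by simpa using mul_mem_right one_mem x

theorem finite_of_map_pow_eq_zero {Q : Type*} [Ring Q] [Algebra L Q] {π : R →ₐ[L] Q}
    (hπ : Function.Surjective π) {N : ℕ} (hU : π (U ^ N) = 0) (hD : π (D ^ N) = 0) :
    Module.Finite L Q := by
  have := he.finite_degreeLE ι U D (2 * N)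
  suffices Function.Surjective (π.toLinearMap ∘ₗ (degreeLE ι U D (2 * N)).subtype) from
    Module.Finite.of_surjective _ this
  rw [← LinearMap.range_eq_top, LinearMap.range_comp, Submodule.range_subtype, eq_top_iff]
  rintro q -
  obtain ⟨r, rfl⟩ := hπ q
  obtain ⟨F, rfl⟩ := hp.surjective r
  induction F using Finsupp.induction_linear with
  | zero => simp
  | add f g hf hg =>
    rw [map_add, map_add]
    exact add_mem hf hg
  | single a f =>
    obtain ⟨i, j⟩ := a
    rw [normalOrder_single]
    by_cases hij : N ≤ i ∨ N ≤ j
    · have map_eq_zero : π (U ^ i * (ι f * D ^ j)) = 0 := by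
        rcases hij with hi | hj
        · rw [map_mul, ← Nat.add_sub_cancel' hi, pow_add, map_mul π (U ^ N), hU, zero_mul, zero_mul]
        · rw [← Nat.sub_add_cancel hj, pow_add, ← mul_assoc, ← mul_assoc, map_mul π _ (D ^ N), hD,
            mul_zero]
      rw [map_eq_zero]
      exact zero_mem _
    · push Not at hij
      exact ⟨_, monomial_mem_triangle ι U D (by omega) f, rfl⟩

end IsPBW

end KummerUnits

/-! ### Unimodular pairs over integral algebras -/

section IntegralAlgebra

open Polynomial

variable {R S : Type*} [CommRing R]

/-- Writing `scaleRoots χ a` at `b` as `a ^ n * χ (b / a)`, this says that a non-constant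
Möbius transformation takes each value at most once. -/
theorem finite_setOf_eval_scaleRoots_eq_zero [IsDomain R] {χ : R[X]} (hχ : χ.Monic)
    {a b c d : R} (h : a * d - b * c ≠ 0) :
    {e : R | (scaleRoots χ (a * e + b)).eval (c * e + d) = 0}.Finite := by
  let F := FractionRing R
  have injective : Function.Injective (algebraMap R F) := IsFractionRing.injective R F
  have denominator_ne_zero (e : R) (he : (scaleRoots χ (a * e + b)).eval (c * e + d) = 0) :
      a * e + b ≠ 0 := fun h0 => by
    rw [h0, scaleRoots_zero, hχ.leadingCoeff] at he
    have hb : c * e + d = 0 := (by simpa using he : c * e + d = 0 ∧ _).1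
    exact h (by linear_combination a * hb - c * h0)
  refine Set.Finite.of_injOn (f := fun e => algebraMap R F (c * e + d) / algebraMap R F (a * e + b))
    (t := χ.rootSet F) ?_ ?_ (χ.rootSet_finite F)
  · intro e he
    have ne_zero := (map_ne_zero_iff _ injective).2 (denominator_ne_zero e he)
    refine (mem_rootSet_of_ne hχ.ne_zero).2 ?_
    have := scaleRoots_eval₂_mul (p := χ) (algebraMap R F)
      (algebraMap R F (c * e + d) / algebraMap R F (a * e + b)) (a * e + b)
    rw [mul_div_cancel₀ _ ne_zero, eval₂_hom, he, map_zero] at this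
    exact (mul_eq_zero.1 this.symm).resolve_left (pow_ne_zero _ ne_zero)
  · intro e he e' he' heq
    have ne_zero (x) (hx : (scaleRoots χ (a * x + b)).eval (c * x + d) = 0) :=
      (map_ne_zero_iff (algebraMap R F) injective).2 (denominator_ne_zero x hx)
    have cross : (c * e + d) * (a * e' + b) = (c * e' + d) * (a * e + b) := by
      apply injective
      simpa only [map_mul] using (div_eq_div_iff (ne_zero e he) (ne_zero e' he')).1 heq
    exact mul_left_cancel₀ h (by linear_combination -cross)

variable [Ring S] [Algebra R S]

theorem exists_mul_eq_algebraMap_eval_scaleRoots {m : S} {χ : R[X]} (hm : aeval m χ = 0)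
    (a b : R) :
    ∃ v, (a • m + algebraMap R S b) * v = algebraMap R S ((scaleRoots χ a).eval (-b)) ∧
      v * (a • m + algebraMap R S b) = algebraMap R S ((scaleRoots χ a).eval (-b)) := by
  have root : aeval (a • m) (scaleRoots χ a) = 0 := by
    rw [Algebra.smul_def, aeval_def,
      scaleRoots_eval₂_mul_of_commute _ _ _ (Algebra.commutes _ _) fun _ _ =>
        Algebra.commutes _ _, ← aeval_def, hm, mul_zero]
  obtain ⟨q, hq⟩ := X_sub_C_dvd_sub_C_eval (a := -b) (p := scaleRoots χ a)
  have left := congrArg (aeval (a • m)) hq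
  have right := congrArg (aeval (a • m)) (hq.trans (mul_comm _ q))
  simp only [map_neg, sub_neg_eq_add, map_sub, map_add, map_mul, aeval_X, aeval_C, root,
    zero_sub] at left right
  exact ⟨-aeval (a • m) q, by rw [mul_neg, ← left, neg_neg], by rw [neg_mul, ← right, neg_neg]⟩

variable [IsDomain R] [Infinite R]

theorem exists_mul_add_mul_eq_algebraMap (h_integral : ∀ x : S, IsIntegral R x) {b s y : S}
    (h : b * s + y = 1) :
    ∃ (u v t : S) (f p : R), f ≠ 0 ∧ p ≠ 0 ∧ b * u + y * t = algebraMap R S p ∧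
      v * u = algebraMap R S f * t := by
  obtain ⟨χs, monic_s, root_s⟩ := h_integral s
  obtain ⟨χb, monic_b, root_b⟩ := h_integral b
  have finite_b := finite_setOf_eval_scaleRoots_eq_zero monic_b (a := 1) (b := 0) (c := 0) (d := -1)
    (by simp)
  have finite_s := finite_setOf_eval_scaleRoots_eq_zero monic_s (a := 0) (b := 1) (c := -1) (d := 0)
    (by simp)
  obtain ⟨τ, hτ⟩ := (finite_b.union finite_s).exists_notMem
  simp only [Set.mem_union, Set.mem_ofPred_eq, not_or, one_mul, zero_mul, add_zero, zero_add,
    neg_one_mul] at hτ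
  obtain ⟨v, -, hv⟩ := exists_mul_eq_algebraMap_eval_scaleRoots root_s 1 τ
  obtain ⟨t, ht, -⟩ := exists_mul_eq_algebraMap_eval_scaleRoots root_b τ 1
  refine ⟨(s + algebraMap R S τ) * t, v, t, _, _, hτ.2, hτ.1, ?_, ?_⟩
  · rw [← ht, ← mul_assoc, ← add_mul, mul_add, add_right_comm, h, map_one, Algebra.smul_def,
      ← Algebra.commutes, add_comm]
  · rw [← mul_assoc, ← hv, one_smul]

theorem exists_add_mul_mul_eq_algebraMap (h_integral : ∀ x : S, IsIntegral R x) {b s y : S}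
    (h : b * s + y = 1) :
    ∃ (t u : S) (p : R), p ≠ 0 ∧ (b + y * t) * u = algebraMap R S p := by
  obtain ⟨u, v, t, f, p, hf, hp, hu, hv⟩ := exists_mul_add_mul_eq_algebraMap h_integral h
  obtain ⟨χ, monic, root⟩ := h_integral (b * u)
  obtain ⟨e, he⟩ := (finite_setOf_eval_scaleRoots_eq_zero monic (a := -f) (b := 1) (c := -(f * p))
    (d := 0) (by simp [hf, hp])).exists_notMem
  obtain ⟨z, hz, -⟩ :=
    exists_mul_eq_algebraMap_eval_scaleRoots root (-f * e + 1) (f * p * e)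
  replace he : (scaleRoots χ (-f * e + 1)).eval (-(f * p * e)) ≠ 0 := fun h0 => he <| by
    rwa [Set.mem_ofPred_eq, add_zero, neg_mul]
  refine ⟨algebraMap R S e * v, u * z, _, he, ?_⟩
  rw [← hz, ← mul_assoc]
  congr 1
  have central := Algebra.commutes (e * f) y
  calc (b + y * (algebraMap R S e * v)) * u
      = b * u + y * (algebraMap R S e * (v * u)) := by noncomm_ring
    _ = b * u + algebraMap R S (e * f) * (y * t) := by
        rw [hv, ← mul_assoc (algebraMap R S e), ← map_mul, ← mul_assoc y, ← central, mul_assoc]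
    _ = b * u + algebraMap R S (e * f) * (algebraMap R S p - b * u) := by
        rw [← hu, add_sub_cancel_left]
    _ = (-f * e + 1) • (b * u) + algebraMap R S (f * p * e) := by
        rw [mul_sub, ← map_mul, ← Algebra.smul_def, neg_mul, add_smul, neg_smul, one_smul,
          mul_comm f e, mul_right_comm f p e, mul_comm f e]
        abel

end IntegralAlgebra

/-! ### Algebras finite over the image of a polynomial ring -/

section FiniteOverMvPolynomial

open MvPolynomial

variable {K Q Q' : Type*} [Field K] [Ring Q] [Algebra K Q] [Ring Q'] [Algebra K Q'] {s : ℕ}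

theorem not_injective_algHom_quotient_mvPolynomial {I : Ideal (MvPolynomial (Fin s) K)}
    (hI : I ≠ ⊥) (g : MvPolynomial (Fin s) K →ₐ[K] MvPolynomial (Fin s) K ⧸ I) :
    ¬ Function.Injective g := fun hg => by
  obtain ⟨f, hfI, hf⟩ := Submodule.exists_mem_ne_zero_of_ne_bot hI
  choose x hx using fun i => Ideal.Quotient.mkₐ_surjective K I (g (X i))
  have lift : (Ideal.Quotient.mkₐ K I).comp (aeval x) = g := algHom_ext fun i => by
    rw [AlgHom.comp_apply, aeval_X, hx]
  have independent : AlgebraicIndependent K x := by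
    refine Function.Injective.of_comp (f := Ideal.Quotient.mkₐ K I) ?_
    rwa [← lift, AlgHom.coe_comp] at hg
  have basis : IsTranscendenceBasis K x :=
    AlgebraicIndependent.isTranscendenceBasis_of_lift_trdeg_le_of_finite independent (by simp)
  have := basis.isAlgebraic
  obtain ⟨⟨r, hr⟩, hr0, hdvd⟩ := (Algebra.IsAlgebraic.isAlgebraic
    (R := Algebra.adjoin K (Set.range x)) f).exists_nonzero_dvd (mem_nonZeroDivisors_of_ne_zero hf)
  obtain ⟨p, hp : aeval x p = r⟩ := (Algebra.adjoin_range_eq_range_aeval K x).le hr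
  have : g p = 0 := by
    rw [← lift, AlgHom.comp_apply, hp]
    exact Ideal.Quotient.eq_zero_iff_mem.2 (I.mem_of_dvd hdvd hfI)
  refine hr0 (Subtype.ext ?_)
  change r = 0
  rw [← hp, (map_eq_zero_iff g hg).1 this, map_zero]

/-- The `K`-algebra `Q` is finite over the image of a homomorphism from the polynomial ring in
`s` variables to the centre of `Q`. -/
def IsFiniteOverMvPolynomial (K Q : Type*) [Field K] [Ring Q] [Algebra K Q] (s : ℕ) : Prop :=
  ∃ _ : Algebra (MvPolynomial (Fin s) K) Q,
    IsScalarTower K (MvPolynomial (Fin s) K) Q ∧ Module.Finite (MvPolynomial (Fin s) K) Q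

namespace IsFiniteOverMvPolynomial

theorem of_finite {R : Type*} [CommRing R] [Algebra K R] [Algebra R Q] [IsScalarTower K R Q]
    [Module.Finite R Q] {φ : MvPolynomial (Fin s) K →ₐ[K] R} (hφ : φ.Finite) :
    IsFiniteOverMvPolynomial K Q s := by
  let := φ.toRingHom.toAlgebra
  let := Algebra.compHom Q φ.toRingHom
  have : IsScalarTower (MvPolynomial (Fin s) K) R Q := IsScalarTower.of_algebraMap_eq fun _ => rfl
  have tower : IsScalarTower K (MvPolynomial (Fin s) K) Q :=
    IsScalarTower.of_algebraMap_eq fun r => by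
      rw [IsScalarTower.algebraMap_apply K R Q, ← φ.commutes]
      rfl
  have : Module.Finite (MvPolynomial (Fin s) K) R := hφ
  exact ⟨_, tower, Module.Finite.trans R Q⟩

theorem of_finite_quotient_ker {P : Type*} [CommRing P] [Algebra K P] [Algebra P Q]
    [IsScalarTower K P Q] [Module.Finite P Q]
    {φ : MvPolynomial (Fin s) K →ₐ[K] P ⧸ RingHom.ker (algebraMap P Q)} (hφ : φ.Finite) :
    IsFiniteOverMvPolynomial K Q s := by
  let lift := Ideal.Quotient.lift (RingHom.ker (algebraMap P Q)) (algebraMap P Q) fun _ hp => hp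
  let : Algebra (P ⧸ RingHom.ker (algebraMap P Q)) Q :=
    lift.toAlgebra' (Ideal.Quotient.mk_surjective.forall.2 Algebra.commutes)
  have : IsScalarTower P (P ⧸ RingHom.ker (algebraMap P Q)) Q :=
    IsScalarTower.of_algebraMap_eq fun _ => rfl
  have : IsScalarTower K (P ⧸ RingHom.ker (algebraMap P Q)) Q :=
    IsScalarTower.of_algebraMap_eq fun r => by
      rw [IsScalarTower.algebraMap_apply K P Q]
      rfl
  have : Module.Finite (P ⧸ RingHom.ker (algebraMap P Q)) Q :=
    Module.Finite.of_restrictScalars_finite P _ _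
  exact of_finite hφ

end IsFiniteOverMvPolynomial

theorem exists_finite_algHom_quotient_mvPolynomial {I : Ideal (MvPolynomial (Fin (s + 1)) K)}
    (hI : I ≠ ⊥) :
    ∃ g : MvPolynomial (Fin s) K →ₐ[K] MvPolynomial (Fin (s + 1)) K ⧸ I, g.Finite := by
  rcases eq_or_ne I ⊤ with rfl | h_top
  · have := Ideal.Quotient.subsingleton_iff.2 (rfl : (⊤ : Ideal (MvPolynomial (Fin (s + 1)) K)) = ⊤)
    refine ⟨aeval 0, RingHom.Finite.of_surjective _ fun x => ⟨0, Subsingleton.elim _ _⟩⟩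
  obtain ⟨t, ht, g, g_injective, g_integral⟩ := exists_integral_inj_algHom_of_quotient I h_top
  have t_le : t ≤ s := by
    by_contra! h
    obtain rfl : t = s + 1 := by omega
    exact not_injective_algHom_quotient_mvPolynomial hI g g_injective
  have g_finite : g.Finite := by
    refine g_integral.to_finite (RingHom.FiniteType.of_comp_finiteType (f := C) ?_)
    have : (g : MvPolynomial (Fin t) K →+* MvPolynomial (Fin (s + 1)) K ⧸ I).comp C =
        algebraMap K _ := g.comp_algebraMap
    exact this ▸ RingHom.finiteType_algebraMap.2 inferInstance
  let restrict : MvPolynomial (Fin s) K →ₐ[K] MvPolynomial (Fin t) K :=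
    killCompl (Fin.castLE_injective t_le)
  refine ⟨g.comp restrict, g_finite.comp (AlgHom.Finite.of_surjective _ ?_)⟩
  exact fun p => ⟨rename _ p, killCompl_rename_app _ p⟩

theorem IsFiniteOverMvPolynomial.of_algebraMap_eq_zero [Algebra (MvPolynomial (Fin (s + 1)) K) Q]
    [IsScalarTower K (MvPolynomial (Fin (s + 1)) K) Q]
    [Module.Finite (MvPolynomial (Fin (s + 1)) K) Q]
    {p : MvPolynomial (Fin (s + 1)) K} (hp : p ≠ 0)
    (h : algebraMap (MvPolynomial (Fin (s + 1)) K) Q p = 0) : IsFiniteOverMvPolynomial K Q s := by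
  have ker_ne_bot : RingHom.ker (algebraMap (MvPolynomial (Fin (s + 1)) K) Q) ≠ ⊥ := fun hI =>
    hp (by rwa [← Ideal.mem_bot, ← hI])
  obtain ⟨g, hg⟩ := exists_finite_algHom_quotient_mvPolynomial ker_ne_bot
  exact of_finite_quotient_ker hg

theorem exists_finite_algebra_of_surjective {P : Type*} [CommRing P] [Algebra K P] [Algebra P Q]
    [IsScalarTower K P Q] [Module.Finite P Q] {π : Q →ₐ[K] Q'} (hπ : Function.Surjective π) :
    ∃ _ : Algebra P Q', IsScalarTower K P Q' ∧ Module.Finite P Q' ∧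
      ∀ p : P, algebraMap P Q' p = π (algebraMap P Q p) := by
  let : Algebra P Q' := ((π : Q →+* Q').comp (algebraMap P Q)).toAlgebra' fun p =>
    hπ.forall.2 fun x => by
      rw [RingHom.comp_apply, RingHom.coe_coe, ← map_mul, Algebra.commutes, map_mul]
  have tower : IsScalarTower K P Q' := IsScalarTower.of_algebraMap_eq fun r => by
    rw [← π.commutes, IsScalarTower.algebraMap_apply K P Q]
    rfl
  let π' : Q →ₐ[P] Q' := { (π : Q →+* Q') with commutes' := fun _ => rfl }
  exact ⟨_, tower, Module.Finite.of_surjective π'.toLinearMap hπ, fun _ => rfl⟩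

theorem finite_of_span_pow_mul_pow_eq_top {R : Type*} [CommRing R] [Algebra R Q] {u d : Q}
    (hu : IsIntegral R u) (hd : IsIntegral R d)
    (h : Submodule.span R (Set.range fun a : ℕ × ℕ => u ^ a.1 * d ^ a.2) = ⊤) :
    Module.Finite R Q := by
  have fg := hu.fg_adjoin_singleton.mul hd.fg_adjoin_singleton
  have le := Submodule.span_le.2 <| Set.range_subset_iff.2 fun a : ℕ × ℕ =>
    Submodule.mul_mem_mul
      ((Subalgebra.mem_toSubmodule _).2 (pow_mem (Algebra.self_mem_adjoin_singleton R u) a.1))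
      ((Subalgebra.mem_toSubmodule _).2 (pow_mem (Algebra.self_mem_adjoin_singleton R d) a.2))
  rw [h, top_le_iff] at le
  exact ⟨le ▸ fg⟩

end FiniteOverMvPolynomial

section Quotient

universe u

variable {K : Type*} {A : Type u} [Field K] [Ring A] [Algebra K A]

namespace RightIdeal

/-- The kernel of a ring homomorphism, as a right ideal. -/
def ker {B : Type*} [Ring B] (f : A →+* B) : RightIdeal A where
  carrier := {x | f x = 0}
  zero_mem' := map_zero f
  add_mem' {x y} hx hy := by
    rw [Set.mem_ofPred_eq] at *
    rw [map_add, hx, hy, add_zero]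
  smul_mem' r x hx := by
    rw [Set.mem_ofPred_eq] at *
    rw [MulOpposite.smul_eq_mul_unop, map_mul, hx, zero_mul]

@[simp]
theorem mem_ker {B : Type*} [Ring B] {f : A →+* B} {x : A} : x ∈ ker f ↔ f x = 0 := Iff.rfl

end RightIdeal

variable (K) in
theorem exists_algHom_ker_eq {I : RightIdeal A} (hI : IsTwoSided I) :
    ∃ (Q : Type u) (_ : Ring Q) (_ : Algebra K Q) (π : A →ₐ[K] Q),
      Function.Surjective π ∧ ker (π : A →+* Q) = I := by
  let J : Ideal A := { I.toAddSubmonoid with smul_mem' := fun r x hx => hI r x hx }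
  have : J.IsTwoSided := ⟨fun {a} b (ha : a ∈ I) => mul_mem_right ha b⟩
  refine ⟨A ⧸ J, inferInstance, inferInstance, Ideal.Quotient.mkₐ K J,
    Ideal.Quotient.mkₐ_surjective K J, Submodule.ext fun x => ?_⟩
  exact Ideal.Quotient.eq_zero_iff_mem

variable (K) in
/-- The right ideal `N` is two-sided and `A ⧸ N` is finite over the image of a homomorphism from the
polynomial ring in `s` variables to its centre. Thus `s` bounds the dimension of `A ⧸ N`. -/
def IsFiniteModulo (N : RightIdeal A) (s : ℕ) : Prop :=
  ∃ (Q : Type u) (_ : Ring Q) (_ : Algebra K Q) (π : A →ₐ[K] Q),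
    Function.Surjective π ∧ ker (π : A →+* Q) = N ∧ IsFiniteOverMvPolynomial K Q s

theorem exists_le_span_singleton_add_sup {B R : Type*} [Ring B] [CommRing R] [IsDomain R]
    [Infinite R] [Algebra R B] [Module.Finite R B] {π : A →+* B} (hπ : Function.Surjective π)
    {Y : RightIdeal A} {b r y₀ : A} (hy₀ : y₀ ∈ Y) (h : b * r + y₀ = 1) :
    ∃ y ∈ Y, ∃ p : R, p ≠ 0 ∧
      ∀ x q, π x = algebraMap R B p * q → x ∈ (Aᵐᵒᵖ ∙ (b + y)) ⊔ ker π := by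
  obtain ⟨t, u, p, hp, hu⟩ := exists_add_mul_mul_eq_algebraMap
    (fun x : B => IsIntegral.of_finite R x) (b := π b) (s := π r) (y := π y₀)
    (by rw [← map_mul, ← map_add, h, map_one])
  obtain ⟨t, rfl⟩ := hπ t
  obtain ⟨u, rfl⟩ := hπ u
  refine ⟨y₀ * t, mul_mem_right hy₀ t, p, hp, fun x q hx => ?_⟩
  obtain ⟨q, rfl⟩ := hπ q
  rw [← add_sub_cancel ((b + y₀ * t) * (u * q)) x]
  refine Submodule.add_mem_sup (mul_mem_span_singleton _ _) ?_
  rw [mem_ker, map_sub, hx, ← hu]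
  simp only [map_mul, map_add, mul_assoc, sub_self]

namespace IsFiniteModulo

variable {N Y : RightIdeal A} {b r y₀ : A}

theorem exists_le_of_succ {s : ℕ} (hN : IsFiniteModulo K N (s + 1)) (hy₀ : y₀ ∈ Y)
    (h : b * r + y₀ = 1) :
    ∃ y ∈ Y, ∃ N', N ≤ N' ∧ N' ≤ (Aᵐᵒᵖ ∙ (b + y)) ⊔ N ∧ IsFiniteModulo K N' s := by
  obtain ⟨Q, _, _, π, hπ, rfl, _, _, _⟩ := hN
  obtain ⟨y, hy, p, hp, le⟩ :=
    exists_le_span_singleton_add_sup (R := MvPolynomial (Fin (s + 1)) K) hπ hy₀ h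
  have two_sided : IsTwoSided (Qᵐᵒᵖ ∙ algebraMap _ Q p) := fun r x hx => by
    obtain ⟨q, rfl⟩ := mem_span_singleton.1 hx
    rw [← mul_assoc, ← Algebra.commutes, mul_assoc]
    exact mul_mem_span_singleton _ _
  obtain ⟨Q', _, _, π', hπ', ker_π'⟩ := exists_algHom_ker_eq K two_sided
  refine ⟨y, hy, ker (π'.comp π : A →+* Q'), fun x hx => ?_, fun x hx => ?_, Q', _, _, π'.comp π,
    hπ'.comp hπ, rfl, ?_⟩
  · rw [mem_ker] at hx ⊢
    exact (congrArg π' hx).trans (map_zero π')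
  · obtain ⟨q, hq⟩ := mem_span_singleton.1 (ker_π'.le hx : π x ∈ _)
    exact le x q hq.symm
  · obtain ⟨_, _, _, algebraMap_eq⟩ :=
      exists_finite_algebra_of_surjective (P := MvPolynomial (Fin (s + 1)) K) hπ'
    refine .of_algebraMap_eq_zero hp ?_
    rw [algebraMap_eq]
    exact ker_π'.ge (Submodule.mem_span_singleton_self _)

theorem exists_one_mem_of_zero [Infinite K] (hN : IsFiniteModulo K N 0) (hy₀ : y₀ ∈ Y)
    (h : b * r + y₀ = 1) :
    ∃ y ∈ Y, (1 : A) ∈ (Aᵐᵒᵖ ∙ (b + y)) ⊔ N := by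
  obtain ⟨Q, _, _, π, hπ, rfl, _, _, _⟩ := hN
  obtain ⟨y, hy, p, hp, le⟩ :=
    exists_le_span_singleton_add_sup (R := MvPolynomial (Fin 0) K) hπ hy₀ h
  obtain ⟨c, rfl⟩ := MvPolynomial.C_surjective (Fin 0) p
  have hc : c ≠ 0 := fun hc => hp (by rw [hc, map_zero])
  refine ⟨y, hy, le 1 (algebraMap (MvPolynomial (Fin 0) K) Q (MvPolynomial.C c⁻¹)) ?_⟩
  rw [← map_mul, ← map_mul, mul_inv_cancel₀ hc, map_one, map_one]
  simp

end IsFiniteModulo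

theorem aeval_mem_center {z : A} (hz : z ∈ Subalgebra.center K A) (f : Polynomial K) :
    Polynomial.aeval z f ∈ Subalgebra.center K A :=
  Algebra.adjoin_le (Set.singleton_subset_iff.2 hz) (Polynomial.aeval_mem_adjoin_singleton K z)

theorem exists_forall_add_of_mem_center {z : A} (hz : z ∈ Subalgebra.center K A) {P : K → A → Prop}
    (hP : ∀ l x r, P l x → P l (x + (z - algebraMap K A l) * r)) {Y : RightIdeal A} {b : A}
    {s : Finset K} (hs : ∀ l ∈ s, ∃ y ∈ Y, P l (b + y)) : ∃ y ∈ Y, ∀ l ∈ s, P l (b + y) := by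
  classical
  choose! y hy hPy using hs
  let φ := Lagrange.basis s (id : K → K)
  choose q hq using fun m l : K => Polynomial.X_sub_C_dvd_sub_C_eval (a := m) (p := φ l)
  have φ_eval : ∀ m ∈ s, ∀ l, (φ l).eval m = if l = m then 1 else 0 := fun m hm l => by
    split_ifs with h
    · subst h
      exact Lagrange.eval_basis_self Function.injective_id.injOn hm
    · exact Lagrange.eval_basis_of_ne (v := id) h hm
  have aeval_φ : ∀ m ∈ s, ∀ l, Polynomial.aeval z (φ l) =
      (z - algebraMap K A m) * Polynomial.aeval z (q m l) + if l = m then 1 else 0 :=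
    fun m hm l => by
      rw [← sub_add_cancel (φ l) (Polynomial.C ((φ l).eval m)), hq, φ_eval m hm]
      split_ifs <;> simp
  refine ⟨∑ l ∈ s, Polynomial.aeval z (φ l) * y l, Submodule.sum_mem _ fun l hl => ?_,
    fun m hm => ?_⟩
  · have := Subalgebra.mem_center_iff.1 (aeval_mem_center hz (φ l)) (y l)
    exact this ▸ mul_mem_right (hy l hl) _
  · convert hP m _ (∑ l ∈ s, Polynomial.aeval z (q m l) * y l) (hPy m hm) using 1
    simp only [aeval_φ m hm, add_mul, Finset.sum_add_distrib, mul_assoc, ← Finset.mul_sum,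
      ite_mul, one_mul, zero_mul, Finset.sum_ite_eq', hm, if_true]
    abel

end Quotient

/-! ### Quantum down-up algebras -/

section QuantumDownUp

open Polynomial

universe u

variable {K A : Type u} [Field K] [Ring A] [Algebra K A] {μ ε : K} {n : ℕ} {U D w : A}

/-- The algebra `A` generated by `U` and `D` has the presentation in which `w = D U - μ U D - ε` is
skew with respect to `U` and `D`, with parameter a primitive root of unity `μ ≠ 1`. A down-up
algebra with double root `μ` and `α + β ≠ 1` is of this form for a suitable constant `ε`. -/
structure IsQuantumDownUp (μ ε : K) (n : ℕ) (U D w : A) : Prop where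
  isPrimitiveRoot : IsPrimitiveRoot μ n
  two_le : 2 ≤ n
  weight_mul_U : w * U = μ • (U * w)
  D_mul_weight : D * w = μ • (w * D)
  D_mul_U : D * U = μ • (U * D) + w + algebraMap K A ε
  adjoin_eq_top : Algebra.adjoin K {U, D} = ⊤
  exists_lift : ∀ (Q : Type u) [Ring Q] [Algebra K Q] (u d v : Q), v * u = μ • (u * v) →
    d * v = μ • (v * d) → d * u = μ • (u * d) + v + algebraMap K Q ε →
    ∃ π : A →ₐ[K] Q, π U = u ∧ π D = d

/-- The endomorphism of `K[X]` scaling the variable by `μ`. -/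
def scaleX (μ : K) : K[X] →ₐ[K] K[X] := aeval (μ • X)

namespace IsQuantumDownUp

theorem mem_subalgebra (hA : IsQuantumDownUp μ ε n U D w) {S : Subalgebra K A} (hU : U ∈ S)
    (hD : D ∈ S) (x : A) : x ∈ S := by
  have : Algebra.adjoin K {U, D} ≤ S := Algebra.adjoin_le (by simp [Set.insert_subset_iff, hU, hD])
  exact this (hA.adjoin_eq_top ▸ Algebra.mem_top)

theorem pos (hA : IsQuantumDownUp μ ε n U D w) : 0 < n := two_pos.trans_le hA.two_le

theorem root_ne_zero (hA : IsQuantumDownUp μ ε n U D w) : μ ≠ 0 :=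
  hA.isPrimitiveRoot.ne_zero hA.pos.ne'

theorem root_ne_one (hA : IsQuantumDownUp μ ε n U D w) : μ ≠ 1 :=
  hA.isPrimitiveRoot.ne_one hA.two_le

theorem nontrivial (hA : IsQuantumDownUp μ ε n U D w) : Nontrivial A := by
  obtain ⟨π, -, -⟩ := hA.exists_lift K 1 (ε / (1 - μ)) 0 (by simp) (by simp) <| by
    have := sub_ne_zero.2 hA.root_ne_one.symm
    rw [smul_eq_mul, Algebra.algebraMap_self_apply]
    field_simp
    ring
  exact (π : A →+* K).domain_nontrivial

theorem weight_pow_mul_U (hA : IsQuantumDownUp μ ε n U D w) (k : ℕ) :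
    w ^ k * U = μ ^ k • (U * w ^ k) := by
  induction k with
  | zero => simp
  | succ k ih =>
    rw [pow_succ w, mul_assoc, hA.weight_mul_U, mul_smul_comm, ← mul_assoc, ih, smul_mul_assoc,
      smul_smul, mul_assoc, ← pow_succ']

theorem D_mul_weight_pow (hA : IsQuantumDownUp μ ε n U D w) (k : ℕ) :
    D * w ^ k = μ ^ k • (w ^ k * D) := by
  induction k with
  | zero => simp
  | succ k ih =>
    rw [pow_succ w, ← mul_assoc, ih, smul_mul_assoc, mul_assoc, hA.D_mul_weight, mul_smul_comm,
      smul_smul, ← pow_succ, mul_assoc]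

theorem isAmbiskew (hA : IsQuantumDownUp μ ε n U D w) :
    IsAmbiskew (scaleX μ) (X : K[X]) μ ε (aeval w) U D where
  map_weight := by simp [scaleX]
  base_mul_U f := by
    induction f using Polynomial.induction_on' with
    | add p q hp hq => rw [map_add, map_add, map_add, add_mul, mul_add, hp, hq]
    | monomial k a =>
      simp only [scaleX, aeval_monomial, map_mul, map_pow, AlgHom.commutes, map_smul, aeval_X]
      rw [mul_assoc, hA.weight_pow_mul_U, _root_.smul_pow, mul_smul_comm, mul_smul_comm,
        mul_smul_comm, ← mul_assoc, Algebra.commutes, mul_assoc]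
  D_mul_base f := by
    induction f using Polynomial.induction_on' with
    | add p q hp hq => rw [map_add, map_add, map_add, add_mul, mul_add, hp, hq]
    | monomial k a =>
      simp only [scaleX, aeval_monomial, map_mul, map_pow, AlgHom.commutes, map_smul, aeval_X]
      rw [← mul_assoc, ← Algebra.commutes, mul_assoc, hA.D_mul_weight_pow, _root_.smul_pow,
        mul_smul_comm, mul_smul_comm, smul_mul_assoc, mul_assoc]
  D_mul_U := by rw [aeval_X]; exact hA.D_mul_U

theorem map_mem_center (hA : IsQuantumDownUp μ ε n U D w) {Q : Type*} [Ring Q] [Algebra K Q]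
    {π : A →ₐ[K] Q} (hπ : Function.Surjective π) {q : Q} (hU : Commute (π U) q)
    (hD : Commute (π D) q) : q ∈ Subalgebra.center K Q := by
  refine Subalgebra.mem_center_iff.2 (hπ.forall.2 fun x => ?_)
  have mem_comap : ∀ {y}, y ∈ (Subalgebra.centralizer K {q}).comap π ↔ Commute (π y) q := by
    intro y
    rw [Subalgebra.mem_comap, Subalgebra.mem_centralizer_iff]
    simp [Commute, SemiconjBy, eq_comm]
  exact mem_comap.1 (hA.mem_subalgebra (mem_comap.2 hU) (mem_comap.2 hD) x)

theorem weight_pow_mem_center (hA : IsQuantumDownUp μ ε n U D w) :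
    w ^ n ∈ Subalgebra.center K A := by
  refine hA.map_mem_center (π := AlgHom.id K A) Function.surjective_id ?_ ?_
  · have := hA.weight_pow_mul_U n
    rw [hA.isPrimitiveRoot.pow_eq_one, one_smul] at this
    exact this.symm
  · have := hA.D_mul_weight_pow n
    rwa [hA.isPrimitiveRoot.pow_eq_one, one_smul] at this

theorem exists_mul_weight_eq (hA : IsQuantumDownUp μ ε n U D w) (x : A) :
    ∃ x', x' * w = w * x := by
  let S : Subalgebra K A :=
    { carrier := {x | ∃ x', x' * w = w * x}
      mul_mem' := by
        rintro a b ⟨a', ha⟩ ⟨b', hb⟩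
        exact ⟨a' * b', by rw [← mul_assoc, ← ha, mul_assoc, hb, mul_assoc]⟩
      add_mem' := by
        rintro a b ⟨a', ha⟩ ⟨b', hb⟩
        exact ⟨a' + b', by rw [mul_add, ← ha, ← hb, add_mul]⟩
      algebraMap_mem' := fun r => ⟨algebraMap K A r, Algebra.commutes r w⟩ }
  refine hA.mem_subalgebra (S := S) ⟨μ • U, by rw [hA.weight_mul_U, smul_mul_assoc]⟩
    ⟨μ⁻¹ • D, ?_⟩ x
  rw [smul_mul_assoc, hA.D_mul_weight, smul_smul, inv_mul_cancel₀ hA.root_ne_zero, one_smul]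

theorem span_weight_isTwoSided (hA : IsQuantumDownUp μ ε n U D w) : IsTwoSided (Aᵐᵒᵖ ∙ w) := by
  let S : Subalgebra K A :=
    { carrier := {x | ∃ x', w * x' = x * w}
      mul_mem' := by
        rintro a b ⟨a', ha⟩ ⟨b', hb⟩
        exact ⟨a' * b', by rw [mul_assoc, ← hb, ← mul_assoc, ha, mul_assoc]⟩
      add_mem' := by
        rintro a b ⟨a', ha⟩ ⟨b', hb⟩
        exact ⟨a' + b', by rw [mul_add, ha, hb, add_mul]⟩
      algebraMap_mem' := fun r => ⟨algebraMap K A r, (Algebra.commutes r w).symm⟩ }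
  intro r x hx
  obtain ⟨y, rfl⟩ := mem_span_singleton.1 hx
  obtain ⟨r', hr⟩ := hA.mem_subalgebra (S := S)
    ⟨μ⁻¹ • U, by rw [mul_smul_comm, hA.weight_mul_U, smul_smul, inv_mul_cancel₀ hA.root_ne_zero,
      one_smul]⟩ ⟨μ • D, by rw [hA.D_mul_weight, mul_smul_comm]⟩ r
  rw [← mul_assoc, ← hr, mul_assoc]
  exact mul_mem_span_singleton _ _

section WeightZero

variable {Q : Type*} [Ring Q] [Algebra K Q] {π : A →ₐ[K] Q}

theorem aeval_commCoeff_eq_zero (hA : IsQuantumDownUp μ ε n U D w) {v : Q} (hv : v = 0) :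
    aeval v (commCoeff (X : K[X]) μ ε n) = 0 := by
  obtain ⟨m, rfl⟩ := Nat.exists_eq_add_one.2 hA.pos
  rw [commCoeff_succ_eq, hA.isPrimitiveRoot.geom_sum_eq_zero hA.two_le]
  simp [hv]

theorem map_U_pow_mem_center (hA : IsQuantumDownUp μ ε n U D w) (hπ : Function.Surjective π)
    (hw : π w = 0) : π U ^ n ∈ Subalgebra.center K Q := by
  refine hA.map_mem_center hπ (Commute.self_pow _ _) ?_
  have := congrArg π (hA.isAmbiskew.D_mul_U_pow n)
  rw [hA.isPrimitiveRoot.pow_eq_one, one_smul, map_add, map_mul π (U ^ (n - 1)),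
    ← aeval_algHom_apply, hA.aeval_commCoeff_eq_zero hw, mul_zero, add_zero] at this
  simpa [Commute, SemiconjBy] using this

theorem map_D_pow_mem_center (hA : IsQuantumDownUp μ ε n U D w) (hπ : Function.Surjective π)
    (hw : π w = 0) : π D ^ n ∈ Subalgebra.center K Q := by
  refine hA.map_mem_center hπ ?_ (Commute.self_pow _ _)
  have := congrArg (fun x => π x.unop) (hA.isAmbiskew.op.D_mul_U_pow n)
  rw [hA.isPrimitiveRoot.pow_eq_one, one_smul, ← op_pow, ← op_pow, algHomOp_apply, ← op_mul,
    ← op_mul, ← op_mul, ← op_add, unop_op, unop_op, map_add, map_mul π (aeval w _),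
    ← aeval_algHom_apply, hA.aeval_commCoeff_eq_zero hw, zero_mul, add_zero] at this
  simpa [Commute, SemiconjBy, eq_comm] using this

theorem span_pow_mul_pow_eq_top (hA : IsQuantumDownUp μ ε n U D w) (hπ : Function.Surjective π)
    (hw : π w = 0) :
    Submodule.span K (Set.range fun a : ℕ × ℕ => π U ^ a.1 * π D ^ a.2) = ⊤ := by
  refine Submodule.eq_top_iff'.2 (hπ.forall.2 ?_)
  refine (hA.isAmbiskew.normalOrder_surjective hA.adjoin_eq_top).forall.2 fun F => ?_
  induction F using Finsupp.induction_linear with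
  | zero => simp
  | add f g hf hg => rw [map_add, map_add]; exact add_mem hf hg
  | single a f =>
    have aeval_zero : aeval (0 : Q) f = algebraMap K Q (f.coeff 0) := by
      rw [aeval_def, eval₂_at_zero]
    rw [normalOrder_single, map_mul, map_mul, ← aeval_algHom_apply, hw, aeval_zero,
      ← Algebra.smul_def, mul_smul_comm, map_pow, map_pow]
    exact Submodule.smul_mem _ _ (Submodule.subset_span ⟨a, rfl⟩)

end WeightZero

theorem isFiniteModulo_span_weight (hA : IsQuantumDownUp μ ε n U D w) :
    IsFiniteModulo K (Aᵐᵒᵖ ∙ w) 2 := by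
  obtain ⟨Q, _, _, π, hπ, ker_π⟩ := exists_algHom_ker_eq K hA.span_weight_isTwoSided
  have hw : π w = 0 := ker_π.ge (Submodule.mem_span_singleton_self w)
  let x : Subalgebra.center K Q := ⟨_, hA.map_U_pow_mem_center hπ hw⟩
  let y : Subalgebra.center K Q := ⟨_, hA.map_D_pow_mem_center hπ hw⟩
  let : Algebra (MvPolynomial (Fin 2) K) Q :=
    (((Subalgebra.center K Q).val.comp (MvPolynomial.aeval ![x, y])).toRingHom).toAlgebra'
      fun p q => (Subalgebra.mem_center_iff.1 (MvPolynomial.aeval ![x, y] p).2 q).symm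
  have tower : IsScalarTower K (MvPolynomial (Fin 2) K) Q := IsScalarTower.of_algebraMap_eq' <|
    (AlgHom.comp_algebraMap ((Subalgebra.center K Q).val.comp (MvPolynomial.aeval ![x, y]))).symm
  have map_X : ∀ i, algebraMap (MvPolynomial (Fin 2) K) Q (MvPolynomial.X i) = ![x, y] i :=
    fun i => congrArg Subtype.val (MvPolynomial.aeval_X ![x, y] i)
  have U_integral : IsIntegral (MvPolynomial (Fin 2) K) (π U) :=
    .of_pow hA.pos <|
      show IsIntegral _ (![x, y] 0 : Q) from map_X 0 ▸ isIntegral_algebraMap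
  have D_integral : IsIntegral (MvPolynomial (Fin 2) K) (π D) :=
    .of_pow hA.pos <|
      show IsIntegral _ (![x, y] 1 : Q) from map_X 1 ▸ isIntegral_algebraMap
  refine ⟨Q, _, _, π, hπ, ker_π, _, tower,
    finite_of_span_pow_mul_pow_eq_top U_integral D_integral ?_⟩
  refine (Submodule.restrictScalars_eq_top_iff K _ _).1 ?_
  rw [eq_top_iff, ← hA.span_pow_mul_pow_eq_top hπ hw]
  exact Submodule.span_le_restrictScalars _ _ _

end IsQuantumDownUp

end QuantumDownUp

/-! ### Fibres of quantum down-up algebras -/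

section Fibre

open Polynomial

universe u

namespace IsKummer

variable {L E : Type*} [Field L] [CommRing E] [Algebra L E] {σ : E →ₐ[L] E} {w : E} {μ : L} {n : ℕ}
  {ζ : L}

theorem X_pow_sub_C_dvd (he : IsKummer σ w μ n ζ) {f : L[X]} (hf : aeval w f = 0) :
    X ^ n - C ζ ∣ f := by
  have := he.finiteDimensional
  have := he.nontrivial
  have integral : IsIntegral L w := IsIntegral.of_finite L w
  suffices X ^ n - C ζ = minpoly L w from this ▸ minpoly.dvd L w hf
  refine eq_of_monic_of_dvd_of_natDegree_le (minpoly.monic integral)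
    (monic_X_pow_sub_C ζ he.pos.ne') (minpoly.dvd L w (by simp [he.weight_pow])) ?_
  rw [natDegree_X_pow_sub_C, ← PowerBasis.ofAdjoinEqTop_dim integral he.adjoin_eq_top,
    ← PowerBasis.finrank, he.finrank_eq]

theorem exists_adjoinRoot (hn : 0 < n) (hμ : IsPrimitiveRoot μ n) (hζ : ζ ≠ 0) :
    ∃ σ : AdjoinRoot (X ^ n - C ζ) →ₐ[L] AdjoinRoot (X ^ n - C ζ),
      IsKummer σ (AdjoinRoot.root (X ^ n - C ζ)) μ n ζ := by
  set v := AdjoinRoot.root (X ^ n - C ζ)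
  have v_pow : v ^ n = algebraMap L _ ζ := by
    have : aeval v (X ^ n - C ζ) = 0 := by rw [AdjoinRoot.aeval_eq, AdjoinRoot.mk_self]
    simpa [sub_eq_zero] using this
  have eval : (X ^ n - C ζ).eval₂ (Algebra.ofId L (AdjoinRoot (X ^ n - C ζ)) : L →+* _) (μ • v)
      = 0 := by
    change aeval (μ • v) (X ^ n - C ζ) = 0
    simp [_root_.smul_pow, hμ.pow_eq_one, v_pow]
  refine ⟨AdjoinRoot.liftAlgHom _ (Algebra.ofId L _) (μ • v) eval, hn, hμ,
    AdjoinRoot.liftAlgHom_root _ _ _ _, v_pow, hζ, AdjoinRoot.adjoinRoot_eq_top, ?_⟩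
  rw [(AdjoinRoot.powerBasis (X_pow_sub_C_ne_zero hn ζ)).finrank, AdjoinRoot.powerBasis_dim,
    natDegree_X_pow_sub_C]

end IsKummer

variable {K L A : Type u} [Field K] [Field L] [Algebra K L] [Ring A] [Algebra K A]
  {μ ε : K} {n : ℕ} {U D w : A} {ζ : L}

/-- A fibre, over a nonzero value `ζ` of the central element `w ^ n` in an extension field `L` of
`K`, of an algebra `A` with elements `U`, `D`, `w`: an algebra `R` with normally ordered basis over
the Kummer algebra `E = L[v] / (v ^ n - ζ)`, and a homomorphism `A → R` sending `w` to `v`. -/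
structure Fibre (μ ε : K) (n : ℕ) (U D w : A) (ζ : L) where
  E : Type u
  R : Type u
  [commRing : CommRing E]
  [ring : Ring R]
  [algebraE : Algebra L E]
  [algebraR : Algebra L R]
  σ : E →ₐ[L] E
  v : E
  ι : E →ₐ[L] R
  π : A →+* R
  isPBW : IsPBW σ v (algebraMap K L μ) (algebraMap K L ε) ι (π U) (π D)
  isKummer : IsKummer σ v (algebraMap K L μ) n ζ
  map_weight : π w = ι v
  map_algebraMap : ∀ k, π (algebraMap K A k) = algebraMap L R (algebraMap K L k)

attribute [instance] Fibre.commRing Fibre.ring Fibre.algebraE Fibre.algebraR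

theorem IsQuantumDownUp.nonempty_fibre (hA : IsQuantumDownUp μ ε n U D w) (hζ : ζ ≠ 0) :
    Nonempty (Fibre μ ε n U D w ζ) := by
  have hμ := hA.isPrimitiveRoot.map_of_injective (algebraMap K L).injective
  obtain ⟨σ, he⟩ := IsKummer.exists_adjoinRoot hA.pos hμ hζ
  obtain ⟨R, _, _, ι, u, d, hp⟩ :=
    exists_isPBW σ _ _ (algebraMap K L ε) he.map_weight he.adjoin_eq_top
  set v := AdjoinRoot.root (X ^ n - C ζ)
  let : Algebra K R := Algebra.compHom R (algebraMap K L)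
  have smul_eq (k : K) (r : R) : k • r = algebraMap K L k • r := rfl
  have v_mul_u : ι v * u = μ • (u * ι v) := by
    rw [hp.base_mul_U, he.map_weight, map_smul, mul_smul_comm, smul_eq]
  have d_mul_v : d * ι v = μ • (ι v * d) := by
    rw [hp.D_mul_base, he.map_weight, map_smul, smul_mul_assoc, smul_eq]
  have d_mul_u : d * u = μ • (u * d) + ι v + algebraMap K R ε := hp.D_mul_U
  obtain ⟨π, rfl, rfl⟩ := hA.exists_lift R u d (ι v) v_mul_u d_mul_v d_mul_u
  refine ⟨⟨_, R, σ, v, ι, π, hp, he, ?_, π.commutes⟩⟩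
  have := congrArg π hA.D_mul_U
  rw [map_mul, d_mul_u, map_add, map_add, map_smul, map_mul, AlgHom.commutes] at this
  exact (add_left_cancel (add_right_cancel this)).symm

namespace Fibre

variable (h : Fibre μ ε n U D w ζ)

theorem nontrivial : Nontrivial h.R :=
  have := h.isKummer.nontrivial
  h.isPBW.base_injective.nontrivial

/-- Evaluation of polynomials over `K` at the element `v` of the Kummer algebra. -/
def specialize : K[X] →+* h.E :=
  eval₂RingHom ((algebraMap L h.E).comp (algebraMap K L)) h.v

@[simp]
theorem specialize_X : h.specialize X = h.v := by simp [specialize]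

@[simp]
theorem specialize_C (k : K) : h.specialize (C k) = algebraMap L h.E (algebraMap K L k) := by
  simp [specialize]

theorem map_aeval_weight (f : K[X]) : h.π (aeval w f) = h.ι (h.specialize f) := by
  suffices h.π.comp (aeval w : K[X] →ₐ[K] A).toRingHom = (h.ι : h.E →+* h.R).comp h.specialize from
    RingHom.congr_fun this f
  ext k
  · simp [h.map_algebraMap]
  · simp [h.map_weight]

theorem map_normalOrder (F : ℕ × ℕ →₀ K[X]) :
    h.π (normalOrder (aeval w) U D F)
      = normalOrder h.ι (h.π U) (h.π D) (F.mapRange h.specialize (map_zero _)) := by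
  induction F using Finsupp.induction_linear with
  | zero => simp
  | add f g hf hg =>
    rw [map_add, map_add, hf, hg, ← map_add, Finsupp.mapRange_add (map_add h.specialize)]
  | single a f =>
    rw [Finsupp.mapRange_single, normalOrder_single, normalOrder_single]
    simp [h.map_aeval_weight]

theorem map_aeval_weight_pow (f : K[X]) :
    h.π (aeval (w ^ n) f) = algebraMap L h.R (aeval ζ f) := by
  suffices h.π.comp (aeval (w ^ n) : K[X] →ₐ[K] A).toRingHom
      = (algebraMap L h.R).comp (aeval ζ : K[X] →ₐ[K] L).toRingHom from RingHom.congr_fun this f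
  ext k
  · simp [h.map_algebraMap]
  · have : h.ι h.v ^ n = algebraMap L h.R ζ := by
      rw [← map_pow, h.isKummer.weight_pow, AlgHom.commutes]
    simpa [h.map_weight] using this

theorem isUnit_specialize [IsAlgClosed K] {f : K[X]} (hf : f ≠ 0)
    (hroot : ∀ ω, f.IsRoot ω → algebraMap K L ω ^ n ≠ ζ) : IsUnit (h.specialize f) := by
  rw [(IsAlgClosed.splits f).eq_prod_roots, map_mul, specialize_C, map_multiset_prod,
    Multiset.map_map]
  refine ((IsUnit.mk0 _ (by simpa using hf)).map _).mul
    (Multiset.prod_induction IsUnit _ (fun _ _ => IsUnit.mul) isUnit_one ?_)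
  simp only [Multiset.mem_map, forall_exists_index, and_imp, forall_apply_eq_imp_iff₂]
  intro ω hω
  have := isUnit_smul_add_algebraMap h.isKummer.weight_pow (a := 1) (b := -algebraMap K L ω)
    (by simpa using hroot ω (isRoot_of_mem_roots hω))
  simpa [sub_eq_add_neg] using this

theorem mapRange_specialize_ne_zero {F : ℕ × ℕ →₀ K[X]} (hF : F ≠ 0)
    (hunit : ∀ p, F p ≠ 0 → IsUnit (h.specialize (F p))) :
    F.mapRange h.specialize (map_zero _) ≠ 0 := by
  have := h.isKummer.nontrivial
  obtain ⟨p, hp⟩ := Finsupp.ne_iff.1 hF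
  exact Finsupp.ne_iff.2 ⟨p, by simpa using (hunit p hp).ne_zero⟩

theorem isLarge_span_singleton {a : h.R} (ha : ∀ x, a * x = 0 → x = 0) :
    IsLarge h.ι (h.π U) (h.π D) n (h.Rᵐᵒᵖ ∙ a) :=
  h.isPBW.growsBy_of_regular h.isKummer ha (mul_mem_span_singleton a)

end Fibre

/-- The polynomial is the product of the normally ordered coefficients of `a`: away from its roots
the leading coefficient of the image of `a` is a unit. -/
theorem IsQuantumDownUp.exists_regular_map [IsAlgClosed K] (hA : IsQuantumDownUp μ ε n U D w)
    {a : A} (ha : a ≠ 0) : ∃ f : K[X], f ≠ 0 ∧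
      ∀ {L : Type u} [Field L] [Algebra K L] {ζ : L} (h : Fibre μ ε n U D w ζ),
        (∀ ω, f.IsRoot ω → algebraMap K L ω ^ n ≠ ζ) → ∀ x, h.π a * x = 0 → x = 0 := by
  obtain ⟨F, rfl⟩ := hA.isAmbiskew.normalOrder_surjective hA.adjoin_eq_top a
  have hF : F ≠ 0 := by
    rintro rfl
    simp at ha
  refine ⟨∏ p ∈ F.support, F p,
    Finset.prod_ne_zero_iff.2 fun p => Finsupp.mem_support_iff.1, ?_⟩
  intro L _ _ ζ h hroot x hx
  have hunit : ∀ p, F p ≠ 0 → IsUnit (h.specialize (F p)) := fun p hp =>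
    h.isUnit_specialize hp fun ω hω =>
      hroot ω (hω.dvd (Finset.dvd_prod_of_mem _ (Finsupp.mem_support_iff.2 hp)))
  obtain ⟨i, j, coeff_ne, lead⟩ := exists_hasLeadingTerm h.ι (h.π U) (h.π D)
    (h.mapRange_specialize_ne_zero hF hunit)
  rw [h.map_normalOrder] at hx
  rw [Finsupp.mapRange_apply] at coeff_ne lead
  refine h.isPBW.eq_zero_of_mul_eq_zero h.isKummer lead (hunit _ ?_) hx
  rintro h0
  rw [h0, map_zero] at coeff_ne
  exact coeff_ne rfl

namespace Fibre

section ClosedFibre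

variable {l : K} (h : Fibre μ ε n U D w l)

theorem surjective : Function.Surjective h.π := by
  let π : A →ₐ[K] h.R := { h.π with commutes' := h.map_algebraMap }
  have : Algebra.adjoin K {h.π U, h.π D} ≤ π.range :=
    Algebra.adjoin_le (by rintro _ (rfl | rfl); exacts [⟨U, rfl⟩, ⟨D, rfl⟩])
  rw [h.isPBW.adjoin_eq_top] at this
  exact fun x => this Algebra.mem_top

theorem mem_span_of_map_eq_zero (hA : IsQuantumDownUp μ ε n U D w) {a : A} (ha : h.π a = 0) :
    a ∈ Aᵐᵒᵖ ∙ (w ^ n - algebraMap K A l) := by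
  obtain ⟨F, rfl⟩ := hA.isAmbiskew.normalOrder_surjective hA.adjoin_eq_top a
  rw [h.map_normalOrder, map_eq_zero_iff _ h.isPBW.injective] at ha
  have coeff_dvd (p : ℕ × ℕ) : X ^ n - C l ∣ F p := by
    refine h.isKummer.X_pow_sub_C_dvd ?_
    have := DFunLike.congr_fun ha p
    rwa [Finsupp.mapRange_apply] at this
  rw [← F.sum_single, Finsupp.sum, map_sum]
  refine Submodule.sum_mem _ fun p _ => ?_
  obtain ⟨q, hq⟩ := coeff_dvd p
  have comm : Commute (U ^ p.1) (w ^ n - algebraMap K A l) :=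
    (Subalgebra.mem_center_iff.1 (sub_mem hA.weight_pow_mem_center (algebraMap_mem _ l)) _)
  refine mem_span_singleton.2 ⟨U ^ p.1 * (aeval w q * D ^ p.2), ?_⟩
  rw [normalOrder_single, hq, ← mul_assoc, ← comm.eq]
  simp [mul_assoc]

end ClosedFibre

section GenericFibre

variable [Algebra K[X] L] [IsScalarTower K K[X] L] (h : Fibre μ ε n U D w (algebraMap K[X] L X))

theorem map_aeval_weight_pow_mul (g : K[X]) (x : A) :
    h.π (aeval (w ^ n) g * x) = algebraMap K[X] L g • h.π x := by
  rw [map_mul, h.map_aeval_weight_pow, aeval_algebraMap_apply, aeval_X_left_apply,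
    ← Algebra.smul_def]

variable [IsFractionRing K[X] L]

theorem algebraMap_ne_mul_generic {c m : K} (hm : m ≠ 0) :
    algebraMap K L c ≠ algebraMap K L m * algebraMap K[X] L X := by
  rw [IsScalarTower.algebraMap_apply K K[X] L, IsScalarTower.algebraMap_apply K K[X] L, ← map_mul]
  intro hc
  have := congrArg (coeff · 1) (IsFractionRing.injective K[X] L hc)
  simp [Polynomial.algebraMap_eq, coeff_C] at this
  exact hm this.symm

theorem regular_map_of_generic [IsAlgClosed K] (hA : IsQuantumDownUp μ ε n U D w) {a : A}
    (ha : a ≠ 0) {x : h.R} (hx : h.π a * x = 0) : x = 0 := by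
  obtain ⟨f, -, hf⟩ := hA.exists_regular_map ha
  refine hf h (fun ω _ => ?_) x hx
  simpa using algebraMap_ne_mul_generic (L := L) (c := ω ^ n) one_ne_zero

theorem injective_of_generic [IsAlgClosed K] (hA : IsQuantumDownUp μ ε n U D w) :
    Function.Injective h.π := by
  have := h.nontrivial
  refine (injective_iff_map_eq_zero h.π).2 fun a ha => ?_
  by_contra hne
  exact one_ne_zero (h.regular_map_of_generic hA hne (x := 1) (by simp [ha]))

theorem heart_eq_top_of_generic [CharZero K] (hn : 2 ≤ n) : heart h.R = ⊤ := by
  have : CharZero L := charZero_of_injective_algebraMap (algebraMap K L).injective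
  refine h.isPBW.heart_eq_top h.isKummer hn fun m hm => h.isKummer.isUnit_commCoeff hn ?_
  have := algebraMap_ne_mul_generic (L := L) (c := (-(ε * ((μ ^ m - 1) / (μ - 1)))) ^ n)
    (m := (m : K) ^ n) (pow_ne_zero _ (Nat.cast_ne_zero.2 hm.ne'))
  simpa using this

theorem exists_smul_eq_map (r : h.R) :
    ∃ g : K[X], g ≠ 0 ∧ ∃ x, algebraMap K[X] L g • r = h.π x := by
  have hr : r ∈ Algebra.adjoin L {h.π U, h.π D} := h.isPBW.adjoin_eq_top ▸ Algebra.mem_top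
  induction hr using Algebra.adjoin_induction with
  | mem x hx =>
    obtain rfl | rfl := hx
    · exact ⟨1, one_ne_zero, U, by simp⟩
    · exact ⟨1, one_ne_zero, D, by simp⟩
  | algebraMap l =>
    obtain ⟨⟨p, q⟩, hpq⟩ := IsLocalization.surj (nonZeroDivisors K[X]) l
    refine ⟨q, nonZeroDivisors.coe_ne_zero q, aeval (w ^ n) p, ?_⟩
    rw [← mul_one (aeval _ p), h.map_aeval_weight_pow_mul, ← hpq, map_one, Algebra.smul_def,
      ← map_mul, Algebra.smul_def, mul_one, mul_comm]
  | add x y _ _ hx hy =>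
    obtain ⟨g₁, hg₁, x₁, hx₁⟩ := hx
    obtain ⟨g₂, hg₂, x₂, hx₂⟩ := hy
    refine ⟨g₁ * g₂, mul_ne_zero hg₁ hg₂, aeval (w ^ n) g₂ * x₁ + aeval (w ^ n) g₁ * x₂, ?_⟩
    rw [map_add h.π, h.map_aeval_weight_pow_mul, h.map_aeval_weight_pow_mul, ← hx₁, ← hx₂,
      smul_smul, smul_smul, mul_comm (algebraMap K[X] L g₂), ← map_mul, smul_add]
  | mul x y _ _ hx hy =>
    obtain ⟨g₁, hg₁, x₁, hx₁⟩ := hx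
    obtain ⟨g₂, hg₂, x₂, hx₂⟩ := hy
    exact ⟨g₁ * g₂, mul_ne_zero hg₁ hg₂, x₁ * x₂, by
      rw [map_mul, map_mul, ← hx₁, ← hx₂, smul_mul_smul_comm]⟩

theorem exists_mul_aeval_eq (hinj : Function.Injective h.π) {a b d : A} {x y : h.R}
    (hxy : h.π a * x + h.π b * y = h.π d) :
    ∃ g : K[X], g ≠ 0 ∧ ∃ x' y', a * x' + b * y' = d * aeval (w ^ n) g := by
  obtain ⟨g₁, hg₁, x₁, hx₁⟩ := h.exists_smul_eq_map x
  obtain ⟨g₂, hg₂, y₁, hy₁⟩ := h.exists_smul_eq_map y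
  refine ⟨g₁ * g₂, mul_ne_zero hg₁ hg₂, aeval (w ^ n) g₂ * x₁, aeval (w ^ n) g₁ * y₁, hinj ?_⟩
  rw [map_add, map_mul h.π a, map_mul h.π b, h.map_aeval_weight_pow_mul,
    h.map_aeval_weight_pow_mul, ← hx₁, ← hy₁, smul_smul, smul_smul, mul_comm (algebraMap K[X] L g₂),
    ← map_mul, mul_smul_comm, mul_smul_comm, ← smul_add, hxy, map_mul h.π, h.map_aeval_weight_pow,
    aeval_algebraMap_apply, aeval_X_left_apply, ← Algebra.commutes, ← Algebra.smul_def]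

theorem exists_map_mem_span_sup_span [IsAlgClosed K] [CharZero K]
    (hA : IsQuantumDownUp μ ε n U D w) {a : A} (b d : A) (ha : a ≠ 0) {θ : K[X]} (hθ : θ ≠ 0) :
    ∃ r : A, h.π d ∈ (h.Rᵐᵒᵖ ∙ h.π a) ⊔ (h.Rᵐᵒᵖ ∙ h.π (b + d * (aeval (w ^ n) θ * r))) := by
  have : CharZero L := charZero_of_injective_algebraMap (algebraMap K L).injective
  have heart_eq := h.heart_eq_top_of_generic hA.two_le
  let 𝒥 : AddSubgroup h.R :=
    ((h.π : A →+ h.R).comp (AddMonoidHom.mulLeft (aeval (w ^ n) θ))).range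
  have h𝒥 (j : h.R) (_ : j ∈ heart h.R) : ∃ l : L, l ≠ 0 ∧ l • j ∈ 𝒥 := by
    obtain ⟨g, hg, x, hx⟩ := h.exists_smul_eq_map j
    refine ⟨algebraMap K[X] L (θ * g), ?_, x, ?_⟩
    · simpa using ⟨hθ, hg⟩
    · change h.π (aeval (w ^ n) θ * x) = _
      rw [h.map_aeval_weight_pow_mul, ← hx, smul_smul, map_mul]
  obtain ⟨_, ⟨r, rfl⟩, hr⟩ := h.isPBW.exists_mulHeartLE h.isKummer
    (M := 0) (by rw [heart_eq]; exact Submodule.mem_top) h𝒥 (h.π b) (h.π d)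
    (h.isLarge_span_singleton fun x => h.regular_map_of_generic hA ha)
  have one_mem : (1 : h.R) ∈ heart h.R := heart_eq ▸ Submodule.mem_top
  have := hr (h.π d) (Submodule.mem_sup_right ⟨1, one_mem, by simp⟩) 1 one_mem
  exact ⟨r, by simpa using this⟩

end GenericFibre

end Fibre

theorem IsQuantumDownUp.exists_mul_aeval_mem [IsAlgClosed K] [CharZero K]
    (hA : IsQuantumDownUp μ ε n U D w) {a : A} (b d : A) (ha : a ≠ 0) {θ : K[X]} (hθ : θ ≠ 0) :
    ∃ (r : A) (g : K[X]), g ≠ 0 ∧ d * aeval (w ^ n) g ∈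
      (Aᵐᵒᵖ ∙ a) ⊔ (Aᵐᵒᵖ ∙ (b + d * (aeval (w ^ n) θ * r))) := by
  let L := FractionRing K[X]
  have X_ne : algebraMap K[X] L X ≠ 0 := by simp
  obtain ⟨h⟩ := hA.nonempty_fibre X_ne
  obtain ⟨r, hr⟩ := h.exists_map_mem_span_sup_span hA b d ha hθ
  obtain ⟨_, hx, _, hy, hxy⟩ := Submodule.mem_sup.1 hr
  obtain ⟨x, rfl⟩ := mem_span_singleton.1 hx
  obtain ⟨y, rfl⟩ := mem_span_singleton.1 hy
  obtain ⟨g, hg, x', y', hd⟩ := h.exists_mul_aeval_eq (h.injective_of_generic hA) hxy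
  exact ⟨r, g, hg, hd ▸ Submodule.add_mem_sup (mul_mem_span_singleton _ _)
    (mul_mem_span_singleton _ _)⟩

end Fibre

/-! ### Absorbing a generator into three others -/

section Absorption

open Polynomial

universe u

section Rows

variable {R : Type*} [Ring R] {I J : RightIdeal R} {a b c d x y : R}

namespace RightIdeal

theorem mem_span_singleton_sup : x ∈ (Rᵐᵒᵖ ∙ a) ⊔ I ↔ ∃ r, ∃ i ∈ I, a * r + i = x := by
  simp only [Submodule.mem_sup, mem_span_singleton, exists_exists_eq_and]

theorem mem_span_triple :
    x ∈ (Rᵐᵒᵖ ∙ a) ⊔ (Rᵐᵒᵖ ∙ b) ⊔ (Rᵐᵒᵖ ∙ c) ↔ ∃ r s t, a * r + b * s + c * t = x := by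
  simp only [sup_assoc, Submodule.mem_sup, mem_span_singleton, exists_exists_eq_and, add_assoc,
    ↓existsAndEq, true_and]

theorem span_singleton_add_sup (hy : y ∈ J) : (Rᵐᵒᵖ ∙ (a + y)) ⊔ J = (Rᵐᵒᵖ ∙ a) ⊔ J := by
  have mem (v : R) : v ∈ (Rᵐᵒᵖ ∙ v) ⊔ J :=
    Submodule.mem_sup_left (Submodule.mem_span_singleton_self v)
  refine le_antisymm (sup_le ?_ le_sup_right) (sup_le ?_ le_sup_right) <;>
    rw [Submodule.span_singleton_le_iff_mem]
  · exact add_mem (mem a) (Submodule.mem_sup_right hy)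
  · exact (add_mem_cancel_right (Submodule.mem_sup_right hy)).1 (mem (a + y))

theorem exists_mem_map_eq {S : Type*} [Ring S] {f : R →+* S} (hf : Function.Surjective f) {z : S}
    (hz : z ∈ (Sᵐᵒᵖ ∙ f a) ⊔ (Sᵐᵒᵖ ∙ f b) ⊔ (Sᵐᵒᵖ ∙ f c)) :
    ∃ x ∈ (Rᵐᵒᵖ ∙ a) ⊔ (Rᵐᵒᵖ ∙ b) ⊔ (Rᵐᵒᵖ ∙ c), f x = z := by
  obtain ⟨r, s, t, rfl⟩ := mem_span_triple.1 hz
  obtain ⟨r, rfl⟩ := hf r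
  obtain ⟨s, rfl⟩ := hf s
  obtain ⟨t, rfl⟩ := hf t
  exact ⟨a * r + b * s + c * t, mem_span_triple.2 ⟨r, s, t, rfl⟩, by simp⟩

end RightIdeal

/-- Multiples of `d` can be added to `a`, `b`, `c` so that the three results generate the unit right
ideal: stability of the row `(a, b, c, d)`. -/
def IsStableQuadruple (a b c d : R) : Prop :=
  ∃ r s t, (1 : R) ∈ (Rᵐᵒᵖ ∙ (a + d * r)) ⊔ (Rᵐᵒᵖ ∙ (b + d * s)) ⊔ (Rᵐᵒᵖ ∙ (c + d * t))

namespace IsStableQuadruple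

theorem rotate (h : IsStableQuadruple a b c d) : IsStableQuadruple b c a d := by
  obtain ⟨r, s, t, h⟩ := h
  refine ⟨s, t, r, ?_⟩
  rwa [sup_comm, ← sup_assoc]

theorem of_add (hy : y ∈ (Rᵐᵒᵖ ∙ b) ⊔ (Rᵐᵒᵖ ∙ c) ⊔ (Rᵐᵒᵖ ∙ d))
    (h : IsStableQuadruple (a + y) b c d) : IsStableQuadruple a b c d := by
  obtain ⟨p, q, r, rfl⟩ := mem_span_triple.1 hy
  obtain ⟨r₁, r₂, r₃, h⟩ := h
  refine ⟨r + r₁ - r₂ * p - r₃ * q, r₂, r₃, ?_⟩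
  set J := (Rᵐᵒᵖ ∙ (b + d * r₂)) ⊔ (Rᵐᵒᵖ ∙ (c + d * r₃))
  have mem_J : (b + d * r₂) * p + (c + d * r₃) * q ∈ J :=
    Submodule.add_mem_sup (mul_mem_span_singleton _ p) (mul_mem_span_singleton _ q)
  rw [sup_assoc] at h ⊢
  rw [← span_singleton_add_sup mem_J]
  convert h using 4
  noncomm_ring

theorem of_add_add_add {y₁ y₂ y₃ : R} (h₁ : y₁ ∈ (Rᵐᵒᵖ ∙ b) ⊔ (Rᵐᵒᵖ ∙ c) ⊔ (Rᵐᵒᵖ ∙ d))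
    (h₂ : y₂ ∈ (Rᵐᵒᵖ ∙ (a + y₁)) ⊔ (Rᵐᵒᵖ ∙ c) ⊔ (Rᵐᵒᵖ ∙ d))
    (h₃ : y₃ ∈ (Rᵐᵒᵖ ∙ (a + y₁)) ⊔ (Rᵐᵒᵖ ∙ (b + y₂)) ⊔ (Rᵐᵒᵖ ∙ d))
    (h : (1 : R) ∈ (Rᵐᵒᵖ ∙ (a + y₁)) ⊔ (Rᵐᵒᵖ ∙ (b + y₂)) ⊔ (Rᵐᵒᵖ ∙ (c + y₃))) :
    IsStableQuadruple a b c d := by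
  have stable : IsStableQuadruple (a + y₁) (b + y₂) (c + y₃) d := ⟨0, 0, 0, by simpa using h⟩
  have stable_c : IsStableQuadruple (a + y₁) (b + y₂) c d := (stable.rotate.rotate.of_add h₃).rotate
  rw [sup_comm (Rᵐᵒᵖ ∙ (a + y₁))] at h₂
  exact (stable_c.rotate.of_add h₂).rotate.rotate.of_add h₁

end IsStableQuadruple

theorem exists_one_sub_mul_mem {z z' : R} (hz : ∀ r, ∃ r', r' * z = z * r)
    (h : (1 : R) ∈ (Rᵐᵒᵖ ∙ z) ⊔ I) (h' : ∃ x, 1 - x * z' ∈ I) : ∃ x, 1 - x * (z * z') ∈ I := by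
  obtain ⟨r, i, hi, hr⟩ := mem_span_singleton_sup.1 h
  obtain ⟨x, hx⟩ := h'
  obtain ⟨y, hy⟩ := hz (r * x)
  refine ⟨y, ?_⟩
  have : 1 - y * (z * z') = 1 - x * z' + i * (x * z') := by
    calc
      1 - y * (z * z') = 1 - z * r * (x * z') := by rw [← mul_assoc, hy]; noncomm_ring
      _ = 1 - (z * r + i) * (x * z') + i * (x * z') := by noncomm_ring
      _ = _ := by rw [hr, one_mul]
  exact this ▸ add_mem hx (mul_mem_right hi _)

theorem exists_one_sub_mul_pow_mem {z : R} (hz : ∀ r, ∃ r', r' * z = z * r)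
    (h : (1 : R) ∈ (Rᵐᵒᵖ ∙ z) ⊔ I) (k : ℕ) : ∃ x, 1 - x * z ^ k ∈ I := by
  induction k with
  | zero => exact ⟨1, by simp⟩
  | succ k ih => exact pow_succ' z k ▸ exists_one_sub_mul_mem hz h ih

theorem one_mem_of_aeval_mem {K : Type*} [Field K] [IsAlgClosed K] [Algebra K R] {z : R}
    (hz : z ∈ Subalgebra.center K R) {g : K[X]} (hg : g ≠ 0) (hgI : aeval z g ∈ I)
    (h : ∀ l ∈ g.roots, (1 : R) ∈ (Rᵐᵒᵖ ∙ (z - algebraMap K R l)) ⊔ I) : (1 : R) ∈ I := by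
  have exists_mem (s : Multiset K)
      (hs : ∀ l ∈ s, (1 : R) ∈ (Rᵐᵒᵖ ∙ (z - algebraMap K R l)) ⊔ I) :
      ∃ x, 1 - x * aeval z (s.map (X - C ·)).prod ∈ I := by
    induction s using Multiset.induction_on with
    | empty => exact ⟨1, by simp⟩
    | cons l s ih =>
      rw [Multiset.forall_mem_cons] at hs
      rw [Multiset.map_cons, Multiset.prod_cons, map_mul, map_sub, aeval_X, aeval_C]
      exact exists_one_sub_mul_mem (fun r => ⟨r, Subalgebra.mem_center_iff.1
        (sub_mem hz (algebraMap_mem _ l)) r⟩) hs.1 (ih hs.2)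
  obtain ⟨x, hx⟩ := exists_mem g.roots h
  have unit : g.leadingCoeff⁻¹ • aeval z g = aeval z (g.roots.map (X - C ·)).prod := by
    rw [inv_smul_eq_iff₀ (leadingCoeff_ne_zero.2 hg), Algebra.smul_def, ← aeval_C, ← map_mul,
      ← (IsAlgClosed.splits g).eq_prod_roots]
  have : x * aeval z (g.roots.map (X - C ·)).prod ∈ I := by
    rw [← unit, mul_smul_comm, Subalgebra.mem_center_iff.1 (aeval_mem_center hz g) x,
      ← mul_smul_comm]
    exact mul_mem_right hgI _
  simpa using add_mem hx this

end Rows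

namespace IsPBW

variable {L E : Type*} {R : Type u} [Field L] [CharZero L] [CommRing E] [Algebra L E] [Ring R]
  [Algebra L R] {σ : E →ₐ[L] E} {w : E} {μ ε ζ : L} {n : ℕ} {ι : E →ₐ[L] R} {U D : R}
variable (hp : IsPBW σ w μ ε ι U D) (he : IsKummer σ w μ n ζ) (hn : 2 ≤ n)
include hp he hn

/-- Modulo the heart, `R` is finite-dimensional. -/
theorem exists_one_mem_span_singleton_sup_heart {Y : RightIdeal R} {c s y₀ : R} (hy₀ : y₀ ∈ Y)
    (h : c * s + y₀ = 1) : ∃ y ∈ Y, (1 : R) ∈ (Rᵐᵒᵖ ∙ (c + y)) ⊔ heart R := by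
  obtain ⟨N, hU, hD⟩ := hp.exists_pow_mem_heart he hn
  obtain ⟨Q, _, _, π, hπ, ker_π⟩ := exists_algHom_ker_eq L (heart_isTwoSided (R := R))
  have := hp.finite_of_map_pow_eq_zero he hπ (ker_π.ge hU) (ker_π.ge hD)
  obtain ⟨y, hy, p, hp, le⟩ := exists_le_span_singleton_add_sup (R := L) hπ hy₀ h
  refine ⟨y, hy, ker_π ▸ le 1 (algebraMap L Q p⁻¹) ?_⟩
  rw [← map_mul, mul_inv_cancel₀ hp, map_one, map_one]

theorem exists_one_mem_sup_span_singleton {P : RightIdeal R} (hP : IsLarge ι U D n P) {c d s y₀ : R}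
    (hy₀ : y₀ ∈ P ⊔ Rᵐᵒᵖ ∙ d) (h : c * s + y₀ = 1) :
    ∃ y ∈ P ⊔ Rᵐᵒᵖ ∙ d, (1 : R) ∈ P ⊔ Rᵐᵒᵖ ∙ (c + y) := by
  obtain ⟨N, hU, -⟩ := hp.exists_pow_mem_heart he hn
  obtain ⟨y, hy, one_mem⟩ := hp.exists_one_mem_span_singleton_sup_heart he hn hy₀ h
  obtain ⟨j, hj, hjI⟩ := hp.exists_mulHeartLE he hU (𝒥 := (heart R).toAddSubgroup)
    (fun j hj => ⟨1, one_ne_zero, (one_smul L j).symm ▸ hj⟩) (c + y) d hP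
  set I := P ⊔ Rᵐᵒᵖ ∙ (c + y + d * j)
  have heart_le_sup : heart R ≤ P ⊔ Rᵐᵒᵖ ∙ (c + y) ⊔ (heart R).map (LinearMap.mulLeft Rᵐᵒᵖ d) := by
    intro x hx
    obtain ⟨p, hp, _, hq, hpq⟩ := Submodule.mem_sup.1 (sub_mem hy₀ (mul_mem_right hy s))
    obtain ⟨q, rfl⟩ := mem_span_singleton.1 hq
    have : x = p * x + (c + y) * (s * x) + d * (q * x) := by
      calc
        x = (c * s + y₀) * x := by rw [h, one_mul]
        _ = (y₀ - y * s) * x + (c + y) * (s * x) := by noncomm_ring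
        _ = _ := by rw [← hpq]; noncomm_ring
    rw [this]
    exact Submodule.add_mem_sup
      (Submodule.add_mem_sup (mul_mem_right hp x) (mul_mem_span_singleton _ _))
      ⟨q * x, heart_isTwoSided q x hx, rfl⟩
  have heart_le : heart R ≤ I := hp.heart_le_of_heart_mul_heart he hU fun x hx =>
    hjI x (heart_le_sup hx)
  have hc : c + y ∈ I := (add_mem_cancel_right (heart_le (heart_isTwoSided d j hj))).1
    (Submodule.mem_sup_right (Submodule.mem_span_singleton_self _))
  refine ⟨y + d * j, add_mem hy (Submodule.mem_sup_right (mul_mem_span_singleton d j)), ?_⟩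
  rw [← add_assoc]
  exact sup_le ((Submodule.span_singleton_le_iff_mem _ _).2 hc) heart_le one_mem

end IsPBW

section Quantum

variable {K A : Type u} [Field K] [Ring A] [Algebra K A] {μ ε : K} {n : ℕ} {U D w : A}

theorem Fibre.map_weight_pow_sub {l : K} (h : Fibre μ ε n U D w l) :
    h.π (w ^ n - algebraMap K A l) = 0 := by
  have := h.map_aeval_weight_pow (X - C l)
  rw [map_sub, aeval_X, aeval_C] at this
  rw [this, map_sub, aeval_X, aeval_C, Algebra.algebraMap_self_apply, sub_self, map_zero]

variable (μ ε n U D w) in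
/-- The images of `x` and `y` generate a large right ideal in some fibre over `l`. -/
def IsLargeAt (l : K) (x y : A) : Prop :=
  ∃ h : Fibre μ ε n U D w l,
    IsLarge h.ι (h.π U) (h.π D) n ((h.Rᵐᵒᵖ ∙ h.π x) ⊔ (h.Rᵐᵒᵖ ∙ h.π y))

theorem IsLargeAt.add_mul {l : K} {x y : A} (hxy : IsLargeAt μ ε n U D w l x y) (r : A) :
    IsLargeAt μ ε n U D w l x (y + (w ^ n - algebraMap K A l) * r) := by
  obtain ⟨h, hxy⟩ := hxy
  exact ⟨h, by rwa [map_add, map_mul, h.map_weight_pow_sub, zero_mul, add_zero]⟩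

variable (μ ε n U D w) in
/-- The condition at the value `l` of the central element `w ^ n` that the second generator `b` has
to satisfy: for `l = 0` it cuts the dimension of `A ⧸ N` down to zero, and for `l ≠ 0` it generates
a large right ideal together with `a`. -/
def IsAdmissibleAt (N : RightIdeal A) (a : A) (l : K) (b : A) : Prop :=
  (l = 0 → ∃ N', N ≤ N' ∧ N' ≤ (Aᵐᵒᵖ ∙ b) ⊔ N ∧ IsFiniteModulo K N' 0) ∧
    (l ≠ 0 → IsLargeAt μ ε n U D w l a b)

theorem IsAdmissibleAt.add_mul {N : RightIdeal A} (hw : w ^ n ∈ N) {a b : A} {l : K}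
    (h : IsAdmissibleAt μ ε n U D w N a l b) (r : A) :
    IsAdmissibleAt μ ε n U D w N a l (b + (w ^ n - algebraMap K A l) * r) := by
  refine ⟨?_, fun hl => (h.2 hl).add_mul r⟩
  rintro rfl
  rw [map_zero, sub_zero, span_singleton_add_sup (mul_mem_right hw r)]
  exact h.1 rfl

namespace IsQuantumDownUp

variable (hA : IsQuantumDownUp μ ε n U D w)
include hA

theorem exists_add_ne_zero {a s y₀ : A} {Y : RightIdeal A} (hy₀ : y₀ ∈ Y) (h : a * s + y₀ = 1) :
    ∃ y ∈ Y, a + y ≠ 0 ∧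
      ∃ N, Aᵐᵒᵖ ∙ w ≤ N ∧ N ≤ (Aᵐᵒᵖ ∙ (a + y)) ⊔ (Aᵐᵒᵖ ∙ w) ∧ IsFiniteModulo K N 1 := by
  obtain ⟨y, hy, N, le, le_sup, hN⟩ := hA.isFiniteModulo_span_weight.exists_le_of_succ hy₀ h
  by_cases hay : a + y = 0
  · obtain ⟨y', hy', ne⟩ : ∃ y' ∈ Y, a + y' ≠ 0 := by
      by_contra! eq_zero
      have := hA.nontrivial
      have ha : a = 0 := by simpa using eq_zero 0 Y.zero_mem
      refine one_ne_zero (α := A) ?_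
      simpa [ha, ← h] using eq_zero y₀ hy₀
    refine ⟨y', hy', ne, N, le, le_sup.trans ?_, hN⟩
    rw [hay, Submodule.span_zero_singleton, bot_sup_eq]
    exact le_sup_right
  · exact ⟨y, hy, hay, N, le, le_sup, hN⟩

theorem one_mem_span_weight_pow_sup {I : RightIdeal A} (h : (1 : A) ∈ (Aᵐᵒᵖ ∙ w) ⊔ I) :
    (1 : A) ∈ (Aᵐᵒᵖ ∙ w ^ n) ⊔ I := by
  obtain ⟨x, hx⟩ := exists_one_sub_mul_pow_mem hA.exists_mul_weight_eq h n
  rw [Subalgebra.mem_center_iff.1 hA.weight_pow_mem_center x] at hx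
  exact mem_span_singleton_sup.2 ⟨x, _, hx, add_sub_cancel _ _⟩

variable [CharZero K]

theorem exists_one_mem_of_isLargeAt {l : K} {a b c d s y₀ : A}
    (hab : IsLargeAt μ ε n U D w l a b) (hy₀ : y₀ ∈ (Aᵐᵒᵖ ∙ a) ⊔ (Aᵐᵒᵖ ∙ b) ⊔ (Aᵐᵒᵖ ∙ d))
    (h : c * s + y₀ = 1) :
    ∃ y ∈ (Aᵐᵒᵖ ∙ a) ⊔ (Aᵐᵒᵖ ∙ b) ⊔ (Aᵐᵒᵖ ∙ d), (1 : A) ∈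
      (Aᵐᵒᵖ ∙ (w ^ n - algebraMap K A l)) ⊔ ((Aᵐᵒᵖ ∙ a) ⊔ (Aᵐᵒᵖ ∙ b) ⊔ (Aᵐᵒᵖ ∙ (c + y))) := by
  obtain ⟨H, large⟩ := hab
  have map_y₀ : H.π y₀ ∈
      (H.Rᵐᵒᵖ ∙ H.π a) ⊔ (H.Rᵐᵒᵖ ∙ H.π b) ⊔ (H.Rᵐᵒᵖ ∙ H.π d) := by
    obtain ⟨p, q, r, rfl⟩ := mem_span_triple.1 hy₀
    exact mem_span_triple.2 ⟨H.π p, H.π q, H.π r, by simp⟩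
  obtain ⟨_, map_y, one_mem⟩ := H.isPBW.exists_one_mem_sup_span_singleton H.isKummer hA.two_le large
    map_y₀ (c := H.π c) (s := H.π s) (by rw [← map_mul, ← map_add, h, map_one])
  obtain ⟨y, hy, rfl⟩ := exists_mem_map_eq H.surjective map_y
  rw [← map_add] at one_mem
  obtain ⟨x, hx, map_x⟩ := exists_mem_map_eq H.surjective one_mem
  refine ⟨y, hy, sub_add_cancel 1 x ▸ Submodule.add_mem_sup ?_ hx⟩
  exact H.mem_span_of_map_eq_zero hA (by rw [map_sub, map_x, map_one, sub_self])

variable [IsAlgClosed K]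

theorem exists_isLargeAt {l : K} (hl : l ≠ 0) (a : A) {b s y₀ : A} {Y : RightIdeal A}
    (hy₀ : y₀ ∈ Y) (h : b * s + y₀ = 1) : ∃ y ∈ Y, IsLargeAt μ ε n U D w l a (b + y) := by
  obtain ⟨H⟩ := hA.nonempty_fibre hl
  obtain ⟨ω, hω⟩ := IsAlgClosed.exists_pow_nat_eq l hA.pos
  obtain ⟨e, orthogonal, ne_zero⟩ := H.isPBW.exists_orthogonalIdempotents H.isKummer hω
  obtain ⟨N, hU, -⟩ := H.isPBW.exists_pow_mem_heart H.isKummer hA.two_le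
  obtain ⟨_, hy, large⟩ := H.isPBW.exists_isLarge_span_singleton H.isKummer hU orthogonal ne_zero
    (Submodule.mem_span_singleton_self (H.π y₀)) (s := H.π s)
    (by rw [← map_mul, ← map_add, h, map_one])
  obtain ⟨r, rfl⟩ := mem_span_singleton.1 hy
  obtain ⟨r, rfl⟩ := H.surjective r
  rw [← map_mul, ← map_add] at large
  exact ⟨y₀ * r, mul_mem_right hy₀ r, H, large.mono H.isKummer le_sup_right⟩

omit [CharZero K] in
theorem exists_finset_isLargeAt {a : A} (ha : a ≠ 0) :
    ∃ s : Finset K, ∀ l, l ≠ 0 → l ∉ s → ∀ b, IsLargeAt μ ε n U D w l a b := by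
  classical
  obtain ⟨f, hf, regular⟩ := hA.exists_regular_map ha
  refine ⟨f.roots.toFinset.image (· ^ n), fun l hl hls b => ?_⟩
  obtain ⟨h⟩ := hA.nonempty_fibre hl
  refine ⟨h, (h.isLarge_span_singleton (regular h fun ω hω hl => hls ?_)).mono h.isKummer
    le_sup_left⟩
  exact Finset.mem_image.2 ⟨ω, by rwa [Multiset.mem_toFinset, mem_roots hf], hl⟩

theorem exists_isAdmissibleAt {N : RightIdeal A} (hN : IsFiniteModulo K N 1)
    (l : K) (a : A) {b s y₀ : A} {Y : RightIdeal A} (hy₀ : y₀ ∈ Y) (h : b * s + y₀ = 1) :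
    ∃ y ∈ Y, IsAdmissibleAt μ ε n U D w N a l (b + y) := by
  rcases eq_or_ne l 0 with hl | hl
  · obtain ⟨y, hy, hb⟩ := hN.exists_le_of_succ hy₀ h
    exact ⟨y, hy, fun _ => hb, fun h => absurd hl h⟩
  · obtain ⟨y, hy, hb⟩ := hA.exists_isLargeAt hl a hy₀ h
    exact ⟨y, hy, fun h => absurd h hl, fun _ => hb⟩

/-- Only finitely many values `l` have to be treated, and a multiple of `θ` does not disturb them.
The freedom that remains is used in the generic fibre. -/
theorem exists_forall_isAdmissibleAt {N : RightIdeal A} (hw : w ^ n ∈ N)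
    (hN : IsFiniteModulo K N 1) {a b s y₀ d : A} (ha : a ≠ 0) {Y : RightIdeal A} (hd : d ∈ Y)
    (hy₀ : y₀ ∈ Y) (h : b * s + y₀ = 1) :
    ∃ y ∈ Y, (∀ l, IsAdmissibleAt μ ε n U D w N a l (b + y)) ∧
      ∃ g : K[X], g ≠ 0 ∧ d * aeval (w ^ n) g ∈ (Aᵐᵒᵖ ∙ a) ⊔ (Aᵐᵒᵖ ∙ (b + y)) := by
  classical
  obtain ⟨Λ, hΛ⟩ := hA.exists_finset_isLargeAt ha
  have add_mul (l : K) (x r : A) (hx : IsAdmissibleAt μ ε n U D w N a l x) :=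
    hx.add_mul hw r
  obtain ⟨y, hy, admissible⟩ := exists_forall_add_of_mem_center hA.weight_pow_mem_center add_mul
    fun l (_ : l ∈ insert 0 Λ) => hA.exists_isAdmissibleAt hN l a hy₀ h
  let θ : K[X] := ∏ l ∈ insert 0 Λ, (X - C l)
  have hθ : θ ≠ 0 := Finset.prod_ne_zero_iff.2 fun l _ => X_sub_C_ne_zero l
  obtain ⟨r, g, hg, hgd⟩ := hA.exists_mul_aeval_mem (b + y) d ha hθ
  rw [add_assoc] at hgd
  refine ⟨y + d * (aeval (w ^ n) θ * r), add_mem hy (mul_mem_right hd _), fun l => ?_, g, hg, hgd⟩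
  by_cases hl : l ∈ insert 0 Λ
  · obtain ⟨q, hq⟩ : X - C l ∣ θ := Finset.dvd_prod_of_mem _ hl
    have comm := Subalgebra.mem_center_iff.1 (aeval_mem_center hA.weight_pow_mem_center θ) d
    rw [← add_assoc, ← mul_assoc, comm, hq, map_mul, map_sub, aeval_X, aeval_C, mul_assoc,
      mul_assoc]
    exact (admissible l hl).add_mul hw _
  · rw [Finset.mem_insert, not_or] at hl
    exact ⟨fun h => absurd h hl.1, fun _ => hΛ l hl.1 hl.2 _⟩

theorem exists_forall_one_mem {N : RightIdeal A} {a b c d e y₀ : A}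
    (hN : N ≤ (Aᵐᵒᵖ ∙ a) ⊔ (Aᵐᵒᵖ ∙ w))
    (hab : ∀ l, IsAdmissibleAt μ ε n U D w N a l b)
    (hy₀ : y₀ ∈ (Aᵐᵒᵖ ∙ a) ⊔ (Aᵐᵒᵖ ∙ b) ⊔ (Aᵐᵒᵖ ∙ d)) (h : c * e + y₀ = 1) (s : Finset K) :
    ∃ y ∈ (Aᵐᵒᵖ ∙ a) ⊔ (Aᵐᵒᵖ ∙ b) ⊔ (Aᵐᵒᵖ ∙ d), ∀ l ∈ s, (1 : A) ∈
      (Aᵐᵒᵖ ∙ (w ^ n - algebraMap K A l)) ⊔ ((Aᵐᵒᵖ ∙ a) ⊔ (Aᵐᵒᵖ ∙ b) ⊔ (Aᵐᵒᵖ ∙ (c + y))) := by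
  set J := (Aᵐᵒᵖ ∙ a) ⊔ (Aᵐᵒᵖ ∙ b)
  refine exists_forall_add_of_mem_center hA.weight_pow_mem_center (P := fun l x =>
    (1 : A) ∈ (Aᵐᵒᵖ ∙ (w ^ n - algebraMap K A l)) ⊔ (J ⊔ (Aᵐᵒᵖ ∙ x))) (fun l x r hx => ?_)
    fun l _ => ?_
  · rw [← sup_assoc, sup_comm] at hx ⊢
    rwa [span_singleton_add_sup (Submodule.mem_sup_left (mul_mem_span_singleton _ r))]
  · rcases eq_or_ne l 0 with rfl | hl
    · obtain ⟨N', -, le_sup, hN'⟩ := (hab 0).1 rfl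
      obtain ⟨y, hy, one_mem⟩ := hN'.exists_one_mem_of_zero hy₀ h
      refine ⟨y, hy, ?_⟩
      rw [map_zero, sub_zero]
      refine hA.one_mem_span_weight_pow_sup ?_
      have : N' ≤ J ⊔ (Aᵐᵒᵖ ∙ w) := le_sup.trans <|
        sup_le (le_sup_of_le_left le_sup_right) (hN.trans (sup_le_sup_right le_sup_left _))
      exact sup_le (le_sup_of_le_right le_sup_right)
        (this.trans (sup_le (le_sup_of_le_right le_sup_left) le_sup_left)) one_mem
    · exact hA.exists_one_mem_of_isLargeAt ((hab l).2 hl) hy₀ h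

theorem isStableQuadruple {a b c d : A}
    (h : (1 : A) ∈ (Aᵐᵒᵖ ∙ a) ⊔ ((Aᵐᵒᵖ ∙ b) ⊔ (Aᵐᵒᵖ ∙ c) ⊔ (Aᵐᵒᵖ ∙ d))) :
    IsStableQuadruple a b c d := by
  classical
  obtain ⟨r₁, x₁, hx₁, h₁⟩ := mem_span_singleton_sup.1 h
  obtain ⟨y₁, hy₁, ha, N, hw, hN, finite⟩ := hA.exists_add_ne_zero hx₁ h₁
  rw [← span_singleton_add_sup hy₁] at h
  set a' := a + y₁
  have one_mem_b : (1 : A) ∈ (Aᵐᵒᵖ ∙ b) ⊔ ((Aᵐᵒᵖ ∙ a') ⊔ (Aᵐᵒᵖ ∙ c) ⊔ (Aᵐᵒᵖ ∙ d)) := by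
    convert h using 1
    ac_rfl
  obtain ⟨r₂, x₂, hx₂, h₂⟩ := mem_span_singleton_sup.1 one_mem_b
  have weight_pow_mem : w ^ n ∈ N := by
    rw [← mul_pow_sub_one hA.pos.ne' w]
    exact hw (mul_mem_span_singleton w _)
  obtain ⟨y₂, hy₂, admissible, g, hg, hgd⟩ := hA.exists_forall_isAdmissibleAt weight_pow_mem finite
    ha (Submodule.mem_sup_right (Submodule.mem_span_singleton_self d)) hx₂ h₂
  rw [← span_singleton_add_sup hy₂] at one_mem_b
  set b' := b + y₂
  have one_mem_c : (1 : A) ∈ (Aᵐᵒᵖ ∙ c) ⊔ ((Aᵐᵒᵖ ∙ a') ⊔ (Aᵐᵒᵖ ∙ b') ⊔ (Aᵐᵒᵖ ∙ d)) := by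
    convert one_mem_b using 1
    ac_rfl
  obtain ⟨r₃, x₃, hx₃, h₃⟩ := mem_span_singleton_sup.1 one_mem_c
  obtain ⟨y₃, hy₃, one_mem⟩ := hA.exists_forall_one_mem hN admissible hx₃ h₃ g.roots.toFinset
  rw [← span_singleton_add_sup hy₃] at one_mem_c
  refine .of_add_add_add hy₁ hy₂ hy₃ (one_mem_of_aeval_mem hA.weight_pow_mem_center hg ?_
    fun l hl => one_mem l (Multiset.mem_toFinset.2 hl))
  have one_mem_d : (1 : A) ∈
      (Aᵐᵒᵖ ∙ d) ⊔ ((Aᵐᵒᵖ ∙ a') ⊔ (Aᵐᵒᵖ ∙ b') ⊔ (Aᵐᵒᵖ ∙ (c + y₃))) := by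
    convert one_mem_c using 1
    ac_rfl
  obtain ⟨r, i, hi, hr⟩ := mem_span_singleton_sup.1 one_mem_d
  have := Subalgebra.mem_center_iff.1 (aeval_mem_center hA.weight_pow_mem_center g) r
  rw [← one_mul (aeval (w ^ n) g), ← hr, add_mul, mul_assoc, this, ← mul_assoc]
  exact add_mem (Submodule.mem_sup_left (mul_mem_right hgd r)) (mul_mem_right hi _)

end IsQuantumDownUp

end Quantum

end Absorption

/-! ### The stable rank -/

section StableRank

open Polynomial
open scoped LaurentPolynomial
open LaurentPolynomial (T T_add exists_T_pow)

section Rows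

variable {R S : Type} [Ring R] [Ring S] {s : ℕ}

theorem isUnimodularRow_iff_one_mem {u : Fin s → R} :
    IsUnimodularRow u ↔ (1 : R) ∈ Submodule.span Rᵐᵒᵖ (Set.range u) :=
  ⟨fun h => h ▸ Submodule.mem_top, fun h => Submodule.eq_top_iff'.2 fun x =>
    one_mul x ▸ mul_mem_right h x⟩

theorem isUnimodularRow_iff_exists {u : Fin s → R} :
    IsUnimodularRow u ↔ ∃ c : Fin s → R, ∑ i, u i * c i = 1 := by
  rw [isUnimodularRow_iff_one_mem, Submodule.mem_span_range_iff_exists_fun]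
  exact ⟨fun ⟨c, hc⟩ => ⟨fun i => unop (c i), hc⟩, fun ⟨c, hc⟩ => ⟨fun i => op (c i), hc⟩⟩

theorem IsUnimodularRow.map {u : Fin s → R} (hu : IsUnimodularRow u) (f : R →+* S) :
    IsUnimodularRow (f ∘ u) := by
  obtain ⟨c, hc⟩ := isUnimodularRow_iff_exists.1 hu
  exact isUnimodularRow_iff_exists.2 ⟨f ∘ c, by simpa using congrArg f hc⟩

theorem IsStableRow.map {u : Fin (s + 1) → R} (hu : IsStableRow u) (f : R →+* S) :
    IsStableRow (f ∘ u) := by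
  obtain ⟨r, hr⟩ := hu
  refine ⟨f ∘ r, ?_⟩
  convert hr.map f using 2
  simp

theorem not_isUnimodularRow_zero [Nontrivial R] (u : Fin 0 → R) : ¬ IsUnimodularRow u := by
  simp [isUnimodularRow_iff_exists]

theorem two_le_stableRank [Nontrivial R] {u : Fin 2 → R} (hu : IsUnimodularRow u)
    (hu' : ¬ IsStableRow u) {t : ℕ}
    (ht : ∀ v : Fin (t + 1) → R, IsUnimodularRow v → IsStableRow v) : 2 ≤ stableRank R := by
  refine le_csInf ⟨t, ht⟩ fun s hs => ?_
  by_contra! hlt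
  interval_cases s
  · obtain ⟨r, hr⟩ := hs (fun _ => 1) (isUnimodularRow_iff_exists.2 ⟨fun _ => 1, by simp⟩)
    exact not_isUnimodularRow_zero _ hr
  · exact hu' (hs u hu)

theorem IsStableQuadruple.isStableRow {u : Fin 4 → R}
    (h : IsStableQuadruple (u 0) (u 1) (u 2) (u 3)) : IsStableRow u := by
  obtain ⟨r₁, r₂, r₃, h⟩ := h
  obtain ⟨c₁, c₂, c₃, h⟩ := mem_span_triple.1 h
  refine ⟨![r₁, r₂, r₃], isUnimodularRow_iff_exists.2 ⟨![c₁, c₂, c₃], ?_⟩⟩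
  rw [Fin.sum_univ_three]
  exact h

end Rows

section LowerBound

variable {K : Type} [Field K]

theorem exists_eval_eq_pow_of_dvd_X_pow {f : K[X]} {k : ℕ} (hf : f ∣ X ^ k) (h1 : f.eval 1 = 1)
    (a : K) : ∃ j : ℕ, f.eval a = a ^ j := by
  obtain ⟨j, -, v, hv⟩ := (dvd_prime_pow prime_X k).1 hf
  obtain ⟨c, -, hc⟩ := isUnit_iff.1 v.isUnit
  have eval_mul (x : K) : f.eval x * c = x ^ j := by simpa [← hc] using congrArg (eval x) hv
  have hc1 : c = 1 := by simpa [h1] using eval_mul 1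
  exact ⟨j, by simpa [hc1] using eval_mul a⟩

variable (K) in
/-- The row `(2 X - 1, (X - 1)(X - 2))`, unimodular over `K[X]` but not stable over `K[T;T⁻¹]`:
stabilizing it would produce a monomial that is `1` at `1` and three times a power of `2` at `2`. -/
def laurentRow : Fin 2 → K[X] := ![2 * X - 1, (X - 1) * (X - 2)]

variable [CharZero K]

theorem isUnimodularRow_laurentRow : IsUnimodularRow (laurentRow K) := by
  refine isUnimodularRow_iff_exists.2 ⟨![-C 3⁻¹ * (2 * X - 5), 4 * C 3⁻¹], ?_⟩
  have three_mul : (3 : K[X]) * C 3⁻¹ = 1 := by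
    rw [← map_ofNat (C : K →+* K[X]) 3, ← map_mul, mul_inv_cancel₀ three_ne_zero, map_one]
  simp only [laurentRow, Fin.sum_univ_two, Matrix.cons_val_zero, Matrix.cons_val_one]
  linear_combination three_mul

theorem not_dvd_X_pow (m k : ℕ) (r : K[X]) :
    ¬ (2 * X - 1) * X ^ m + (X - 1) * (X - 2) * r ∣ X ^ k := by
  intro h
  obtain ⟨j, hj⟩ := exists_eval_eq_pow_of_dvd_X_pow h (by norm_num) 2
  norm_num at hj
  have three_mul : 3 * 2 ^ m = 2 ^ j := by exact_mod_cast hj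
  have := Nat.prime_three.dvd_of_dvd_pow (Dvd.intro _ three_mul)
  omega

theorem not_isStableRow_laurentRow : ¬ IsStableRow (toLaurent ∘ laurentRow K) := by
  rintro ⟨r, hr⟩
  obtain ⟨c, hc⟩ := isUnimodularRow_iff_exists.1 hr
  obtain ⟨m, r', hr'⟩ := exists_T_pow (r 0)
  obtain ⟨k, c', hc'⟩ := exists_T_pow (c 0)
  refine not_dvd_X_pow m (m + k) r' ⟨c', toLaurent_injective ?_⟩
  simp only [Fin.sum_univ_one] at hc
  change (toLaurent (2 * X - 1) + toLaurent ((X - 1) * (X - 2)) * r 0) * c 0 = 1 at hc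
  simp only [map_add, map_mul toLaurent, hr', hc', toLaurent_X_pow] at hc ⊢
  push_cast
  rw [T_add]
  linear_combination -(T m * T k) * hc

end LowerBound

namespace IsQuantumDownUp

variable {K A : Type} [Field K] [Ring A] [Algebra K A] {μ ε : K} {n : ℕ} {U D w : A}

theorem isStableRow [IsAlgClosed K] [CharZero K] (hA : IsQuantumDownUp μ ε n U D w)
    {u : Fin 4 → A} (hu : IsUnimodularRow u) : IsStableRow u := by
  refine (hA.isStableQuadruple ?_).isStableRow
  obtain ⟨c, hc⟩ := isUnimodularRow_iff_exists.1 hu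
  rw [Fin.sum_univ_four, add_assoc, add_assoc, ← add_assoc (u 1 * c 1)] at hc
  exact mem_span_singleton_sup.2 ⟨c 0, _, mem_span_triple.2 ⟨c 1, c 2, c 3, rfl⟩, hc⟩

theorem exists_algHom_laurentPolynomial (hA : IsQuantumDownUp μ ε n U D w) :
    ∃ φ : A →ₐ[K] K[T;T⁻¹], φ U = T 1 := by
  obtain ⟨c, hc⟩ : ∃ c, ε = c * (1 - μ) :=
    ⟨ε / (1 - μ), (div_mul_cancel₀ ε (sub_ne_zero.2 hA.root_ne_one.symm)).symm⟩
  have relation : (c • T (-1)) * T 1 = μ • (T 1 * (c • T (-1))) + 0 + algebraMap K K[T;T⁻¹] ε := by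
    simp only [smul_mul_assoc, mul_smul_comm, ← T_add, Algebra.algebraMap_eq_smul_one,
      neg_add_cancel, add_neg_cancel, LaurentPolynomial.T_zero, hc]
    module
  obtain ⟨φ, hφ, -⟩ := hA.exists_lift K[T;T⁻¹] (T 1) (c • T (-1)) 0 (by simp) (by simp) relation
  exact ⟨φ, hφ⟩

theorem map_aeval_eq_toLaurent {φ : A →ₐ[K] K[T;T⁻¹]} (hφ : φ U = T 1) (f : K[X]) :
    φ (aeval U f) = toLaurent f := by
  suffices φ.comp (aeval U) = toLaurentAlg from DFunLike.congr_fun this f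
  ext
  simp [hφ]

theorem two_le_stableRank [IsAlgClosed K] [CharZero K] (hA : IsQuantumDownUp μ ε n U D w) :
    2 ≤ stableRank A := by
  obtain ⟨φ, hφ⟩ := hA.exists_algHom_laurentPolynomial
  have := hA.nontrivial
  let ψ : K[X] →ₐ[K] A := aeval U
  refine _root_.two_le_stableRank (isUnimodularRow_laurentRow.map (ψ : K[X] →+* A))
    (fun h => not_isStableRow_laurentRow (K := K) ?_) (fun u => hA.isStableRow)
  convert h.map (φ : A →+* K[T;T⁻¹]) using 1
  exact funext fun i => (map_aeval_eq_toLaurent hφ _).symm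

end IsQuantumDownUp

section DownUp

variable {K Q : Type} [Field K] [Ring Q] [Algebra K Q] {α β γ μ ε : K}

theorem mul_sub_eq_smul_iff (u d : Q) :
    (d * u - μ • (u * d) - algebraMap K Q ε) * u
        = μ • (u * (d * u - μ • (u * d) - algebraMap K Q ε)) ↔
      d * u * u = (μ + μ) • (u * d * u) + (-(μ * μ)) • (u * u * d) + (ε * (1 - μ)) • u := by
  rw [← sub_eq_zero, ← sub_eq_zero (a := d * u * u)]
  simp only [sub_mul, mul_sub, Algebra.algebraMap_eq_smul_one, smul_mul_assoc, mul_smul_comm,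
    one_mul, mul_one, smul_sub, smul_smul, ← mul_assoc]
  refine Eq.congr_left ?_
  module

theorem mul_sub_eq_smul_iff' (u d : Q) :
    d * (d * u - μ • (u * d) - algebraMap K Q ε)
        = μ • ((d * u - μ • (u * d) - algebraMap K Q ε) * d) ↔
      d * d * u = (μ + μ) • (d * u * d) + (-(μ * μ)) • (u * d * d) + (ε * (1 - μ)) • d := by
  rw [← sub_eq_zero, ← sub_eq_zero (a := d * d * u)]
  simp only [sub_mul, mul_sub, Algebra.algebraMap_eq_smul_one, smul_mul_assoc, mul_smul_comm,
    one_mul, mul_one, smul_sub, smul_smul, ← mul_assoc]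
  refine Eq.congr_left ?_
  module

namespace DownUp

theorem exists_algHom {u d : Q} (hu : d * u * u = α • (u * d * u) + β • (u * u * d) + γ • u)
    (hd : d * d * u = α • (d * u * d) + β • (u * d * d) + γ • d) :
    ∃ π : DownUp K α β γ →ₐ[K] Q, π (U K α β γ) = u ∧ π (D K α β γ) = d := by
  let f : FreeAlgebra K (Fin 2) →ₐ[K] Q := FreeAlgebra.lift K ![d, u]
  have map_D : f (FreeAlgebra.ι K 0) = d := by simp [f]
  have map_U : f (FreeAlgebra.ι K 1) = u := by simp [f]
  refine ⟨RingQuot.liftAlgHom K ⟨f, fun x y h => ?_⟩, ?_, ?_⟩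
  · cases h with
    | rel1 => simp only [map_mul, map_add, map_smul, map_D, map_U, hu]
    | rel2 => simp only [map_mul, map_add, map_smul, map_D, map_U, hd]
  · rw [U, RingQuot.liftAlgHom_mkAlgHom_apply, map_U]
  · rw [D, RingQuot.liftAlgHom_mkAlgHom_apply, map_D]

theorem D_mul_U_mul_U : D K α β γ * U K α β γ * U K α β γ =
    α • (U K α β γ * D K α β γ * U K α β γ) + β • (U K α β γ * U K α β γ * D K α β γ)
      + γ • U K α β γ := by
  have := RingQuot.mkAlgHom_rel K (DownUpRel.rel1 (K := K) (a := α) (b := β) (g := γ))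
  simp only [map_mul, map_add, map_smul] at this
  exact this

theorem D_mul_D_mul_U : D K α β γ * D K α β γ * U K α β γ =
    α • (D K α β γ * U K α β γ * D K α β γ) + β • (U K α β γ * D K α β γ * D K α β γ)
      + γ • D K α β γ := by
  have := RingQuot.mkAlgHom_rel K (DownUpRel.rel2 (K := K) (a := α) (b := β) (g := γ))
  simp only [map_mul, map_add, map_smul] at this
  exact this

theorem adjoin_eq_top : Algebra.adjoin K {U K α β γ, D K α β γ} = ⊤ := by
  have map_top := congrArg (Subalgebra.map (RingQuot.mkAlgHom K (DownUpRel K α β γ)))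
    (FreeAlgebra.adjoin_range_ι (R := K) (X := Fin 2))
  rw [AlgHom.map_adjoin, Algebra.map_top,
    (AlgHom.range_eq_top _).2 (RingQuot.mkAlgHom_surjective K _)] at map_top
  rw [eq_top_iff, ← map_top]
  refine Algebra.adjoin_mono ?_
  rintro _ ⟨_, ⟨i, rfl⟩, rfl⟩
  fin_cases i
  · exact Or.inr rfl
  · exact Or.inl rfl

theorem isQuantumDownUp {n : ℕ} (hμ : IsPrimitiveRoot μ n) (hn : 2 ≤ n) :
    IsQuantumDownUp μ ε n (U K (μ + μ) (-(μ * μ)) (ε * (1 - μ)))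
      (D K (μ + μ) (-(μ * μ)) (ε * (1 - μ)))
      (D K (μ + μ) (-(μ * μ)) (ε * (1 - μ)) * U K (μ + μ) (-(μ * μ)) (ε * (1 - μ))
        - μ • (U K (μ + μ) (-(μ * μ)) (ε * (1 - μ)) * D K (μ + μ) (-(μ * μ)) (ε * (1 - μ)))
        - algebraMap K _ ε) where
  isPrimitiveRoot := hμ
  two_le := hn
  weight_mul_U := (mul_sub_eq_smul_iff _ _).2 D_mul_U_mul_U
  D_mul_weight := (mul_sub_eq_smul_iff' _ _).2 D_mul_D_mul_U
  D_mul_U := by abel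
  adjoin_eq_top := adjoin_eq_top
  exists_lift := by
    intro Q _ _ u d v hu hd hv
    obtain rfl : v = d * u - μ • (u * d) - algebraMap K Q ε := by rw [hv]; abel
    exact exists_algHom ((mul_sub_eq_smul_iff _ _).1 hu) ((mul_sub_eq_smul_iff' _ _).1 hd)

end DownUp

end DownUp

end StableRank

/-- Let `K` be algebraically closed of characteristic zero and
`A = A(α,β,γ)` with `β ≠ 0` and `α + β ≠ 1`. If `t² − αt − β = (t − μ)²` for some `μ ∈ K`
that is a primitive `n`-th root of unity for some `n ≥ 1`, then `2 ≤ sr(A) ≤ 3`. -/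
theorem downUp_stableRank_double_root_of_unity
    (K : Type) [Field K] [IsAlgClosed K] [CharZero K] (α β γ μ : K)
    (hβ : β ≠ 0) (h1 : α + β ≠ 1)
    (hα : α = μ + μ) (hβμ : β = -(μ * μ))
    (hprim : ∃ n : ℕ, 1 ≤ n ∧ IsPrimitiveRoot μ n) :
    2 ≤ stableRank (DownUp K α β γ) ∧ stableRank (DownUp K α β γ) ≤ 3 := by
  obtain ⟨n, hn, hμ⟩ := hprim
  subst hα hβμ
  have hμ1 : μ ≠ 1 := by
    rintro rfl
    exact h1 (by ring)
  have two_le : 2 ≤ n := by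
    refine hn.lt_of_ne' ?_
    rintro rfl
    exact hμ1 (IsPrimitiveRoot.one_right_iff.1 hμ)
  obtain ⟨ε, rfl⟩ : ∃ ε, γ = ε * (1 - μ) :=
    ⟨γ / (1 - μ), (div_mul_cancel₀ γ (sub_ne_zero.2 hμ1.symm)).symm⟩
  have hA := DownUp.isQuantumDownUp (ε := ε) hμ two_le
  exact ⟨hA.two_le_stableRank, Nat.sInf_le fun _ => hA.isStableRow⟩
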